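/- Let Ω ⊂ ℝ² be a bounded, open, connected set with Lipschitz boundary and let u ∈ W^{1,1}(Ω;S¹). Then 𝒜**(u,Ω) = inf{ 𝒜(u, Ω ∖ C) : C ⊂ Ω a finite set }. -/

import Mathlib

open MeasureTheory Metric Filter Set
open scoped ENNReal NNReal Topology Classical

noncomputable section

abbrev R2 := EuclideanSpace ℝ (Fin 2)

/-- `Ω ⊂ ℝ²` has Lipschitz boundary: near every boundary point, after a rigid motion,
`Ω` coincides with the open region strictly above the graph of a Lipschitz function. -/
def HasLipschitzBoundary (Ω : Set R2) : Prop :=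
  ∀ p ∈ frontier Ω, ∃ r : ℝ, 0 < r ∧ ∃ (f : R2 ≃ᵢ R2) (γ : ℝ → ℝ) (L : ℝ≥0),
    LipschitzWith L γ ∧ ∀ x ∈ Metric.ball p r, (x ∈ Ω ↔ γ (f x 0) < f x 1)

/-- `G` is the weak (distributional) gradient of `u` on `Ω`:
`∫_Ω u_i ∂_j φ = -∫_Ω G_{ij} φ` for all test functions `φ ∈ C_c^∞(Ω)`. -/
def IsWeakGradient (Ω : Set R2) (u : R2 → R2) (G : R2 → Matrix (Fin 2) (Fin 2) ℝ) : Prop :=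
  ∀ φ : R2 → ℝ, ContDiff ℝ (⊤ : ℕ∞) φ → HasCompactSupport φ → tsupport φ ⊆ Ω →
    ∀ i j : Fin 2,
      (∫ x in Ω, u x i * fderiv ℝ φ x (EuclideanSpace.single j 1)) =
        - ∫ x in Ω, G x i j * φ x

/-- `u ∈ W^{1,1}(Ω;ℝ²)` with weak gradient `G`. -/
def MemW11 (Ω : Set R2) (u : R2 → R2) (G : R2 → Matrix (Fin 2) (Fin 2) ℝ) : Prop :=
  IntegrableOn u Ω ∧ (∀ i j : Fin 2, IntegrableOn (fun x => G x i j) Ω) ∧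
    IsWeakGradient Ω u G

/-- `|u| = 1` a.e. in `Ω`. -/
def SphereValued (Ω : Set R2) (u : R2 → R2) : Prop :=
  ∀ᵐ x ∂(volume.restrict Ω), ‖u x‖ = 1

/-- Frobenius norm of a `2×2` matrix. -/
def frob (M : Matrix (Fin 2) (Fin 2) ℝ) : ℝ :=
  Real.sqrt (∑ i, ∑ j, (M i j) ^ 2)

/-- Jacobian matrix of a map `v : ℝ² → ℝ²`. -/
def jacobianMatrix (v : R2 → R2) (x : R2) : Matrix (Fin 2) (Fin 2) ℝ :=
  Matrix.of fun i j => fderiv ℝ v x (EuclideanSpace.single j 1) i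

/-- Classical graph area `A(v,A) = ∫_A √(1 + |∇v|² + (Jv)²)` of a `C¹` map. -/
def classicalArea (A : Set R2) (v : R2 → R2) : ℝ≥0∞ :=
  ∫⁻ x in A, ENNReal.ofReal
    (Real.sqrt (1 + (∑ i, ∑ j, (jacobianMatrix v x i j) ^ 2) + (jacobianMatrix v x).det ^ 2))

/-- `L¹`-relaxed area functional `𝒜(u,A)`. -/
def relaxedArea (u : R2 → R2) (A : Set R2) : ℝ≥0∞ :=
  sInf { a : ℝ≥0∞ | ∃ v : ℕ → R2 → R2,
    (∀ k, ContDiffOn ℝ 1 (v k) A) ∧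
    (∀ k, IntegrableOn (fun x => v k x - u x) A) ∧
    Tendsto (fun k => ∫ x in A, ‖v k x - u x‖) atTop (nhds 0) ∧
    a = Filter.liminf (fun k => classicalArea A (v k)) atTop }

/-- `λ_u = (1/2)(u₁ ∇^⊥u₂ − u₂ ∇^⊥u₁)`, computed from the weak gradient `G`. -/
def lambdaVec (u : R2 → R2) (G : R2 → Matrix (Fin 2) (Fin 2) ℝ) (x : R2) : Fin 2 → ℝ :=
  ![ (1 / 2) * (-(u x 0) * G x 1 1 + u x 1 * G x 0 1),
     (1 / 2) * (u x 0 * G x 1 0 - u x 1 * G x 0 0) ]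

/-- Distributional Jacobian pairing `⟨Det(∇u), φ⟩ = ∫_Ω λ_u · ∇φ`. -/
def detPairing (Ω : Set R2) (u : R2 → R2) (G : R2 → Matrix (Fin 2) (Fin 2) ℝ)
    (φ : R2 → ℝ) : ℝ :=
  ∫ x in Ω, ∑ j, lambdaVec u G x j * fderiv ℝ φ x (EuclideanSpace.single j 1)

/-- `φ ∈ Lip₀(Ω)`: Lipschitz on `cl(Ω)` and vanishing on `∂Ω`. -/
def MemLip0 (Ω : Set R2) (φ : R2 → ℝ) : Prop :=
  (∃ L : ℝ≥0, LipschitzOnWith L φ (closure Ω)) ∧ ∀ p ∈ frontier Ω, φ p = 0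

/-- Admissible test functions for the flat norm: Lipschitz constant `≤ L` on `cl(Ω)`,
vanishing on `Z`, and bounded by `1` on `cl(Ω)`. -/
def FlatAdmissible (Ω Z : Set R2) (L : ℝ≥0) (φ : R2 → ℝ) : Prop :=
  LipschitzOnWith L φ (closure Ω) ∧ (∀ p ∈ Z, φ p = 0) ∧ ∀ p ∈ closure Ω, |φ p| ≤ 1

/-- Flat norm of a functional `F`, with vanishing condition on the set `Z`. -/
def flatNormOn (Ω Z : Set R2) (L : ℝ≥0) (F : (R2 → ℝ) → ℝ) : ℝ≥0∞ :=
  ⨆ φ ∈ {φ : R2 → ℝ | FlatAdmissible Ω Z L φ}, ENNReal.ofReal (F φ)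

/-- Flat norm of a functional `F` on `Lip₀(Ω)`; `L = 2` gives `‖·‖_{flat,α}` (α = 1/2),
`L = 1` gives `‖·‖_flat`. -/
def flatNorm (Ω : Set R2) (L : ℝ≥0) (F : (R2 → ℝ) → ℝ) : ℝ≥0∞ :=
  flatNormOn Ω (frontier Ω) L F

/-- `d̄_Ω(x,y) = min{|x−y|, dist(x,∂Ω) + dist(y,∂Ω)}`. -/
def dbar (Ω : Set R2) (x y : R2) : ℝ :=
  min (dist x y) (Metric.infDist x (frontier Ω) + Metric.infDist y (frontier Ω))

/-- Countably subadditive interior envelope `𝒜**(u,V)` (relative to `Ω`). -/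
def envA (u : R2 → R2) (Ω V : Set R2) : ℝ≥0∞ :=
  sInf { a : ℝ≥0∞ | ∃ A : ℕ → Set R2,
    (∀ k, IsOpen (A k) ∧ A k ⊆ Ω) ∧ V ⊆ ⋃ k, A k ∧ a = ∑' k, relaxedArea u (A k) }

/-- Property `(P_f)` for a finite family of pairs of points of `cl(Ω)`. -/
def SatisfiesPf (Ω : Set R2) {n : ℕ} (x y : Fin n → R2) : Prop :=
  (∀ k, (x k ∈ Ω ∧ y k ∈ frontier Ω ∧ dist (x k) (y k) = Metric.infDist (x k) (frontier Ω)) ∨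
        (y k ∈ Ω ∧ x k ∈ frontier Ω ∧ dist (x k) (y k) = Metric.infDist (y k) (frontier Ω))) ∧
  ∀ i j, x i ∈ Ω → y j ∈ Ω → x i ≠ y j

/-- The points of the family `x, y` lying in `Ω` are distinct and three by three
not collinear. -/
def InteriorPointsGeneric (Ω : Set R2) {n : ℕ} (x y : Fin n → R2) : Prop :=
  (∀ a b : Fin n ⊕ Fin n, Sum.elim x y a ∈ Ω → Sum.elim x y b ∈ Ω → a ≠ b →
    Sum.elim x y a ≠ Sum.elim x y b) ∧
  ∀ a b c : Fin n ⊕ Fin n, Sum.elim x y a ∈ Ω → Sum.elim x y b ∈ Ω → Sum.elim x y c ∈ Ω →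
    a ≠ b → a ≠ c → b ≠ c →
    ¬ Collinear ℝ ({Sum.elim x y a, Sum.elim x y b, Sum.elim x y c} : Set R2)

/-- `ι(w₁,w₂) = (w₁,−w₂)`. -/
def conjPt (w : R2) : R2 := (WithLp.equiv 2 (Fin 2 → ℝ)).symm ![w 0, -(w 1)]

/-- `u` is a (positive/negative) vortex around the points of the family lying in `Ω`:
the closed discs of radii `ρ` are contained in `Ω` and pairwise disjoint,
`u(z) = (z−x_i)/|z−x_i|` on `B_{ρ}(x_i)` and `u(z) = ι((z−y_j)/|z−y_j|)` on `B_{ρ}(y_j)`. -/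
def VortexAt (Ω : Set R2) (u : R2 → R2) {n : ℕ} (x y : Fin n → R2)
    (ρ : Fin n ⊕ Fin n → ℝ) : Prop :=
  (∀ a, Sum.elim x y a ∈ Ω → Metric.closedBall (Sum.elim x y a) (ρ a) ⊆ Ω) ∧
  (∀ a b, a ≠ b → Sum.elim x y a ∈ Ω → Sum.elim x y b ∈ Ω →
    Disjoint (Metric.closedBall (Sum.elim x y a) (ρ a))
      (Metric.closedBall (Sum.elim x y b) (ρ b))) ∧
  (∀ i, x i ∈ Ω → ∀ᵐ z ∂(volume.restrict (Metric.ball (x i) (ρ (Sum.inl i)))),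
    u z = ‖z - x i‖⁻¹ • (z - x i)) ∧
  (∀ i, y i ∈ Ω → ∀ᵐ z ∂(volume.restrict (Metric.ball (y i) (ρ (Sum.inr i)))),
    u z = conjPt (‖z - y i‖⁻¹ • (z - y i)))

/-- The energy `E(I_P, I_D, τ)` of a partition `{I_Dᶜ, I_D}` of `I` and an injection
`τ : I_D → I`. -/
def energy (Ω : Set R2) {n : ℕ} (x y : Fin n → R2) (ID : Finset (Fin n))
    (τ : Fin n → Fin n) : ℝ≥0∞ :=
  ((IDᶜ.filter fun k => x k ∈ Ω).card : ℝ≥0∞) +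
  (((Finset.univ \ ID.image τ).filter fun j => y j ∈ Ω).card : ℝ≥0∞) +
  2 * ∑ k ∈ ID, μH[1] (segment ℝ (y (τ k)) (x k) ∩ Ω)
local notation "cj" => starRingEnd ℂ


/-! ### Translations and approximate identities in `L¹` -/

lemma translate_small (f : R2 → ℝ) (hf : Integrable f volume) {ε : ℝ≥0∞} (hε : ε ≠ 0) :
    ∃ δ > 0, ∀ z : R2, ‖z‖ < δ → ∫⁻ x, ‖f (x - z) - f x‖ₑ ≤ ε := by
  have hm : MemLp f 1 volume := memLp_one_iff_integrable.2 hf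
  have : Fact ((1 : ℝ≥0∞) ≠ ∞) := ⟨ENNReal.one_ne_top⟩
  let F : Lp ℝ 1 (volume : Measure R2) := hm.toLp f
  have hc : Continuous (fun z : R2 => (DomAddAct.mk (-z)) +ᵥ F) := by
    have h1 : Continuous (fun z : R2 => (DomAddAct.mk (-z) : R2ᵈᵃᵃ)) :=
      DomAddAct.continuous_mk.comp continuous_neg
    exact h1.vadd continuous_const
  have hc0 : Tendsto (fun z : R2 => edist ((DomAddAct.mk (-z)) +ᵥ F) F) (𝓝 0) (𝓝 0) := by
    have h2 := (hc.edist continuous_const : Continuous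
      (fun z : R2 => edist ((DomAddAct.mk (-z)) +ᵥ F) F)).tendsto 0
    simpa using h2
  have h3 := hc0.eventually (gt_mem_nhds (pos_iff_ne_zero.2 hε))
  obtain ⟨δ, hδ, h4⟩ := Metric.eventually_nhds_iff.1 h3
  refine ⟨δ, hδ, fun z hz => ?_⟩
  have h5 := (h4 (y := z) (by simpa using hz)).le
  have hm' : MemLp (fun x => f (x - z)) 1 volume :=
    hm.comp_measurePreserving (measurePreserving_sub_right volume z)
  have h6 : (DomAddAct.mk (-z)) +ᵥ F = hm'.toLp _ := by
    rw [DomAddAct.mk_vadd_toLp]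
    congr 1
    ext x
    simp [sub_eq_neg_add]
  rw [h6, Lp.edist_toLp_toLp, eLpNorm_one_eq_lintegral_enorm] at h5
  exact h5

lemma approx_id (f : R2 → ℝ) (hf : Integrable f volume) {ε : ℝ≥0∞} (hε : ε ≠ 0) :
    ∃ δ > 0, ∀ ψ : R2 → ℝ, Continuous ψ → HasCompactSupport ψ → (∀ x, 0 ≤ ψ x) →
      ∫ x, ψ x = 1 → (∀ x, ψ x ≠ 0 → ‖x‖ < δ) →
      ∫⁻ x, ‖(∫ t, f t * ψ (x - t)) - f x‖ₑ ≤ ε := by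
  obtain ⟨δ, hδ, h⟩ := translate_small f hf hε
  refine ⟨δ, hδ, fun ψ hψ hψc hψ0 hψ1 hψs => ?_⟩
  have hψi : Integrable ψ volume := hψ.integrable_of_hasCompactSupport hψc
  obtain ⟨K, hK⟩ := hψc.exists_bound_of_continuous hψ
  have hinteg : ∀ x, Integrable (fun z => f (x - z) * ψ z) volume := fun x => by
    refine (hf.comp_sub_left x).mul_bdd (c := K) hψ.aestronglyMeasurable ?_
    exact Eventually.of_forall hK
  have h1 : ∀ x, ‖(∫ t, f t * ψ (x - t)) - f x‖ₑ ≤ ∫⁻ z, ‖f (x - z) - f x‖ₑ * ‖ψ z‖ₑ := fun x => by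
    have e1 : (∫ t, f t * ψ (x - t)) = ∫ z, f (x - z) * ψ z := by
      rw [← integral_sub_left_eq_self (fun z => f (x - z) * ψ z) volume x]
      simp
    have e2 : f x = ∫ z, f x * ψ z := by rw [integral_const_mul, hψ1, mul_one]
    have e3 : (∫ t, f t * ψ (x - t)) - f x = ∫ z, (f (x - z) - f x) * ψ z := by
      conv_lhs => rw [e1, e2]
      rw [← integral_sub (hinteg x) (hψi.const_mul _)]
      simp [sub_mul]
    rw [e3]
    refine (enorm_integral_le_lintegral_enorm _).trans (le_of_eq ?_)
    simp [enorm_mul]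
  have hmeas : AEMeasurable (Function.uncurry fun (x z : R2) => ‖f (x - z) - f x‖ₑ * ‖ψ z‖ₑ)
      (volume.prod volume) := by
    have m1 : AEStronglyMeasurable (fun p : R2 × R2 => f (p.1 - p.2)) (volume.prod volume) :=
      hf.aestronglyMeasurable.comp_quasiMeasurePreserving (quasiMeasurePreserving_sub _ _)
    have m2 : AEStronglyMeasurable (fun p : R2 × R2 => f p.1) (volume.prod volume) :=
      hf.aestronglyMeasurable.comp_fst
    have m3 : AEStronglyMeasurable (fun p : R2 × R2 => ψ p.2) (volume.prod volume) :=
      hψi.aestronglyMeasurable.comp_snd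
    exact (m1.sub m2).enorm.mul m3.enorm
  calc ∫⁻ x, ‖(∫ t, f t * ψ (x - t)) - f x‖ₑ
      ≤ ∫⁻ x, ∫⁻ z, ‖f (x - z) - f x‖ₑ * ‖ψ z‖ₑ := lintegral_mono h1
    _ = ∫⁻ z, ∫⁻ x, ‖f (x - z) - f x‖ₑ * ‖ψ z‖ₑ := lintegral_lintegral_swap hmeas
    _ ≤ ∫⁻ z, ε * ‖ψ z‖ₑ := by
        refine lintegral_mono fun z => ?_
        rw [lintegral_mul_const' _ _ enorm_ne_top]
        by_cases hz : ψ z = 0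
        · simp [hz]
        · gcongr
          exact h z (hψs z hz)
    _ = ε := by
        rw [lintegral_const_mul _ hψ.measurable.enorm]
        have : ∫⁻ z, ‖ψ z‖ₑ = 1 := by
          have e : ∀ z, ‖ψ z‖ₑ = ENNReal.ofReal (ψ z) := fun z => by
            rw [← ofReal_norm, Real.norm_of_nonneg (hψ0 z)]
          simp_rw [e]
          rw [← ofReal_integral_eq_lintegral_ofReal hψi (Eventually.of_forall hψ0), hψ1]
          simp
        rw [this, mul_one]


/-! ### Density of smooth functions up to the boundary -/

/-- Partial derivative in direction `j`. -/
def pd {E : Type*} [NormedAddCommGroup E] [NormedSpace ℝ E] (j : Fin 2) (f : R2 → E) (x : R2) : E :=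
  fderiv ℝ f x (EuclideanSpace.single j 1)

/-- There are arbitrarily small mollifiers that look inside `Ω` near the ball `B(p,r)`. -/
def GoodPatch (Ω : Set R2) (p : R2) (r : ℝ) : Prop :=
  ∀ δ > 0, ∃ ψ : R2 → ℝ, ContDiff ℝ (⊤ : ℕ∞) ψ ∧ HasCompactSupport ψ ∧ (∀ x, 0 ≤ ψ x) ∧
    ∫ x, ψ x = 1 ∧ (∀ x, ψ x ≠ 0 → ‖x‖ < δ) ∧
    ∀ x ∈ Ω, ∀ y ∈ ball p r, x - y ∈ tsupport ψ → y ∈ Ω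

lemma bump_kernel (c : R2) (s : ℝ) (hs : 0 < s) : ∃ ψ : R2 → ℝ, ContDiff ℝ (⊤ : ℕ∞) ψ ∧
    HasCompactSupport ψ ∧ (∀ x, 0 ≤ ψ x) ∧ ∫ x, ψ x = 1 ∧ tsupport ψ = closedBall c s := by
  let f : ContDiffBump c := ⟨s / 2, s, by positivity, by linarith⟩
  exact ⟨f.normed volume, f.contDiff_normed, f.hasCompactSupport_normed, f.nonneg_normed,
    f.integral_normed, f.tsupport_normed_eq⟩

lemma goodPatch_of_interior {Ω : Set R2} {p : R2} {r : ℝ} (h : ball p r ⊆ Ω) :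
    GoodPatch Ω p r := by
  intro δ hδ
  obtain ⟨ψ, h1, h2, h3, h4, h5⟩ := bump_kernel 0 (δ / 2) (by positivity)
  refine ⟨ψ, h1, h2, h3, h4, fun x hx => ?_, fun x _ y hy _ => h hy⟩
  have : x ∈ tsupport ψ := subset_tsupport _ hx
  rw [h5] at this
  have := mem_closedBall_zero_iff.1 this
  linarith

lemma goodPatch_of_frontier {Ω : Set R2} (hΩl : HasLipschitzBoundary Ω) {p : R2}
    (hp : p ∈ frontier Ω) : ∃ r > 0, GoodPatch Ω p r := by
  obtain ⟨r, hr, f, γ, L, hγ, hf⟩ := hΩl p hp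
  refine ⟨r / 2, by positivity, fun δ hδ => ?_⟩
  let A := f.toRealAffineIsometryEquiv.linearIsometryEquiv
  have hA : ∀ x y, f y - f x = A (y - x) := fun x y => by
    have := f.toRealAffineIsometryEquiv.map_vsub y x
    simpa using this.symm
  let e : R2 := EuclideanSpace.single 1 1
  have he : ‖e‖ = 1 := by simp [e]
  let v : R2 := A.symm e
  have hv : ‖v‖ = 1 := by simp [v, he]
  set c : ℝ := 1 / (2 * (1 + L)) with hc
  have hLn : (0 : ℝ) ≤ L := L.2
  have hc0 : 0 < c := by positivity
  have hc1 : c * (1 + L) = 1 / 2 := by rw [hc]; field_simp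
  have hc2 : c ≤ 1 / 2 := by nlinarith
  set t : ℝ := min δ (r / 2) / 2 with ht
  have ht0 : 0 < t := by positivity
  have htδ : 2 * t ≤ δ := by rw [ht]; linarith [min_le_left δ (r / 2)]
  have htr : 2 * t ≤ r / 2 := by rw [ht]; linarith [min_le_right δ (r / 2)]
  obtain ⟨ψ, h1, h2, h3, h4, h5⟩ := bump_kernel (-(t • v)) (c * t) (by positivity)
  have hn : ∀ x ∈ tsupport ψ, ‖x + t • v‖ ≤ c * t ∧ ‖x‖ < 2 * t := fun x hx => by
    rw [h5, mem_closedBall, dist_eq_norm, sub_neg_eq_add] at hx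
    refine ⟨hx, ?_⟩
    have : ‖x‖ ≤ ‖x + t • v‖ + ‖t • v‖ := by
      simpa using norm_sub_le (x + t • v) (t • v)
    rw [norm_smul, hv, Real.norm_of_nonneg ht0.le] at this
    nlinarith
  refine ⟨ψ, h1, h2, h3, h4, fun x hx => ?_, fun x hx y hy hxy => ?_⟩
  · linarith [(hn x (subset_tsupport _ hx)).2]
  · obtain ⟨h6, h7⟩ := hn _ hxy
    have hyr : y ∈ ball p r := ball_subset_ball (by linarith) hy
    have hxr : x ∈ ball p r := by
      rw [mem_ball] at hy ⊢
      have := dist_triangle x y p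
      rw [dist_eq_norm x y] at this
      linarith
    have h8 := (hf x hxr).1 hx
    rw [hf y hyr]
    have h9 : ‖A (y - x) - t • e‖ ≤ c * t := by
      have : A (y - x) - t • e = -A (x - y + t • v) := by
        simp [v]
        abel
      rw [this, norm_neg, A.norm_map]
      exact h6
    rw [← hA] at h9
    have h10 : |f y 0 - f x 0| ≤ c * t := by
      have := (PiLp.norm_apply_le (f y - f x - t • e) 0).trans h9
      simpa [e] using this
    have h11 : |f y 1 - f x 1 - t| ≤ c * t := by
      have := (PiLp.norm_apply_le (f y - f x - t • e) 1).trans h9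
      simpa [e] using this
    have h12 := hγ.dist_le_mul (f y 0) (f x 0)
    rw [Real.dist_eq, Real.dist_eq] at h12
    have h13 : (L : ℝ) * |f y 0 - f x 0| ≤ L * (c * t) := by gcongr
    have h14 := abs_le.1 h11
    have h15 := le_abs_self (γ (f y 0) - γ (f x 0))
    nlinarith

lemma goodPatch_exists {Ω : Set R2} (hΩo : IsOpen Ω) (hΩl : HasLipschitzBoundary Ω) (p : R2)
    (hp : p ∈ closure Ω) : ∃ r > 0, GoodPatch Ω p r := by
  by_cases h : p ∈ Ω
  · obtain ⟨r, hr, h1⟩ := Metric.isOpen_iff.1 hΩo p h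
    exact ⟨r, hr, goodPatch_of_interior h1⟩
  · exact goodPatch_of_frontier hΩl (by rw [hΩo.frontier_eq]; exact ⟨hp, h⟩)

lemma pd_mul (j : Fin 2) {f g : R2 → ℝ} {x : R2} (hf : DifferentiableAt ℝ f x)
    (hg : DifferentiableAt ℝ g x) :
    pd j (fun y => f y * g y) x = pd j f x * g x + f x * pd j g x := by
  unfold pd
  rw [fderiv_fun_mul hf hg]
  simp
  ring

lemma patch_approx {Ω : Set R2} (hΩo : IsOpen Ω) {p : R2} {r : ℝ} (hP : GoodPatch Ω p r)
    (b : R2 → ℝ) (d : Fin 2 → R2 → ℝ) (hb : IntegrableOn b Ω) (hd : ∀ j, IntegrableOn (d j) Ω)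
    (hw : ∀ φ : R2 → ℝ, ContDiff ℝ (⊤ : ℕ∞) φ → HasCompactSupport φ → tsupport φ ⊆ Ω →
      ∀ j, ∫ x in Ω, b x * pd j φ x = - ∫ x in Ω, d j x * φ x)
    (ζ : R2 → ℝ) (hζ : ContDiff ℝ (⊤ : ℕ∞) ζ) (hζs : tsupport ζ ⊆ ball p r)
    {ε : ℝ≥0∞} (hε : ε ≠ 0) :
    ∃ B : R2 → ℝ, ContDiff ℝ 1 B ∧ ∫⁻ x in Ω, ‖B x - ζ x * b x‖ₑ ≤ ε ∧
      ∀ j, ∫⁻ x in Ω, ‖pd j B x - (ζ x * d j x + pd j ζ x * b x)‖ₑ ≤ ε := by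
  have hζc : HasCompactSupport ζ :=
    HasCompactSupport.of_support_subset_isCompact (isCompact_closedBall p r)
      ((subset_tsupport ζ).trans (hζs.trans ball_subset_closedBall))
  have hζd : Differentiable ℝ ζ := hζ.differentiable (by simp)
  have hζb := hζc.exists_bound_of_continuous hζ.continuous
  obtain ⟨K, hK⟩ := hζb
  have hpc : ∀ j, Continuous (pd j ζ) := fun j =>
    (hζ.continuous_fderiv (by simp)).clm_apply continuous_const
  have hpb : ∀ j, ∃ K', ∀ x, ‖pd j ζ x‖ ≤ K' := fun j => by
    refine HasCompactSupport.exists_bound_of_continuous ?_ (hpc j)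
    exact (hζc.fderiv_apply (𝕜 := ℝ) (EuclideanSpace.single j 1))
  have i1 : IntegrableOn (fun x => ζ x * b x) Ω :=
    Integrable.bdd_mul (c := K) hb hζ.continuous.aestronglyMeasurable (Eventually.of_forall hK)
  have i2 : ∀ j, IntegrableOn (fun x => ζ x * d j x) Ω := fun j =>
    Integrable.bdd_mul (c := K) (hd j) hζ.continuous.aestronglyMeasurable (Eventually.of_forall hK)
  have i3 : ∀ j, IntegrableOn (fun x => pd j ζ x * b x) Ω := fun j => by
    obtain ⟨K', hK'⟩ := hpb j
    exact Integrable.bdd_mul (c := K') hb (hpc j).aestronglyMeasurable (Eventually.of_forall hK')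
  let f : R2 → ℝ := Ω.indicator (fun x => ζ x * b x)
  let q : Fin 2 → R2 → ℝ := fun j => Ω.indicator (fun x => ζ x * d j x + pd j ζ x * b x)
  have hfi : Integrable f volume := (integrable_indicator_iff hΩo.measurableSet).2 i1
  have hqi : ∀ j, Integrable (q j) volume := fun j =>
    (integrable_indicator_iff hΩo.measurableSet).2 ((i2 j).add (i3 j))
  obtain ⟨δ, hδ, H⟩ := approx_id f hfi hε
  have H' := fun j => approx_id (q j) (hqi j) hε
  choose δ' hδ' H' using H'
  obtain ⟨ψ, g1, g2, g3, g4, g5, g6⟩ := hP (min δ (min (δ' 0) (δ' 1)))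
    (lt_min hδ (lt_min (hδ' 0) (hδ' 1)))
  have hψc := g1.continuous
  have hψd : Differentiable ℝ ψ := g1.differentiable (by simp)
  obtain ⟨M, hM⟩ := g2.exists_bound_of_continuous hψc
  let B : R2 → ℝ := fun x => ∫ t, f t * ψ (x - t)
  have hBconv : B = convolution f ψ (ContinuousLinearMap.mul ℝ ℝ) volume := by
    ext x; simp [B, convolution]
  have hψ1 : ContDiff ℝ 1 ψ := g1.of_le (by exact_mod_cast le_top)
  have hB1 : ContDiff ℝ 1 B := by
    rw [hBconv]
    exact g2.contDiff_convolution_right (n := 1) _ hfi.locallyIntegrable hψ1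
  have hBd : ∀ j, ∀ x, pd j B x = ∫ t, f t * pd j ψ (x - t) := fun j x => by
    have h1 := g2.hasFDerivAt_convolution_right (ContinuousLinearMap.mul ℝ ℝ) hfi.locallyIntegrable
      hψ1 x
    rw [← hBconv] at h1
    unfold pd
    rw [h1.fderiv, convolution_precompR_apply]
    · simp [convolution]
    · exact hfi.locallyIntegrable
    · exact g2.fderiv (𝕜 := ℝ)
    · exact g1.continuous_fderiv (by simp)
  refine ⟨B, hB1, ?_, fun j => ?_⟩
  · calc ∫⁻ x in Ω, ‖B x - ζ x * b x‖ₑ = ∫⁻ x in Ω, ‖B x - f x‖ₑ := by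
          refine setLIntegral_congr_fun hΩo.measurableSet fun x hx => ?_
          simp [f, hx]
      _ ≤ ∫⁻ x, ‖B x - f x‖ₑ := setLIntegral_le_lintegral _ _
      _ ≤ ε := H ψ hψc g2 g3 g4 fun x hx => (g5 x hx).trans_le (min_le_left _ _)
  · have key : ∀ x ∈ Ω, pd j B x = ∫ t, q j t * ψ (x - t) := fun x hx => by
      rw [hBd]
      have hshift : ContDiff ℝ (⊤ : ℕ∞) (fun t => ψ (x - t)) :=
        g1.comp (contDiff_const.sub contDiff_id)
      let φ : R2 → ℝ := fun t => ζ t * ψ (x - t)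
      have hφ : ContDiff ℝ (⊤ : ℕ∞) φ := hζ.mul hshift
      have hφc : HasCompactSupport φ := hζc.mul_right
      have hφs : tsupport φ ⊆ Ω := by
        intro t ht
        have t1 : t ∈ tsupport ζ := tsupport_mul_subset_left ht
        have t2 : t ∈ tsupport (fun t => ψ (x - t)) := tsupport_mul_subset_right ht
        have t3 : x - t ∈ tsupport ψ := by
          have := tsupport_comp_subset_preimage ψ (f := fun t => x - t) (by fun_prop)
          exact this t2
        exact g6 x hx t (hζs t1) t3
      have hsd : ∀ t, pd j (fun t => ψ (x - t)) t = - pd j ψ (x - t) := fun t => by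
        unfold pd
        have h1 : HasFDerivAt (fun t : R2 => x - t) (-ContinuousLinearMap.id ℝ R2) t := by
          simpa using (hasFDerivAt_id t).const_sub x
        have h2 := ((hψd (x - t)).hasFDerivAt.comp t h1).fderiv
        change fderiv ℝ (ψ ∘ fun t => x - t) t _ = _
        rw [h2]
        simp
      have hφd : ∀ t, pd j φ t = pd j ζ t * ψ (x - t) - ζ t * pd j ψ (x - t) := fun t => by
        rw [pd_mul j (hζd t) ((hshift.differentiable (by simp)) t), hsd]
        ring
      have h1 := hw φ hφ hφc hφs j
      have hsm : AEStronglyMeasurable (fun t => ψ (x - t)) (volume.restrict Ω) :=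
        hshift.continuous.aestronglyMeasurable
      have j1 : IntegrableOn (fun t => (pd j ζ t * b t) * ψ (x - t)) Ω :=
        Integrable.mul_bdd (c := M) (i3 j) hsm (Eventually.of_forall fun t => hM _)
      have j2 : IntegrableOn (fun t => (ζ t * d j t) * ψ (x - t)) Ω :=
        Integrable.mul_bdd (c := M) (i2 j) hsm (Eventually.of_forall fun t => hM _)
      have hpψ : Continuous (pd j ψ) :=
        (g1.continuous_fderiv (by simp)).clm_apply continuous_const
      obtain ⟨M', hM'⟩ := HasCompactSupport.exists_bound_of_continuous
        (g2.fderiv_apply (𝕜 := ℝ) (EuclideanSpace.single j 1)) hpψ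
      have j3 : IntegrableOn (fun t => (ζ t * b t) * pd j ψ (x - t)) Ω :=
        Integrable.mul_bdd (c := M') i1 ((hpψ.comp (continuous_const.sub continuous_id)).aestronglyMeasurable)
          (Eventually.of_forall fun t => hM' _)
      have e1 : ∫ t in Ω, b t * pd j φ t = (∫ t in Ω, (pd j ζ t * b t) * ψ (x - t)) -
          ∫ t in Ω, (ζ t * b t) * pd j ψ (x - t) := by
        rw [← integral_sub j1 j3]
        congr 1; ext t; rw [hφd]; ring
      have e2 : ∫ t in Ω, d j t * φ t = ∫ t in Ω, (ζ t * d j t) * ψ (x - t) := by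
        congr 1; ext t; simp only [φ]; ring
      have e3 : ∫ t, f t * pd j ψ (x - t) = ∫ t in Ω, (ζ t * b t) * pd j ψ (x - t) := by
        rw [← integral_indicator hΩo.measurableSet]
        congr 1; ext t; simp only [f, Set.indicator]; split_ifs <;> ring
      have e4 : ∫ t, q j t * ψ (x - t) = (∫ t in Ω, (ζ t * d j t) * ψ (x - t)) +
          ∫ t in Ω, (pd j ζ t * b t) * ψ (x - t) := by
        rw [← integral_add j2 j1, ← integral_indicator hΩo.measurableSet]
        congr 1; ext t; simp only [q, Set.indicator]; split_ifs <;> ring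
      rw [e3, e4]
      linarith [e1, e2, h1]
    calc ∫⁻ x in Ω, ‖pd j B x - (ζ x * d j x + pd j ζ x * b x)‖ₑ
        = ∫⁻ x in Ω, ‖(∫ t, q j t * ψ (x - t)) - q j x‖ₑ := by
          refine setLIntegral_congr_fun hΩo.measurableSet fun x hx => ?_
          simp only [key x hx]
          simp [q, hx]
      _ ≤ ∫⁻ x, ‖(∫ t, q j t * ψ (x - t)) - q j x‖ₑ := setLIntegral_le_lintegral _ _
      _ ≤ ε := H' j ψ hψc g2 g3 g4 fun x hx => (g5 x hx).trans_le (by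
          refine (min_le_right _ _).trans ?_
          fin_cases j
          · exact min_le_left _ _
          · exact min_le_right _ _)


lemma enorm_sum_sub_le {ι : Type*} (s : Finset ι) (a c : ι → ℝ) :
    ‖(∑ i ∈ s, a i) - ∑ i ∈ s, c i‖ₑ ≤ ∑ i ∈ s, ‖a i - c i‖ₑ := by
  rw [← Finset.sum_sub_distrib]
  exact enorm_sum_le _ _

lemma density_scalar {Ω : Set R2} (hΩo : IsOpen Ω) (hΩb : Bornology.IsBounded Ω)
    (hΩl : HasLipschitzBoundary Ω)
    (b : R2 → ℝ) (d : Fin 2 → R2 → ℝ) (hb : IntegrableOn b Ω) (hd : ∀ j, IntegrableOn (d j) Ω)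
    (hw : ∀ φ : R2 → ℝ, ContDiff ℝ (⊤ : ℕ∞) φ → HasCompactSupport φ → tsupport φ ⊆ Ω →
      ∀ j, ∫ x in Ω, b x * pd j φ x = - ∫ x in Ω, d j x * φ x)
    {ε : ℝ≥0∞} (hε : ε ≠ 0) :
    ∃ B : R2 → ℝ, ContDiff ℝ 1 B ∧ ∫⁻ x in Ω, ‖B x - b x‖ₑ ≤ ε ∧
      ∀ j, ∫⁻ x in Ω, ‖pd j B x - d j x‖ₑ ≤ ε := by
  have hex : ∀ p : R2, ∃ r > 0, p ∈ closure Ω → GoodPatch Ω p r := fun p => by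
    by_cases hp : p ∈ closure Ω
    · obtain ⟨r, hr, h⟩ := goodPatch_exists hΩo hΩl p hp
      exact ⟨r, hr, fun _ => h⟩
    · exact ⟨1, one_pos, fun h => absurd h hp⟩
  choose r hr hP using hex
  have hcomp : IsCompact (closure Ω) := hΩb.isCompact_closure
  obtain ⟨t, ht, hcov⟩ := hcomp.elim_nhds_subcover (fun p => ball p (r p))
    (fun p _ => ball_mem_nhds p (hr p))
  obtain ⟨F, hF⟩ := SmoothPartitionOfUnity.exists_isSubordinate (modelWithCornersSelf ℝ R2)
    (isClosed_closure (s := Ω)) (fun i : t => ball (i : R2) (r i)) (fun i => isOpen_ball) (by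
      intro x hx
      obtain ⟨p, hp, hxp⟩ := mem_iUnion₂.1 (hcov hx)
      exact mem_iUnion.2 ⟨⟨p, hp⟩, hxp⟩)
  let ζ : t → R2 → ℝ := fun i => F i
  have hζ : ∀ i, ContDiff ℝ (⊤ : ℕ∞) (ζ i) := fun i => (F i).contMDiff.contDiff
  have hsum : ∀ x ∈ closure Ω, ∑ i, ζ i x = 1 := fun x hx => by
    have := F.sum_eq_one hx
    rwa [finsum_eq_sum_of_fintype] at this
  have hζd : ∀ i, Differentiable ℝ (ζ i) := fun i => (hζ i).differentiable (by simp)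
  have hpsum : ∀ j, ∀ x ∈ Ω, ∑ i, pd j (ζ i) x = 0 := fun j x hx => by
    have h1 : (fun y => ∑ i, ζ i y) =ᶠ[𝓝 x] fun _ => (1 : ℝ) := by
      filter_upwards [hΩo.mem_nhds hx] with y hy using hsum y (subset_closure hy)
    have h2 := h1.fderiv_eq (𝕜 := ℝ)
    rw [fderiv_fun_sum (fun i _ => hζd i x)] at h2
    have h3 := congrArg (fun l : R2 →L[ℝ] ℝ => l (EuclideanSpace.single j 1)) h2
    simpa [pd] using h3
  set N : ℝ≥0∞ := (Fintype.card t : ℝ≥0∞) + 1 with hN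
  have hN0 : N ≠ ∞ := by simp [hN]
  have hη : ε / N ≠ 0 := ENNReal.div_ne_zero.2 ⟨hε, hN0⟩
  have hap := fun i : t => patch_approx hΩo (hP i (ht i i.2)) b d hb hd hw (ζ i) (hζ i) (hF i) hη
  choose B hB1 hB2 hB3 using hap
  have hle : ∀ c : t → ℝ≥0∞, (∀ i, c i ≤ ε / N) → ∑ i, c i ≤ ε := fun c hc => by
    calc ∑ i, c i ≤ ∑ _i : t, ε / N := Finset.sum_le_sum fun i _ => hc i
      _ = (Fintype.card t) * (ε / N) := by simp
      _ ≤ N * (ε / N) := by gcongr; simp [hN]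
      _ ≤ ε := ENNReal.mul_div_le
  have hζc : ∀ i, Continuous (ζ i) := fun i => (hζ i).continuous
  have hpc : ∀ i j, Continuous (pd j (ζ i)) := fun i j =>
    ((hζ i).continuous_fderiv (by simp)).clm_apply continuous_const
  have hpB : ∀ i j, Continuous (pd j (B i)) := fun i j =>
    ((hB1 i).continuous_fderiv (by simp)).clm_apply continuous_const
  refine ⟨fun x => ∑ i, B i x, ContDiff.sum fun i _ => hB1 i, ?_, fun j => ?_⟩
  · calc ∫⁻ x in Ω, ‖(∑ i, B i x) - b x‖ₑ ≤ ∫⁻ x in Ω, ∑ i, ‖B i x - ζ i x * b x‖ₑ := by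
          refine setLIntegral_mono' hΩo.measurableSet fun x hx => ?_
          have : b x = ∑ i, ζ i x * b x := by
            rw [← Finset.sum_mul, hsum x (subset_closure hx), one_mul]
          conv_lhs => rw [this]
          exact enorm_sum_sub_le _ _ _
      _ = ∑ i, ∫⁻ x in Ω, ‖B i x - ζ i x * b x‖ₑ := by
          refine lintegral_finsetSum' _ fun i _ => ?_
          exact ((hB1 i).continuous.aestronglyMeasurable.sub
            ((hζc i).aestronglyMeasurable.mul hb.aestronglyMeasurable)).enorm
      _ ≤ ε := hle _ hB2
  · calc ∫⁻ x in Ω, ‖pd j (fun x => ∑ i, B i x) x - d j x‖ₑ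
        ≤ ∫⁻ x in Ω, ∑ i, ‖pd j (B i) x - (ζ i x * d j x + pd j (ζ i) x * b x)‖ₑ := by
          refine setLIntegral_mono' hΩo.measurableSet fun x hx => ?_
          have : d j x = ∑ i, (ζ i x * d j x + pd j (ζ i) x * b x) := by
            rw [Finset.sum_add_distrib, ← Finset.sum_mul, ← Finset.sum_mul,
              hsum x (subset_closure hx), hpsum j x hx]
            simp
          have h2 : pd j (fun x => ∑ i, B i x) x = ∑ i, pd j (B i) x := by
            unfold pd
            rw [fderiv_fun_sum (fun i _ => (hB1 i).differentiable (by simp) x)]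
            simp
          conv_lhs => rw [this, h2]
          exact enorm_sum_sub_le _ _ _
      _ = ∑ i, ∫⁻ x in Ω, ‖pd j (B i) x - (ζ i x * d j x + pd j (ζ i) x * b x)‖ₑ := by
          refine lintegral_finsetSum' _ fun i _ => ?_
          exact ((hpB i j).aestronglyMeasurable.sub
            (((hζc i).aestronglyMeasurable.mul (hd j).aestronglyMeasurable).add
              ((hpc i j).aestronglyMeasurable.mul hb.aestronglyMeasurable))).enorm
      _ ≤ ε := hle _ fun i => hB3 i j


/-! ### Integration by parts, complex coordinates, products in `L¹` -/

lemma ibp {E : Type*} [NormedAddCommGroup E] [NormedSpace ℝ E] [CompleteSpace E] {A : Set R2}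
    (hA : IsOpen A) {v : R2 → E} (hv : ContDiffOn ℝ 1 v A) {φ : R2 → ℝ}
    (hφ : ContDiff ℝ (⊤ : ℕ∞) φ) (hφc : HasCompactSupport φ) (hφs : tsupport φ ⊆ A) (j : Fin 2) :
    ∫ x in A, pd j φ x • v x = - ∫ x in A, φ x • pd j v x := by
  have hφ1 : ContDiff ℝ 1 φ := hφ.of_le (by exact_mod_cast le_top)
  have hφd : Differentiable ℝ φ := hφ.differentiable (by simp)
  have hdv : ∀ x ∈ A, DifferentiableAt ℝ v x := fun x hx =>
    (hv.contDiffAt (hA.mem_nhds hx)).differentiableAt (by simp)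
  have hzero : ∀ x, x ∉ A → φ =ᶠ[𝓝 x] 0 := fun x hx =>
    notMem_tsupport_iff_eventuallyEq.1 fun h => hx (hφs h)
  have hpz : ∀ x, x ∉ A → pd j φ x = 0 := fun x hx => by
    unfold pd
    rw [(hzero x hx).fderiv_eq]
    simp
  let f : R2 → E := fun x => φ x • v x
  have hf : ContDiff ℝ 1 f := by
    rw [contDiff_iff_contDiffAt]
    intro x
    by_cases hx : x ∈ A
    · exact hφ1.contDiffAt.smul (hv.contDiffAt (hA.mem_nhds hx))
    · have : f =ᶠ[𝓝 x] fun _ => 0 := by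
        filter_upwards [hzero x hx] with y hy
        simp [f, hy]
      exact contDiffAt_const.congr_of_eventuallyEq this
  have hfc : HasCompactSupport f := hφc.smul_right
  have hfd : Differentiable ℝ f := hf.differentiable (by simp)
  have hpf : ∀ x ∈ A, pd j f x = pd j φ x • v x + φ x • pd j v x := fun x hx => by
    unfold pd
    have := ((hφd x).hasFDerivAt.smul (hdv x hx).hasFDerivAt).fderiv
    change fderiv ℝ (φ • v) x _ = _
    rw [this]
    simp
    abel
  have hpfz : ∀ x, x ∉ A → pd j f x = 0 := fun x hx => by
    have : f =ᶠ[𝓝 x] fun _ => 0 := by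
      filter_upwards [hzero x hx] with y hy
      simp [f, hy]
    unfold pd
    rw [this.fderiv_eq]
    simp
  have hpfc : Continuous (pd j f) := (hf.continuous_fderiv (by simp)).clm_apply continuous_const
  have hpfi : Integrable (pd j f) volume := hpfc.integrable_of_hasCompactSupport
    (hfc.fderiv_apply (𝕜 := ℝ) (EuclideanSpace.single j 1))
  have h0 : ∫ x, pd j f x = 0 := by
    have := integral_bilinear_hasLineDerivAt_right_eq_neg_left_of_integrable (μ := volume)
      (f := fun _ : R2 => (1 : ℝ)) (f' := fun _ => 0) (g := f) (g' := pd j f)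
      (v := EuclideanSpace.single j 1) (B := ContinuousLinearMap.lsmul ℝ ℝ) (by simp)
      (by simpa using hpfi)
      (by simpa using hf.continuous.integrable_of_hasCompactSupport hfc)
      (fun x _ => by simpa using (hasFDerivAt_const (1 : ℝ) x).hasLineDerivAt (EuclideanSpace.single j 1))
      (fun x _ => (hfd x).hasFDerivAt.hasLineDerivAt _)
    simpa using this
  have h1 : ∫ x in A, pd j f x = 0 := by
    rw [setIntegral_eq_integral_of_forall_compl_eq_zero hpfz, h0]
  have hpφc : Continuous (pd j φ) := (hφ.continuous_fderiv (by simp)).clm_apply continuous_const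
  have hi : IntegrableOn (fun x => pd j φ x • v x) A := by
    have hc : Continuous (fun x => pd j φ x • v x) := by
      rw [continuous_iff_continuousAt]
      intro x
      by_cases hx : x ∈ A
      · exact hpφc.continuousAt.smul (hdv x hx).continuousAt
      · have : (fun x => pd j φ x • v x) =ᶠ[𝓝 x] fun _ => 0 := by
          filter_upwards [(hzero x hx).eventuallyEq_nhds] with y hy
          unfold pd
          rw [hy.fderiv_eq]
          simp
        exact continuousAt_const.congr this.symm
    exact (hc.integrable_of_hasCompactSupport
      (hφc.fderiv_apply (𝕜 := ℝ) (EuclideanSpace.single j 1)).smul_right).integrableOn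
  have h2 : ∫ x in A, φ x • pd j v x = ∫ x in A, (pd j f x - pd j φ x • v x) := by
    refine setIntegral_congr_fun hA.measurableSet fun x hx => ?_
    simp [hpf x hx]
  rw [h2, integral_sub hpfi.integrableOn hi, h1]
  simp

/-- The identification `ℝ² ≃ ℂ`. -/
def toC : R2 ≃ₗᵢ[ℝ] ℂ := Complex.orthonormalBasisOneI.repr.symm

lemma toC_apply (x : R2) : toC x = ⟨x 0, x 1⟩ := by
  apply toC.symm.injective
  rw [LinearIsometryEquiv.symm_apply_apply]
  ext i
  simp only [toC, LinearIsometryEquiv.symm_symm, Complex.orthonormalBasisOneI_repr_apply]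
  fin_cases i <;> simp

/-- Complex-valued weak partial derivatives. -/
def Gc (G : R2 → Matrix (Fin 2) (Fin 2) ℝ) (j : Fin 2) (x : R2) : ℂ := ⟨G x 0 j, G x 1 j⟩

lemma Gc_eq (G : R2 → Matrix (Fin 2) (Fin 2) ℝ) (j : Fin 2) (x : R2) :
    Gc G j x = (G x 0 j : ℂ) + (G x 1 j : ℂ) * Complex.I := by
  apply Complex.ext <;> simp [Gc]

lemma toC_eq (x : R2) : toC x = (x 0 : ℂ) + (x 1 : ℂ) * Complex.I := by
  rw [toC_apply]
  apply Complex.ext <;> simp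

lemma tool_mul {X : Type*} [MeasurableSpace X] {μ : Measure X} {f : ℕ → X → ℂ} {g : X → ℂ}
    {M : ℕ → X → ℂ} {N : X → ℂ} {K : ℝ}
    (hf : Tendsto (fun n => ∫⁻ x, ‖f n x - g x‖ₑ ∂μ) atTop (𝓝 0)) (hg : Integrable g μ)
    (hfm : ∀ n, AEStronglyMeasurable (f n) μ)
    (hM : ∀ n, ∀ᵐ x ∂μ, ‖M n x‖ ≤ K) (hMm : ∀ n, AEStronglyMeasurable (M n) μ)
    (hlim : ∀ᵐ x ∂μ, g x ≠ 0 → Tendsto (fun n => M n x) atTop (𝓝 (N x))) :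
    Tendsto (fun n => ∫⁻ x, ‖M n x * f n x - N x * g x‖ₑ ∂μ) atTop (𝓝 0) := by
  have h1 : Tendsto (fun n => ∫⁻ x, ‖(M n x - N x) * g x‖ₑ ∂μ) atTop (𝓝 0) := by
    have := tendsto_lintegral_of_dominated_convergence' (μ := μ)
      (F := fun n x => ‖(M n x - N x) * g x‖ₑ) (f := fun _ => 0)
      (fun x => ENNReal.ofReal (2 * K) * ‖g x‖ₑ) ?_ ?_ ?_ ?_
    · simpa using this
    · intro n
      have hN : AEStronglyMeasurable (fun x => N x * g x) μ := by
        refine aestronglyMeasurable_of_tendsto_ae atTop (f := fun n x => M n x * g x)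
          (fun n => (hMm n).mul hg.aestronglyMeasurable) ?_
        filter_upwards [hlim] with x hx
        by_cases h : g x = 0
        · simp [h]
        · exact (hx h).mul_const _
      have := (((hMm n).mul hg.aestronglyMeasurable).sub hN).enorm
      simpa [sub_mul] using this
    · intro n
      filter_upwards [hlim, ae_all_iff.2 hM] with x hx hM
      by_cases h : g x = 0
      · simp [h]
      have hN : ‖N x‖ ≤ K := le_of_tendsto (hx h).norm (Eventually.of_forall fun n => hM n)
      rw [enorm_mul]
      gcongr
      rw [← ofReal_norm]
      apply ENNReal.ofReal_le_ofReal
      linarith [norm_sub_le (M n x) (N x), hM n]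
    · rw [lintegral_const_mul' _ _ ENNReal.ofReal_ne_top]
      exact ENNReal.mul_ne_top ENNReal.ofReal_ne_top hg.2.ne
    · filter_upwards [hlim] with x hx
      by_cases h : g x = 0
      · simp [h]
      have h2 : Tendsto (fun n => (M n x - N x) * g x) atTop (𝓝 0) := by
        have := ((hx h).sub_const (N x)).mul_const (g x)
        simpa using this
      simpa using h2.enorm
  have h2 : Tendsto (fun n => ENNReal.ofReal K * ∫⁻ x, ‖f n x - g x‖ₑ ∂μ) atTop (𝓝 0) := by
    simpa using ENNReal.Tendsto.const_mul hf (Or.inr ENNReal.ofReal_ne_top)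
  have h3 := h2.add h1
  rw [add_zero] at h3
  refine tendsto_of_tendsto_of_tendsto_of_le_of_le tendsto_const_nhds h3 (fun _ => bot_le)
    fun n => ?_
  simp only
  rw [← lintegral_const_mul' _ _ ENNReal.ofReal_ne_top, ← lintegral_add_left']
  · refine lintegral_mono_ae ?_
    filter_upwards [hM n] with x hx
    have : M n x * f n x - N x * g x = M n x * (f n x - g x) + (M n x - N x) * g x := by ring
    rw [this]
    refine (enorm_add_le _ _).trans ?_
    gcongr
    rw [enorm_mul]
    gcongr
    rw [← ofReal_norm]
    exact ENNReal.ofReal_le_ofReal hx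
  · exact (((hfm n).sub hg.aestronglyMeasurable).enorm).const_mul _

lemma tool_add {X : Type*} [MeasurableSpace X] {μ : Measure X} {f f' : ℕ → X → ℂ} {g g' : X → ℂ}
    (hf : Tendsto (fun n => ∫⁻ x, ‖f n x - g x‖ₑ ∂μ) atTop (𝓝 0))
    (hf' : Tendsto (fun n => ∫⁻ x, ‖f' n x - g' x‖ₑ ∂μ) atTop (𝓝 0))
    (hm : ∀ n, AEStronglyMeasurable (fun x => f n x - g x) μ) :
    Tendsto (fun n => ∫⁻ x, ‖(f n x + f' n x) - (g x + g' x)‖ₑ ∂μ) atTop (𝓝 0) := by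
  have h3 := hf.add hf'
  rw [add_zero] at h3
  refine tendsto_of_tendsto_of_tendsto_of_le_of_le tendsto_const_nhds h3 (fun _ => bot_le)
    fun n => ?_
  simp only
  rw [← lintegral_add_left' (hm n).enorm]
  refine lintegral_mono fun x => ?_
  have : (f n x + f' n x) - (g x + g' x) = (f n x - g x) + (f' n x - g' x) := by ring
  rw [this]
  exact enorm_add_le _ _

lemma tool_conj {X : Type*} [MeasurableSpace X] {μ : Measure X} {f : ℕ → X → ℂ} {g : X → ℂ}
    (hf : Tendsto (fun n => ∫⁻ x, ‖f n x - g x‖ₑ ∂μ) atTop (𝓝 0)) :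
    Tendsto (fun n => ∫⁻ x, ‖(starRingEnd ℂ) (f n x) - (starRingEnd ℂ) (g x)‖ₑ ∂μ) atTop (𝓝 0) := by
  refine hf.congr fun n => lintegral_congr fun x => ?_
  rw [← map_sub, ← ofReal_norm, ← ofReal_norm, RCLike.norm_conj]


/-! ### Weak gradients and limits -/

lemma test_bound {φ : R2 → ℝ} (hφ : ContDiff ℝ (⊤ : ℕ∞) φ) (hφc : HasCompactSupport φ)
    (j : Fin 2) : Continuous φ ∧ Continuous (pd j φ) ∧ ∃ K : ℝ, ∀ x, ‖φ x‖ ≤ K ∧ ‖pd j φ x‖ ≤ K := by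
  have h1 : Continuous (pd j φ) := (hφ.continuous_fderiv (by simp)).clm_apply continuous_const
  obtain ⟨K1, hK1⟩ := hφc.exists_bound_of_continuous hφ.continuous
  obtain ⟨K2, hK2⟩ := (hφc.fderiv_apply (𝕜 := ℝ) (EuclideanSpace.single j 1)).exists_bound_of_continuous h1
  exact ⟨hφ.continuous, h1, max K1 K2, fun x => ⟨(hK1 x).trans (le_max_left _ _),
    (hK2 x).trans (le_max_right _ _)⟩⟩

lemma int_smul {E : Type*} [NormedAddCommGroup E] [NormedSpace ℝ E]
    {A : Set R2} {f : R2 → E} (hf : IntegrableOn f A) {φ : R2 → ℝ} (hφ : Continuous φ) {K : ℝ}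
    (hK : ∀ x, ‖φ x‖ ≤ K) : IntegrableOn (fun x => φ x • f x) A :=
  Integrable.bdd_smul (C := K) hf hφ.aestronglyMeasurable (Eventually.of_forall hK)

lemma tendsto_test {E : Type*} [NormedAddCommGroup E] [NormedSpace ℝ E] [CompleteSpace E]
    {A : Set R2} {v : ℕ → R2 → E} {f : R2 → E}
    (hf : IntegrableOn f A) (hv : ∀ n, IntegrableOn (v n) A)
    (h : Tendsto (fun n => ∫⁻ x in A, ‖v n x - f x‖ₑ) atTop (𝓝 0))
    {φ : R2 → ℝ} (hφ : Continuous φ) {K : ℝ} (hK : ∀ x, ‖φ x‖ ≤ K) :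
    Tendsto (fun n => ∫ x in A, φ x • v n x) atTop (𝓝 (∫ x in A, φ x • f x)) := by
  have hi : ∀ g : R2 → E, IntegrableOn g A → IntegrableOn (fun x => φ x • g x) A := fun g hg =>
    Integrable.bdd_smul (C := K) hg hφ.aestronglyMeasurable (Eventually.of_forall hK)
  refine tendsto_integral_of_L1 _ (hi f hf).aestronglyMeasurable (Eventually.of_forall fun n => hi _ (hv n)) ?_
  have h2 : Tendsto (fun n => ENNReal.ofReal K * ∫⁻ x in A, ‖v n x - f x‖ₑ) atTop (𝓝 0) := by
    simpa using ENNReal.Tendsto.const_mul h (Or.inr ENNReal.ofReal_ne_top)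
  refine tendsto_of_tendsto_of_tendsto_of_le_of_le tendsto_const_nhds h2 (fun _ => bot_le)
    fun n => ?_
  simp only
  rw [← lintegral_const_mul' _ _ ENNReal.ofReal_ne_top]
  refine lintegral_mono fun x => ?_
  rw [← smul_sub, enorm_smul]
  gcongr
  rw [← ofReal_norm]
  exact ENNReal.ofReal_le_ofReal (hK x)

lemma Gc_integrable {Ω : Set R2} {u : R2 → R2} {G : R2 → Matrix (Fin 2) (Fin 2) ℝ}
    (hu : MemW11 Ω u G) (j : Fin 2) : IntegrableOn (Gc G j) Ω := by
  have h : Gc G j = fun x => (G x 0 j : ℂ) + (G x 1 j : ℂ) * Complex.I := by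
    funext x
    exact Gc_eq G j x
  rw [h]
  exact (hu.2.1 0 j).ofReal.add ((hu.2.1 1 j).ofReal.mul_const _)

lemma uc_integrable {Ω : Set R2} {u : R2 → R2} {G : R2 → Matrix (Fin 2) (Fin 2) ℝ}
    (hu : MemW11 Ω u G) : IntegrableOn (fun x => toC (u x)) Ω :=
  toC.toContinuousLinearEquiv.toContinuousLinearMap.integrable_comp hu.1

lemma coord_integrable {Ω : Set R2} {u : R2 → R2} {G : R2 → Matrix (Fin 2) (Fin 2) ℝ}
    (hu : MemW11 Ω u G) (i : Fin 2) : IntegrableOn (fun x => u x i) Ω :=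
  (EuclideanSpace.proj (𝕜 := ℝ) i).integrable_comp hu.1

lemma weak_C {Ω : Set R2} {u : R2 → R2} {G : R2 → Matrix (Fin 2) (Fin 2) ℝ}
    (hu : MemW11 Ω u G) {φ : R2 → ℝ}
    (hφ : ContDiff ℝ (⊤ : ℕ∞) φ) (hφc : HasCompactSupport φ) (hφs : tsupport φ ⊆ Ω) (j : Fin 2) :
    ∫ x in Ω, pd j φ x • toC (u x) = - ∫ x in Ω, φ x • Gc G j x := by
  obtain ⟨c1, c2, K, hK⟩ := test_bound hφ hφc j
  have h0 := hu.2.2 φ hφ hφc hφs 0 j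
  have h1 := hu.2.2 φ hφ hφc hφs 1 j
  have i1 : ∀ i, IntegrableOn (fun x => u x i * pd j φ x) Ω := fun i =>
    Integrable.mul_bdd (c := K) (coord_integrable hu i) c2.aestronglyMeasurable
      (Eventually.of_forall fun x => (hK x).2)
  have i2 : ∀ i, IntegrableOn (fun x => G x i j * φ x) Ω := fun i =>
    Integrable.mul_bdd (c := K) (hu.2.1 i j) c1.aestronglyMeasurable
      (Eventually.of_forall fun x => (hK x).1)
  have e1 : ∀ x, pd j φ x • toC (u x) =
      ((u x 0 * pd j φ x : ℝ) : ℂ) + ((u x 1 * pd j φ x : ℝ) : ℂ) * Complex.I := fun x => by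
    rw [toC_eq, Complex.real_smul]
    push_cast
    ring
  have e2 : ∀ x, φ x • Gc G j x =
      ((G x 0 j * φ x : ℝ) : ℂ) + ((G x 1 j * φ x : ℝ) : ℂ) * Complex.I := fun x => by
    rw [Gc_eq, Complex.real_smul]
    push_cast
    ring
  simp_rw [e1, e2]
  rw [integral_add (i1 0).ofReal ((i1 1).ofReal.mul_const _), integral_mul_const,
    integral_add (i2 0).ofReal ((i2 1).ofReal.mul_const _), integral_mul_const]
  have q : ∀ f : R2 → ℝ, ∫ x in Ω, (f x : ℂ) = ((∫ x in Ω, f x : ℝ) : ℂ) := fun f => integral_ofReal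
  rw [q (fun x => u x 0 * pd j φ x), q (fun x => u x 1 * pd j φ x), q (fun x => G x 0 j * φ x),
    q (fun x => G x 1 j * φ x)]
  unfold pd
  rw [h0, h1]
  push_cast
  ring

lemma tsupport_pd {φ : R2 → ℝ} (j : Fin 2) {x : R2} (hx : x ∉ tsupport φ) : pd j φ x = 0 := by
  unfold pd
  rw [(notMem_tsupport_iff_eventuallyEq.1 hx).fderiv_eq]
  simp

lemma weak_C' {Ω A : Set R2} {u : R2 → R2} {G : R2 → Matrix (Fin 2) (Fin 2) ℝ}
    (hu : MemW11 Ω u G) (hA : A ⊆ Ω) {φ : R2 → ℝ}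
    (hφ : ContDiff ℝ (⊤ : ℕ∞) φ) (hφc : HasCompactSupport φ) (hφs : tsupport φ ⊆ A) (j : Fin 2) :
    ∫ x in A, pd j φ x • toC (u x) = - ∫ x in A, φ x • Gc G j x := by
  have h := weak_C hu hφ hφc (hφs.trans hA) j
  have a1 : ∀ (S : Set R2), A ⊆ S → ∀ x, x ∉ S → x ∉ tsupport φ := fun S hS x hx h => hx (hS (hφs h))
  rw [setIntegral_eq_integral_of_forall_compl_eq_zero, setIntegral_eq_integral_of_forall_compl_eq_zero] at h ⊢
  · exact h
  all_goals
    intro x hx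
    first
    | rw [image_eq_zero_of_notMem_tsupport (a1 A subset_rfl x hx), zero_smul]
    | rw [tsupport_pd j (a1 A subset_rfl x hx), zero_smul]
    | rw [image_eq_zero_of_notMem_tsupport (a1 _ hA x hx), zero_smul]
    | rw [tsupport_pd j (a1 _ hA x hx), zero_smul]

lemma subseq_ae {X E : Type*} [MeasurableSpace X] [NormedAddCommGroup E] {μ : Measure X}
    {f : ℕ → X → E} {g : X → E}
    (hf : Tendsto (fun n => ∫⁻ x, ‖f n x - g x‖ₑ ∂μ) atTop (𝓝 0))
    (hfm : ∀ n, AEStronglyMeasurable (f n) μ) (hg : AEStronglyMeasurable g μ) :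
    ∃ ns : ℕ → ℕ, StrictMono ns ∧ ∀ᵐ x ∂μ, Tendsto (fun n => f (ns n) x) atTop (𝓝 (g x)) := by
  refine (tendstoInMeasure_of_tendsto_eLpNorm one_ne_zero hfm hg ?_).exists_seq_tendsto_ae
  simpa [eLpNorm_one_eq_lintegral_enorm] using hf

lemma weak_unique {Ω : Set R2} (hΩo : IsOpen Ω) {u : R2 → R2} {G : R2 → Matrix (Fin 2) (Fin 2) ℝ}
    (hu : MemW11 Ω u G) {V : ℕ → R2 → ℂ} (hV : ∀ n, ContDiff ℝ 1 (V n)) {j : Fin 2} {H : R2 → ℂ}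
    (hH : IntegrableOn H Ω)
    (hVi : ∀ n, IntegrableOn (V n) Ω) (hVi' : ∀ n, IntegrableOn (pd j (V n)) Ω)
    (h1 : Tendsto (fun n => ∫⁻ x in Ω, ‖V n x - toC (u x)‖ₑ) atTop (𝓝 0))
    (h2 : Tendsto (fun n => ∫⁻ x in Ω, ‖pd j (V n) x - H x‖ₑ) atTop (𝓝 0)) :
    ∀ᵐ x ∂(volume.restrict Ω), H x = Gc G j x := by
  have hd : IntegrableOn (fun x => H x - Gc G j x) Ω := hH.sub (Gc_integrable hu j)
  have := hΩo.ae_eq_zero_of_integral_contDiff_smul_eq_zero (μ := volume)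
    (f := fun x => H x - Gc G j x) hd.locallyIntegrableOn ?_
  · rw [ae_restrict_iff' hΩo.measurableSet]
    filter_upwards [this] with x hx hxΩ
    exact sub_eq_zero.1 (hx hxΩ)
  · intro φ hφ hφc hφs
    obtain ⟨c1, c2, K, hK⟩ := test_bound hφ hφc j
    have t1 := tendsto_test (uc_integrable hu) hVi h1 c2 fun x => (hK x).2
    have t2 := tendsto_test hH hVi' h2 c1 fun x => (hK x).1
    have e : ∀ n, ∫ x in Ω, pd j φ x • V n x = - ∫ x in Ω, φ x • pd j (V n) x := fun n =>
      ibp hΩo (hV n).contDiffOn hφ hφc hφs j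
    simp_rw [e] at t1
    have e2 := tendsto_nhds_unique t1 t2.neg
    rw [weak_C hu hφ hφc hφs j, neg_inj] at e2
    rw [← setIntegral_eq_integral_of_forall_compl_eq_zero (s := Ω)]
    · simp_rw [smul_sub]
      rw [integral_sub, e2, sub_self]
      · exact int_smul hH c1 fun x => (hK x).1
      · exact int_smul (Gc_integrable hu j) c1 fun x => (hK x).1
    · intro x hx
      rw [image_eq_zero_of_notMem_tsupport (fun h => hx (hφs h)), zero_smul]

lemma pd_continuous {E : Type*} [NormedAddCommGroup E] [NormedSpace ℝ E] {f : R2 → E}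
    (hf : ContDiff ℝ 1 f) (j : Fin 2) : Continuous (pd j f) :=
  (hf.continuous_fderiv (by simp)).clm_apply continuous_const

lemma cont_integrable {E : Type*} [NormedAddCommGroup E] {Ω : Set R2}
    (hΩb : Bornology.IsBounded Ω) {f : R2 → E} (hf : Continuous f) : IntegrableOn f Ω :=
  (hf.continuousOn.integrableOn_compact hΩb.isCompact_closure).mono_set subset_closure

lemma approx0 {Ω : Set R2} (hΩo : IsOpen Ω) (hΩb : Bornology.IsBounded Ω)
    (hΩl : HasLipschitzBoundary Ω) {u : R2 → R2} {G : R2 → Matrix (Fin 2) (Fin 2) ℝ}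
    (hu : MemW11 Ω u G) : ∃ U : ℕ → R2 → ℂ, (∀ n, ContDiff ℝ 1 (U n)) ∧
      (∀ᵐ x ∂(volume.restrict Ω), Tendsto (fun n => U n x) atTop (𝓝 (toC (u x)))) ∧
      ∀ j, Tendsto (fun n => ∫⁻ x in Ω, ‖pd j (U n) x - Gc G j x‖ₑ) atTop (𝓝 0) := by
  have key : ∀ (i : Fin 2) (n : ℕ), ∃ B : R2 → ℝ, ContDiff ℝ 1 B ∧
      ∫⁻ x in Ω, ‖B x - u x i‖ₑ ≤ (n + 1 : ℝ≥0∞)⁻¹ ∧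
      ∀ j, ∫⁻ x in Ω, ‖pd j B x - G x i j‖ₑ ≤ (n + 1 : ℝ≥0∞)⁻¹ := fun i n =>
    density_scalar hΩo hΩb hΩl (fun x => u x i) (fun j x => G x i j) (coord_integrable hu i)
      (fun j => hu.2.1 i j) (fun φ h1 h2 h3 j => hu.2.2 φ h1 h2 h3 i j)
      (ε := (n + 1 : ℝ≥0∞)⁻¹) (ENNReal.inv_ne_zero.2 (by finiteness))
  choose B hB1 hB2 hB3 using key
  have hlim : Tendsto (fun n : ℕ => (n + 1 : ℝ≥0∞)⁻¹) atTop (𝓝 0) := by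
    have := (tendsto_add_atTop_iff_nat 1).2 ENNReal.tendsto_inv_nat_nhds_zero
    simpa using this
  have hlim2 : Tendsto (fun n : ℕ => (n + 1 : ℝ≥0∞)⁻¹ + (n + 1 : ℝ≥0∞)⁻¹) atTop (𝓝 0) := by
    simpa using hlim.add hlim
  let U : ℕ → R2 → ℂ := fun n x => (B 0 n x : ℂ) + (B 1 n x : ℂ) * Complex.I
  have hU : ∀ n, ContDiff ℝ 1 (U n) := fun n =>
    (Complex.ofRealCLM.contDiff.comp (hB1 0 n)).add
      ((Complex.ofRealCLM.contDiff.comp (hB1 1 n)).mul contDiff_const)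
  have hpd : ∀ n j x, pd j (U n) x = ((pd j (B 0 n) x : ℝ) : ℂ) + ((pd j (B 1 n) x : ℝ) : ℂ) * Complex.I := by
    intro n j x
    have d : ∀ i, HasFDerivAt (fun x => (B i n x : ℂ))
        (Complex.ofRealCLM.comp (fderiv ℝ (B i n) x)) x := fun i =>
      Complex.ofRealCLM.hasFDerivAt.comp x
        ((hB1 i n).differentiable (by simp) x).hasFDerivAt
    have := (d 0).add ((d 1).mul_const Complex.I)
    unfold pd
    have e := this.fderiv
    change fderiv ℝ (U n) x = _ at e
    rw [e]
    simp [mul_comm]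
  have bound : ∀ (a b c d : ℝ), ‖((a : ℂ) + (b : ℂ) * Complex.I) - ((c : ℂ) + (d : ℂ) * Complex.I)‖ₑ
      ≤ ‖a - c‖ₑ + ‖b - d‖ₑ := by
    intro a b c d
    have : ((a : ℂ) + (b : ℂ) * Complex.I) - ((c : ℂ) + (d : ℂ) * Complex.I) =
      ((a - c : ℝ) : ℂ) + ((b - d : ℝ) : ℂ) * Complex.I := by push_cast; ring
    rw [this]
    refine (enorm_add_le _ _).trans (le_of_eq ?_)
    have q : ∀ r : ℝ, ‖(r : ℂ)‖ₑ = ‖r‖ₑ := fun r => by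
      rw [← ofReal_norm, ← ofReal_norm, Complex.norm_real]
    have qI : ‖Complex.I‖ₑ = 1 := by rw [← ofReal_norm]; simp
    rw [enorm_mul, q, q, qI, mul_one]
  have hL : Tendsto (fun n => ∫⁻ x in Ω, ‖U n x - toC (u x)‖ₑ) atTop (𝓝 0) := by
    refine tendsto_of_tendsto_of_tendsto_of_le_of_le tendsto_const_nhds hlim2 (fun _ => bot_le)
      fun n => ?_
    refine le_trans ?_ (add_le_add (hB2 0 n) (hB2 1 n))
    rw [← lintegral_add_left']
    · refine lintegral_mono fun x => ?_
      rw [toC_eq]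
      exact bound _ _ _ _
    · exact ((hB1 0 n).continuous.aestronglyMeasurable.sub
        (coord_integrable hu 0).aestronglyMeasurable).enorm
  obtain ⟨ns, hns, hae⟩ := subseq_ae hL (fun n => (hU n).continuous.aestronglyMeasurable)
    (uc_integrable hu).aestronglyMeasurable
  refine ⟨fun n => U (ns n), fun n => hU _, hae, fun j => ?_⟩
  have : Tendsto (fun n => ∫⁻ x in Ω, ‖pd j (U n) x - Gc G j x‖ₑ) atTop (𝓝 0) := by
    refine tendsto_of_tendsto_of_tendsto_of_le_of_le tendsto_const_nhds hlim2 (fun _ => bot_le)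
      fun n => ?_
    refine le_trans ?_ (add_le_add (hB3 0 n j) (hB3 1 n j))
    rw [← lintegral_add_left']
    · refine lintegral_mono fun x => ?_
      rw [Gc_eq, hpd]
      exact bound _ _ _ _
    · exact ((pd_continuous (hB1 0 n) j).aestronglyMeasurable.sub
        (hu.2.1 0 j).aestronglyMeasurable).enorm
  exact this.comp hns.tendsto_atTop


/-! ### Calculus with complex valued maps; normalized approximation -/


lemma cda_conj {f : R2 → ℂ} {x : R2} (hf : ContDiffAt ℝ 1 f x) :
    ContDiffAt ℝ 1 (fun y => cj (f y)) x :=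
  Complex.conjCLE.contDiff.contDiffAt.comp x hf

lemma ContDiffAt.dif {E : Type*} [NormedAddCommGroup E] [NormedSpace ℝ E] {f : R2 → E} {x : R2}
    (hf : ContDiffAt ℝ 1 f x) : DifferentiableAt ℝ f x :=
  hf.differentiableAt (by simp)

lemma pd_mulC (j : Fin 2) {f g : R2 → ℂ} {x : R2} (hf : ContDiffAt ℝ 1 f x)
    (hg : ContDiffAt ℝ 1 g x) :
    pd j (fun y => f y * g y) x = pd j f x * g x + f x * pd j g x := by
  unfold pd
  rw [(hf.dif.hasFDerivAt.fun_mul hg.dif.hasFDerivAt).fderiv]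
  simp
  ring

lemma pd_addC (j : Fin 2) {f g : R2 → ℂ} {x : R2} (hf : ContDiffAt ℝ 1 f x)
    (hg : ContDiffAt ℝ 1 g x) :
    pd j (fun y => f y + g y) x = pd j f x + pd j g x := by
  unfold pd
  rw [(hf.dif.hasFDerivAt.fun_add hg.dif.hasFDerivAt).fderiv]
  simp

lemma pd_constC (j : Fin 2) (c : ℂ) (x : R2) : pd j (fun _ => c) x = 0 := by
  simp [pd]

lemma pd_conj (j : Fin 2) {f : R2 → ℂ} {x : R2} (hf : ContDiffAt ℝ 1 f x) :
    pd j (fun y => cj (f y)) x = cj (pd j f x) := by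
  unfold pd
  have := (Complex.conjCLE.hasFDerivAt (x := f x)).comp x hf.dif.hasFDerivAt
  have e := this.fderiv
  change fderiv ℝ (fun y => cj (f y)) x = _ at e
  rw [e]
  simp

lemma pd_invC (j : Fin 2) {f : R2 → ℂ} {x : R2} (hf : ContDiffAt ℝ 1 f x) (h0 : f x ≠ 0) :
    pd j (fun y => (f y)⁻¹) x = - pd j f x / (f x) ^ 2 := by
  have h1 : ContDiffAt ℝ 1 (fun y => (f y)⁻¹) x := hf.inv h0
  have h2 := pd_mulC j hf h1
  have h3 : (fun y => f y * (f y)⁻¹) =ᶠ[𝓝 x] fun _ => 1 := by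
    filter_upwards [hf.continuousAt.eventually_ne h0] with y hy
    exact mul_inv_cancel₀ hy
  have h4 : pd j (fun y => f y * (f y)⁻¹) x = 0 := by
    unfold pd
    rw [h3.fderiv_eq]
    simp
  rw [h4] at h2
  field_simp at h2 ⊢
  linear_combination - h2

lemma den_eq (z : ℂ) : 1 + z * cj z = ((1 + ‖z‖ ^ 2 : ℝ) : ℂ) := by
  rw [Complex.mul_conj, Complex.normSq_eq_norm_sq]
  push_cast
  ring

lemma den_ne (z : ℂ) : 1 + z * cj z ≠ 0 := by
  rw [den_eq]
  have : (0 : ℝ) < 1 + ‖z‖ ^ 2 := by positivity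
  exact_mod_cast this.ne'

/-- Smooth map onto the unit disc, equal to the identity on the unit circle. -/
def TT (z : ℂ) : ℂ := 2 * z * (1 + z * cj z)⁻¹

def TA (z : ℂ) : ℂ := 2 * (1 + z * cj z)⁻¹ - 2 * (z * cj z) * ((1 + z * cj z)⁻¹) ^ 2

def TB (z : ℂ) : ℂ := - 2 * z ^ 2 * ((1 + z * cj z)⁻¹) ^ 2

lemma den_norm (z : ℂ) : ‖(1 + z * cj z)⁻¹‖ = (1 + ‖z‖ ^ 2)⁻¹ := by
  rw [den_eq, norm_inv, Complex.norm_real, Real.norm_of_nonneg (by positivity)]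

lemma TT_norm (z : ℂ) : ‖TT z‖ ≤ 1 := by
  unfold TT
  rw [norm_mul, den_norm, norm_mul]
  simp only [Complex.norm_ofNat]
  rw [← div_eq_mul_inv, div_le_one (by positivity)]
  nlinarith [sq_nonneg (‖z‖ - 1)]

lemma TA_norm (z : ℂ) : ‖TA z‖ ≤ 4 := by
  unfold TA
  refine (norm_sub_le _ _).trans ?_
  rw [norm_mul, norm_mul, norm_mul, norm_pow, den_norm, norm_mul]
  simp only [Complex.norm_ofNat, RCLike.norm_conj]
  set r := ‖z‖
  have h1 : (1 + r ^ 2)⁻¹ ≤ 1 := inv_le_one_of_one_le₀ (by nlinarith [sq_nonneg r])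
  have h0 : 0 ≤ (1 + r ^ 2)⁻¹ := by positivity
  have h2 : r * r * (1 + r ^ 2)⁻¹ ≤ 1 := by
    rw [← div_eq_mul_inv, div_le_one (by positivity)]
    nlinarith
  have h3 : (r * r * (1 + r ^ 2)⁻¹) * (1 + r ^ 2)⁻¹ ≤ 1 * 1 := by
    gcongr
  nlinarith

lemma TB_norm (z : ℂ) : ‖TB z‖ ≤ 4 := by
  unfold TB
  rw [norm_mul, norm_mul, norm_pow, norm_pow, den_norm, norm_neg]
  simp only [Complex.norm_ofNat]
  set r := ‖z‖
  have h1 : (1 + r ^ 2)⁻¹ ≤ 1 := inv_le_one_of_one_le₀ (by nlinarith [sq_nonneg r])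
  have h0 : 0 ≤ (1 + r ^ 2)⁻¹ := by positivity
  have h2 : r * r * (1 + r ^ 2)⁻¹ ≤ 1 := by
    rw [← div_eq_mul_inv, div_le_one (by positivity)]
    nlinarith
  have h3 : (r * r * (1 + r ^ 2)⁻¹) * (1 + r ^ 2)⁻¹ ≤ 1 * 1 := by
    gcongr
  nlinarith

lemma den_cont : Continuous fun z : ℂ => (1 + z * cj z)⁻¹ :=
  Continuous.inv₀ (by fun_prop) den_ne

lemma TA_cont : Continuous TA := by
  unfold TA
  have := den_cont
  fun_prop

lemma TB_cont : Continuous TB := by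
  unfold TB
  have := den_cont
  fun_prop

lemma TT_cont : Continuous TT := by
  unfold TT
  have := den_cont
  fun_prop

lemma TT_contDiff {f : R2 → ℂ} (hf : ContDiff ℝ 1 f) : ContDiff ℝ 1 fun x => TT (f x) := by
  rw [contDiff_iff_contDiffAt] at hf ⊢
  intro x
  exact (contDiffAt_const.mul (hf x)).mul
    ((contDiffAt_const.add ((hf x).mul (cda_conj (hf x)))).inv (den_ne _))

lemma pd_TT (j : Fin 2) {f : R2 → ℂ} {x : R2} (hf : ContDiffAt ℝ 1 f x) :
    pd j (fun y => TT (f y)) x = TA (f x) * pd j f x + TB (f x) * cj (pd j f x) := by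
  have c1 : ContDiffAt ℝ 1 (fun y => 2 * f y) x := contDiffAt_const.mul hf
  have c2 : ContDiffAt ℝ 1 (fun y => f y * cj (f y)) x := hf.mul (cda_conj hf)
  have c3 : ContDiffAt ℝ 1 (fun y => 1 + f y * cj (f y)) x := contDiffAt_const.add c2
  have c4 : ContDiffAt ℝ 1 (fun y => (1 + f y * cj (f y))⁻¹) x := c3.inv (den_ne _)
  unfold TT TA TB
  rw [pd_mulC j c1 c4, pd_mulC j contDiffAt_const hf, pd_invC j c3 (den_ne _),
    pd_addC j contDiffAt_const c2, pd_mulC j hf (cda_conj hf), pd_conj j hf, pd_constC, pd_constC]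
  have := den_ne (f x)
  field_simp
  ring

lemma TT_unit {z : ℂ} (hz : ‖z‖ = 1) : TT z = z ∧ TA z = 1 / 2 ∧ TB z = - z ^ 2 / 2 := by
  have h : z * cj z = 1 := by
    rw [Complex.mul_conj, Complex.normSq_eq_norm_sq, hz]
    simp
  unfold TT TA TB
  rw [h]
  refine ⟨?_, ?_, ?_⟩ <;> ring

lemma approx1 {Ω : Set R2} (hΩo : IsOpen Ω) (hΩb : Bornology.IsBounded Ω)
    (hΩl : HasLipschitzBoundary Ω) {u : R2 → R2} {G : R2 → Matrix (Fin 2) (Fin 2) ℝ}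
    (hu : MemW11 Ω u G) (hS : SphereValued Ω u) :
    ∃ U : ℕ → R2 → ℂ, (∀ n, ContDiff ℝ 1 (U n)) ∧ (∀ n x, ‖U n x‖ ≤ 1) ∧
      (∀ᵐ x ∂(volume.restrict Ω), Tendsto (fun n => U n x) atTop (𝓝 (toC (u x)))) ∧
      (∀ j, Tendsto (fun n => ∫⁻ x in Ω, ‖pd j (U n) x - Gc G j x‖ₑ) atTop (𝓝 0)) ∧
      ∀ j, ∀ᵐ x ∂(volume.restrict Ω), Gc G j x = - (toC (u x)) ^ 2 * cj (Gc G j x) := by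
  obtain ⟨U, hU, hae, hL⟩ := approx0 hΩo hΩb hΩl hu
  have hS' : ∀ᵐ x ∂(volume.restrict Ω), ‖toC (u x)‖ = 1 := by
    filter_upwards [hS] with x hx
    rw [LinearIsometryEquiv.norm_map, hx]
  have hV : ∀ n, ContDiff ℝ 1 fun x => TT (U n x) := fun n => TT_contDiff (hU n)
  have hVae : ∀ᵐ x ∂(volume.restrict Ω), Tendsto (fun n => TT (U n x)) atTop (𝓝 (toC (u x))) := by
    filter_upwards [hae, hS'] with x hx hx1
    have := (TT_cont.tendsto (toC (u x))).comp hx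
    rwa [(TT_unit hx1).1] at this
  have hfin : volume Ω ≠ ⊤ := hΩb.measure_lt_top.ne
  have hVL : Tendsto (fun n => ∫⁻ x in Ω, ‖TT (U n x) - toC (u x)‖ₑ) atTop (𝓝 0) := by
    have := tendsto_lintegral_of_dominated_convergence' (μ := volume.restrict Ω)
      (F := fun n x => ‖TT (U n x) - toC (u x)‖ₑ) (f := fun _ => 0) (fun _ => 2) ?_ ?_ ?_ ?_
    · simpa using this
    · exact fun n => ((hV n).continuous.aestronglyMeasurable.sub
        (uc_integrable hu).aestronglyMeasurable).enorm
    · intro n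
      filter_upwards [hS'] with x hx
      rw [← ofReal_norm]
      refine ENNReal.ofReal_le_of_le_toReal ?_
      simp only [ENNReal.toReal_ofNat]
      linarith [norm_sub_le (TT (U n x)) (toC (u x)), TT_norm (U n x)]
    · simpa using ENNReal.mul_ne_top (by simp) hfin
    · filter_upwards [hVae] with x hx
      simpa using (hx.sub_const (toC (u x))).enorm
  let H : Fin 2 → R2 → ℂ := fun j x =>
    (1 / 2) * Gc G j x + (- (toC (u x)) ^ 2 / 2) * cj (Gc G j x)
  have hVd : ∀ j, Tendsto (fun n => ∫⁻ x in Ω, ‖pd j (fun x => TT (U n x)) x - H j x‖ₑ)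
      atTop (𝓝 0) := by
    intro j
    have m1 : ∀ n, AEStronglyMeasurable (pd j (U n)) (volume.restrict Ω) := fun n =>
      (pd_continuous (hU n) j).aestronglyMeasurable
    have t1 := tool_mul (M := fun n x => TA (U n x)) (N := fun _ => 1 / 2) (K := 4) (hL j)
      (Gc_integrable hu j) m1 (fun n => Eventually.of_forall fun x => TA_norm _)
      (fun n => (TA_cont.comp (hU n).continuous).aestronglyMeasurable) (by
        filter_upwards [hae, hS'] with x hx hx1 _
        have := (TA_cont.tendsto (toC (u x))).comp hx
        rwa [(TT_unit hx1).2.1] at this)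
    have t2 := tool_mul (M := fun n x => TB (U n x)) (N := fun x => - (toC (u x)) ^ 2 / 2) (K := 4)
      (tool_conj (hL j)) (Complex.conjCLE.toContinuousLinearMap.integrable_comp (Gc_integrable hu j))
      (fun n => (Complex.continuous_conj.comp (pd_continuous (hU n) j)).aestronglyMeasurable)
      (fun n => Eventually.of_forall fun x => TB_norm _)
      (fun n => (TB_cont.comp (hU n).continuous).aestronglyMeasurable) (by
        filter_upwards [hae, hS'] with x hx hx1 _
        have := (TB_cont.tendsto (toC (u x))).comp hx
        rwa [(TT_unit hx1).2.2] at this)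
    refine (tool_add t1 t2 fun n => ?_).congr fun n => ?_
    · exact ((TA_cont.comp (hU n).continuous).aestronglyMeasurable.mul (m1 n)).sub
        ((Gc_integrable hu j).aestronglyMeasurable.const_mul _)
    · refine lintegral_congr fun x => ?_
      rw [pd_TT j (hU n).contDiffAt]
  have hH : ∀ j, IntegrableOn (H j) Ω := fun j => by
    refine ((Gc_integrable hu j).const_mul _).add ?_
    refine Integrable.bdd_mul (c := 1)
      (Complex.conjCLE.toContinuousLinearMap.integrable_comp (Gc_integrable hu j)) ?_ ?_
    · exact (((uc_integrable hu).aestronglyMeasurable.pow 2).neg).mul_const (2 : ℂ)⁻¹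
    · filter_upwards [hS'] with x hx
      rw [norm_div, norm_neg, norm_pow, hx]
      norm_num
  have hHG : ∀ j, ∀ᵐ x ∂(volume.restrict Ω), H j x = Gc G j x := fun j =>
    weak_unique hΩo hu hV (hH j) (fun n => cont_integrable hΩb (hV n).continuous)
      (fun n => cont_integrable hΩb (pd_continuous (hV n) j)) hVL (hVd j)
  refine ⟨fun n x => TT (U n x), hV, fun n x => TT_norm _, hVae, fun j => ?_, fun j => ?_⟩
  · refine (hVd j).congr fun n => lintegral_congr_ae ?_
    filter_upwards [hHG j] with x hx
    rw [hx]
  · filter_upwards [hHG j] with x hx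
    have : H j x = (1 / 2) * Gc G j x + (- (toC (u x)) ^ 2 / 2) * cj (Gc G j x) := rfl
    rw [this] at hx
    linear_combination (-2 : ℂ) * hx


/-! ### Lower bound -/

lemma toC_symm_apply (z : ℂ) : toC.symm z 0 = z.re ∧ toC.symm z 1 = z.im := by
  have h := toC_apply (toC.symm z)
  rw [LinearIsometryEquiv.apply_symm_apply] at h
  exact ⟨(congrArg Complex.re h).symm, (congrArg Complex.im h).symm⟩

lemma pd_toC (j : Fin 2) {v : R2 → R2} {x : R2} (hv : ContDiffAt ℝ 1 v x) :
    pd j (fun y => toC (v y)) x = toC (pd j v x) := by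
  unfold pd
  have := (toC.toContinuousLinearEquiv.hasFDerivAt (x := v x)).comp x hv.dif.hasFDerivAt
  have e := this.fderiv
  change fderiv ℝ (fun y => toC (v y)) x = _ at e
  rw [e]
  simp

lemma jac_eq (i j : Fin 2) (v : R2 → R2) (x : R2) : jacobianMatrix v x i j = pd j v x i := rfl

lemma frob_eq {v : R2 → R2} {x : R2} (hv : ContDiffAt ℝ 1 v x) :
    ∑ i, ∑ j, (jacobianMatrix v x i j) ^ 2 =
      ‖pd 0 (fun y => toC (v y)) x‖ ^ 2 + ‖pd 1 (fun y => toC (v y)) x‖ ^ 2 := by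
  rw [pd_toC 0 hv, pd_toC 1 hv]
  simp only [jac_eq, Fin.sum_univ_two, LinearIsometryEquiv.norm_map, EuclideanSpace.norm_sq_eq,
    Real.norm_eq_abs, sq_abs]
  ring

lemma det_eq {v : R2 → R2} {x : R2} (hv : ContDiffAt ℝ 1 v x) :
    (jacobianMatrix v x).det =
      (cj (pd 0 (fun y => toC (v y)) x) * pd 1 (fun y => toC (v y)) x).im := by
  rw [pd_toC 0 hv, pd_toC 1 hv, Matrix.det_fin_two, toC_apply, toC_apply]
  simp only [jac_eq, Complex.mul_im, Complex.conj_re, Complex.conj_im]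
  ring

/-- Area integrand without the Jacobian term. -/
def ar (p q : ℂ) : ℝ := Real.sqrt (1 + ‖p‖ ^ 2 + ‖q‖ ^ 2)

lemma area_ge {A : Set R2} (hA : IsOpen A) {v : R2 → R2} (hv : ContDiffOn ℝ 1 v A) :
    ∫⁻ x in A, ENNReal.ofReal (ar (pd 0 (fun y => toC (v y)) x) (pd 1 (fun y => toC (v y)) x)) ≤
      classicalArea A v := by
  unfold classicalArea ar
  refine setLIntegral_mono' hA.measurableSet fun x hx => ?_
  refine ENNReal.ofReal_le_ofReal (Real.sqrt_le_sqrt ?_)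
  rw [frob_eq (hv.contDiffAt (hA.mem_nhds hx))]
  nlinarith [sq_nonneg (jacobianMatrix v x).det]

/-- Target space of the test fields. -/
abbrev FF := PiLp 2 (fun _ : Fin 3 => ℂ)

def vec (p q : ℂ) : FF := WithLp.toLp 2 ![1, p, q]

lemma vec_norm (p q : ℂ) : ‖vec p q‖ = ar p q := by
  rw [PiLp.norm_eq_of_L2]
  simp [vec, Fin.sum_univ_three, ar]

lemma vec_inner (f : FF) (p q : ℂ) : inner ℝ f (vec p q) =
    (f 0).re + ((f 1).re * p.re + (f 1).im * p.im) + ((f 2).re * q.re + (f 2).im * q.im) := by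
  rw [PiLp.inner_apply]
  simp [vec, Fin.sum_univ_three, Complex.inner]
  ring

lemma test_pair_int {E : Type*} [NormedAddCommGroup E] [NormedSpace ℝ E] {A : Set R2}
    {g : R2 → E} (hg : ContinuousOn g A) {φ : R2 → ℝ} (hφ : Continuous φ)
    (hφc : HasCompactSupport φ) (hφs : tsupport φ ⊆ A) :
    IntegrableOn (fun x => φ x • g x) A := by
  have h1 : IntegrableOn (fun x => φ x • g x) (tsupport φ) :=
    (hφ.continuousOn.smul (hg.mono hφs)).integrableOn_compact hφc.isCompact
  have h2 : Integrable (fun x => φ x • g x) volume := by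
    refine h1.integrable_of_forall_notMem_eq_zero fun x hx => ?_
    rw [image_eq_zero_of_notMem_tsupport hx, zero_smul]
  exact h2.integrableOn

lemma ofReal_integral_le {X : Type*} [MeasurableSpace X] {μ : Measure X} (f : X → ℝ) :
    ENNReal.ofReal (∫ x, f x ∂μ) ≤ ∫⁻ x, ENNReal.ofReal (f x) ∂μ := by
  by_cases hf : Integrable f μ
  · rw [integral_eq_lintegral_pos_part_sub_lintegral_neg_part hf]
    refine (ENNReal.ofReal_le_ofReal (sub_le_self _ ENNReal.toReal_nonneg)).trans ?_
    exact ENNReal.ofReal_toReal_le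
  · rw [integral_undef hf]
    simp

lemma pd_contOn {E : Type*} [NormedAddCommGroup E] [NormedSpace ℝ E] {A : Set R2} (hA : IsOpen A)
    {f : R2 → E} (hf : ContDiffOn ℝ 1 f A) (j : Fin 2) : ContinuousOn (pd j f) A :=
  (hf.continuousOn_fderiv_of_isOpen hA le_rfl).clm_apply continuousOn_const

lemma lower_test {Ω A : Set R2} (hA : IsOpen A) (hAΩ : A ⊆ Ω) {u : R2 → R2}
    {G : R2 → Matrix (Fin 2) (Fin 2) ℝ} (hu : MemW11 Ω u G)
    {φ : R2 → FF} (hφ : ContDiff ℝ (⊤ : ℕ∞) φ) (hφc : HasCompactSupport φ) (hφs : tsupport φ ⊆ A)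
    (hφ1 : ∀ x, ‖φ x‖ ≤ 1) :
    ENNReal.ofReal (∫ x in A, inner ℝ (φ x) (vec (Gc G 0 x) (Gc G 1 x))) ≤ relaxedArea u A := by
  refine le_sInf ?_
  rintro a ⟨v, hv, hvi, hlim, rfl⟩
  have hvc : ∀ k, ContDiffOn ℝ 1 (fun x => toC (v k x)) A := fun k =>
    toC.toContinuousLinearEquiv.contDiff.comp_contDiffOn (hv k)
  have hui : IntegrableOn (fun x => toC (u x)) A := (uc_integrable hu).mono_set hAΩ
  have hvci : ∀ k, IntegrableOn (fun x => toC (v k x)) A := fun k => by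
    have := (toC.toContinuousLinearEquiv.toContinuousLinearMap.integrable_comp (hvi k)).add hui
    refine this.congr (Eventually.of_forall fun x => ?_)
    simp
  have hL : Tendsto (fun k => ∫⁻ x in A, ‖toC (v k x) - toC (u x)‖ₑ) atTop (𝓝 0) := by
    have h1 : ∀ k, ∫⁻ x in A, ‖toC (v k x) - toC (u x)‖ₑ =
        ENNReal.ofReal (∫ x in A, ‖v k x - u x‖) := fun k => by
      rw [ofReal_integral_norm_eq_lintegral_enorm (hvi k)]
      refine lintegral_congr fun x => ?_
      rw [← map_sub, ← ofReal_norm, ← ofReal_norm, LinearIsometryEquiv.norm_map]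
    simp_rw [h1]
    simpa using ENNReal.tendsto_ofReal hlim
  -- scalar test functions
  have scal : ∀ (ψ : R2 → ℝ), ContDiff ℝ (⊤ : ℕ∞) ψ → HasCompactSupport ψ → tsupport ψ ⊆ A →
      ∀ j, Tendsto (fun k => ∫ x in A, ψ x • pd j (fun y => toC (v k y)) x) atTop
        (𝓝 (∫ x in A, ψ x • Gc G j x)) := by
    intro ψ h1 h2 h3 j
    obtain ⟨c1, c2, K, hK⟩ := test_bound h1 h2 j
    have t := tendsto_test hui hvci hL c2 fun x => (hK x).2
    simp_rw [fun k => ibp hA (hvc k) h1 h2 h3 j, weak_C' hu hAΩ h1 h2 h3 j] at t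
    simpa using t.neg
  let re : Fin 3 → R2 → ℝ := fun i x => (φ x i).re
  let im : Fin 3 → R2 → ℝ := fun i x => (φ x i).im
  have hpr : ∀ i, ContDiff ℝ (⊤ : ℕ∞) (fun x => φ x i) := fun i =>
    (PiLp.proj (𝕜 := ℝ) 2 (fun _ : Fin 3 => ℂ) i).contDiff.comp hφ
  have hre : ∀ i, ContDiff ℝ (⊤ : ℕ∞) (re i) := fun i => Complex.reCLM.contDiff.comp (hpr i)
  have him : ∀ i, ContDiff ℝ (⊤ : ℕ∞) (im i) := fun i => Complex.imCLM.contDiff.comp (hpr i)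
  have hrs : ∀ i, tsupport (re i) ⊆ tsupport φ := fun i =>
    closure_mono fun x hx h => hx (by simp only [re]; rw [h]; simp)
  have his : ∀ i, tsupport (im i) ⊆ tsupport φ := fun i =>
    closure_mono fun x hx h => hx (by simp only [im]; rw [h]; simp)
  have hrc : ∀ i, HasCompactSupport (re i) := fun i => hφc.of_isClosed_subset (isClosed_tsupport _) (hrs i)
  have hic : ∀ i, HasCompactSupport (im i) := fun i => hφc.of_isClosed_subset (isClosed_tsupport _) (his i)
  -- the integral of the pairing
  have pair : ∀ (p : Fin 2 → R2 → ℂ),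
      (∀ i j, IntegrableOn (fun x => re i x • p j x) A) →
      (∀ i j, IntegrableOn (fun x => im i x • p j x) A) →
      ∫ x in A, inner ℝ (φ x) (vec (p 0 x) (p 1 x)) =
        (∫ x in A, re 0 x) + ((∫ x in A, re 1 x • p 0 x).re + (∫ x in A, im 1 x • p 0 x).im) +
        ((∫ x in A, re 2 x • p 1 x).re + (∫ x in A, im 2 x • p 1 x).im) := by
    intro p h1 h2
    have r : ∀ g : R2 → ℂ, IntegrableOn g A → (∫ x in A, g x).re = ∫ x in A, (g x).re :=
      fun g hg => (Complex.reCLM.integral_comp_comm hg).symm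
    have i : ∀ g : R2 → ℂ, IntegrableOn g A → (∫ x in A, g x).im = ∫ x in A, (g x).im :=
      fun g hg => (Complex.imCLM.integral_comp_comm hg).symm
    have ri : ∀ g : R2 → ℂ, IntegrableOn g A → IntegrableOn (fun x => (g x).re) A :=
      fun g hg => Complex.reCLM.integrable_comp hg
    have ii : ∀ g : R2 → ℂ, IntegrableOn g A → IntegrableOn (fun x => (g x).im) A :=
      fun g hg => Complex.imCLM.integrable_comp hg
    rw [r _ (h1 1 0), r _ (h1 2 1), i _ (h2 1 0), i _ (h2 2 1)]
    have i0 : IntegrableOn (re 0) A :=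
      ((hre 0).continuous.integrable_of_hasCompactSupport (hrc 0)).integrableOn
    have k1 := ri _ (h1 1 0)
    have k2 := ii _ (h2 1 0)
    have k3 := ri _ (h1 2 1)
    have k4 := ii _ (h2 2 1)
    have k12 : IntegrableOn (fun x => (re 1 x • p 0 x).re + (im 1 x • p 0 x).im) A := k1.add k2
    have k34 : IntegrableOn (fun x => (re 2 x • p 1 x).re + (im 2 x • p 1 x).im) A := k3.add k4
    have k012 : IntegrableOn (fun x => re 0 x + ((re 1 x • p 0 x).re + (im 1 x • p 0 x).im)) A :=
      i0.add k12
    rw [← integral_add k1 k2, ← integral_add k3 k4, ← integral_add i0 k12, ← integral_add k012 k34]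
    refine integral_congr_ae (Eventually.of_forall fun x => ?_)
    simp only [vec_inner, re, im, Complex.smul_re, Complex.smul_im, smul_eq_mul]
  have lim : Tendsto (fun k => ∫ x in A, inner ℝ (φ x)
      (vec (pd 0 (fun y => toC (v k y)) x) (pd 1 (fun y => toC (v k y)) x))) atTop
      (𝓝 (∫ x in A, inner ℝ (φ x) (vec (Gc G 0 x) (Gc G 1 x)))) := by
    have hG : ∀ j, IntegrableOn (Gc G j) A := fun j => (Gc_integrable hu j).mono_set hAΩ
    have b : ∀ (ψ : R2 → ℝ), ContDiff ℝ (⊤ : ℕ∞) ψ → HasCompactSupport ψ →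
      ∀ j, IntegrableOn (fun x => ψ x • Gc G j x) A := fun ψ h1 h2 j => by
        obtain ⟨c1, c2, K, hK⟩ := test_bound h1 h2 j
        exact int_smul (hG j) c1 fun x => (hK x).1
    rw [pair (fun j => Gc G j) (fun i j => b _ (hre i) (hrc i) j) (fun i j => b _ (him i) (hic i) j)]
    have e := fun k => pair (fun j => pd j (fun y => toC (v k y)))
      (fun i j => test_pair_int (pd_contOn hA (hvc k) j) (hre i).continuous (hrc i)
        ((hrs i).trans hφs))
      (fun i j => test_pair_int (pd_contOn hA (hvc k) j) (him i).continuous (hic i)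
        ((his i).trans hφs))
    simp_rw [e]
    have rr : ∀ i j, Tendsto (fun k => (∫ x in A, re i x • pd j (fun y => toC (v k y)) x).re) atTop
        (𝓝 (∫ x in A, re i x • Gc G j x).re) := fun i j =>
      (Complex.continuous_re.tendsto _).comp (scal _ (hre i) (hrc i) ((hrs i).trans hφs) j)
    have ii : ∀ i j, Tendsto (fun k => (∫ x in A, im i x • pd j (fun y => toC (v k y)) x).im) atTop
        (𝓝 (∫ x in A, im i x • Gc G j x).im) := fun i j =>
      (Complex.continuous_im.tendsto _).comp (scal _ (him i) (hic i) ((his i).trans hφs) j)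
    exact (tendsto_const_nhds.add ((rr 1 0).add (ii 1 0))).add ((rr 2 1).add (ii 2 1))
  rw [← (ENNReal.tendsto_ofReal lim).liminf_eq]
  refine liminf_le_liminf (Eventually.of_forall fun k => ?_)
  refine (ofReal_integral_le _).trans (le_trans ?_ (area_ge hA (hv k)))
  refine lintegral_mono fun x => ENNReal.ofReal_le_ofReal ?_
  refine (real_inner_le_norm _ _).trans ?_
  rw [vec_norm]
  exact mul_le_of_le_one_left (Real.sqrt_nonneg _) (hφ1 x)

lemma cutoff {A : Set R2} (hA : IsOpen A) (hAb : Bornology.IsBounded A) :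
    ∃ χ : ℕ → R2 → ℝ, (∀ n, ContDiff ℝ (⊤ : ℕ∞) (χ n)) ∧ (∀ n, HasCompactSupport (χ n)) ∧
      (∀ n, tsupport (χ n) ⊆ A) ∧ ∀ x ∈ A, Tendsto (fun n => χ n x) atTop (𝓝 1) := by
  obtain ⟨g, hgs, hgd, hg0⟩ := hA.exists_contDiff_support_eq (n := ⊤)
  have hgd' : ContDiff ℝ (⊤ : ℕ∞) g := hgd
  have hs : ∀ n : ℕ, tsupport (fun x => Real.smoothTransition (n * g x - 1)) ⊆ {x | 1 ≤ n * g x} := by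
    intro n
    refine closure_minimal ?_ (isClosed_le continuous_const (continuous_const.mul hgd'.continuous))
    intro x hx
    by_contra h
    simp only [mem_ofPred_eq, not_le] at h
    exact hx (Real.smoothTransition.zero_of_nonpos (by linarith))
  have hsA : ∀ n : ℕ, {x | 1 ≤ n * g x} ⊆ A := fun n x hx => by
    rw [← hgs]
    intro h
    simp only [mem_ofPred_eq, h] at hx
    norm_num at hx
  refine ⟨fun n x => Real.smoothTransition (n * g x - 1), fun n => ?_, fun n => ?_, fun n => ?_,
    fun x hx => ?_⟩
  · exact Real.smoothTransition.contDiff.comp ((contDiff_const.mul hgd').sub contDiff_const)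
  · exact Metric.isCompact_of_isClosed_isBounded (isClosed_tsupport _)
      (hAb.subset ((hs n).trans (hsA n)))
  · exact (hs n).trans (hsA n)
  · have hp : 0 < g x := lt_of_le_of_ne (hg0 ⟨x, rfl⟩).1 (Ne.symm (by rw [← hgs] at hx; exact hx))
    have h1 : ∀ᶠ n : ℕ in atTop, 2 ≤ n * g x :=
      (tendsto_natCast_atTop_atTop.atTop_mul_const hp).eventually_ge_atTop 2
    refine tendsto_const_nhds.congr' ?_
    filter_upwards [h1] with n hn
    rw [Real.smoothTransition.one_of_one_le (by linarith)]

/-- The retraction onto the unit ball of the target space of test fields. -/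
def TF (f : FF) : FF := (2 / (1 + ‖f‖ ^ 2)) • f

lemma TF_norm (f : FF) : ‖TF f‖ ≤ 1 := by
  unfold TF
  rw [norm_smul, Real.norm_of_nonneg (by positivity), div_mul_eq_mul_div, div_le_one (by positivity)]
  nlinarith [sq_nonneg (‖f‖ - 1)]

lemma TF_contDiff : ContDiff ℝ (⊤ : ℕ∞) TF := by
  unfold TF
  refine ContDiff.smul (ContDiff.div contDiff_const (contDiff_const.add (contDiff_norm_sq ℝ)) ?_)
    contDiff_id
  intro x
  positivity

theorem lower_bound {Ω A : Set R2} (hA : IsOpen A) (hAΩ : A ⊆ Ω) (hΩb : Bornology.IsBounded Ω)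
    {u : R2 → R2} {G : R2 → Matrix (Fin 2) (Fin 2) ℝ} (hu : MemW11 Ω u G) :
    ∫⁻ x in A, ENNReal.ofReal (ar (Gc G 0 x) (Gc G 1 x)) ≤ relaxedArea u A := by
  have hG : ∀ j, IntegrableOn (Gc G j) A := fun j => (Gc_integrable hu j).mono_set hAΩ
  have hAb : Bornology.IsBounded A := hΩb.subset hAΩ
  have hfin : IsFiniteMeasure (volume.restrict A) := ⟨by simpa using hAb.measure_lt_top⟩
  let V : R2 → FF := fun x => vec (Gc G 0 x) (Gc G 1 x)
  have hVm : AEStronglyMeasurable V (volume.restrict A) := by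
    have hm : AEMeasurable (fun x => (![1, Gc G 0 x, Gc G 1 x] : Fin 3 → ℂ)) (volume.restrict A) := by
      refine aemeasurable_pi_lambda _ fun i => ?_
      fin_cases i
      · exact aemeasurable_const
      · exact (hG 0).aestronglyMeasurable.aemeasurable
      · exact (hG 1).aestronglyMeasurable.aemeasurable
    exact (PiLp.continuous_toLp 2 _).comp_aestronglyMeasurable hm.aestronglyMeasurable
  have har : ∀ x, ‖V x‖ = ar (Gc G 0 x) (Gc G 1 x) := fun x => vec_norm _ _
  have hV1 : ∀ x, 1 ≤ ‖V x‖ := fun x => by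
    rw [har]
    unfold ar
    rw [Real.one_le_sqrt]
    nlinarith [sq_nonneg ‖Gc G 0 x‖, sq_nonneg ‖Gc G 1 x‖]
  have hVi : IntegrableOn V A := by
    refine Integrable.mono' (((integrable_const (1 : ℝ)).add (hG 0).norm).add (hG 1).norm) hVm
      (Eventually.of_forall fun x => ?_)
    rw [har]
    unfold ar
    simp only [Pi.add_apply]
    rw [Real.sqrt_le_left (by positivity)]
    have := norm_nonneg (Gc G 0 x)
    have := norm_nonneg (Gc G 1 x)
    nlinarith [mul_nonneg (norm_nonneg (Gc G 0 x)) (norm_nonneg (Gc G 1 x))]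
  let f : R2 → FF := fun x => ‖V x‖⁻¹ • V x
  have hf1 : ∀ x, ‖f x‖ = 1 := fun x => by
    simp only [f]
    rw [norm_smul, norm_inv, norm_norm]
    exact inv_mul_cancel₀ (by linarith [hV1 x])
  have hfm : AEStronglyMeasurable f (volume.restrict A) :=
    (hVm.norm.aemeasurable.inv.aestronglyMeasurable).smul hVm
  have hfL : MemLp f 1 (volume.restrict A) :=
    MemLp.of_bound hfm 1 (Eventually.of_forall fun x => (hf1 x).le)
  have hex : ∀ n : ℕ, ∃ g : R2 → FF, HasCompactSupport g ∧ ContDiff ℝ (⊤ : ℕ∞) g ∧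
      eLpNorm (f - g) 1 (volume.restrict A) ≤ ENNReal.ofReal (1 / (n + 1)) := fun n =>
    hfL.exist_eLpNorm_sub_le (by simp) le_rfl (by positivity)
  choose g hgc hgd hgL using hex
  have hlim : Tendsto (fun n => ∫⁻ x in A, ‖g n x - f x‖ₑ) atTop (𝓝 0) := by
    have h0 : Tendsto (fun n : ℕ => ENNReal.ofReal (1 / ((n : ℝ) + 1))) atTop (𝓝 0) := by
      simpa using ENNReal.tendsto_ofReal tendsto_one_div_add_atTop_nhds_zero_nat
    refine tendsto_of_tendsto_of_tendsto_of_le_of_le tendsto_const_nhds h0 (fun _ => bot_le)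
      fun n => ?_
    refine le_trans (le_of_eq ?_) (hgL n)
    rw [eLpNorm_one_eq_lintegral_enorm]
    refine lintegral_congr fun x => ?_
    rw [Pi.sub_apply, ← enorm_neg, neg_sub]
  obtain ⟨ns, hns, hae⟩ := subseq_ae hlim (fun n => (hgd n).continuous.aestronglyMeasurable) hfm
  obtain ⟨χ, hχd, hχc, hχs, hχ1⟩ := cutoff hA hAb
  let φ : ℕ → R2 → FF := fun n x => TF (χ n x • g (ns n) x)
  have hφd : ∀ n, ContDiff ℝ (⊤ : ℕ∞) (φ n) := fun n => TF_contDiff.comp ((hχd n).smul (hgd _))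
  have hφs : ∀ n, tsupport (φ n) ⊆ tsupport (χ n) := fun n => closure_mono fun x hx h => hx (by
    simp only [φ]
    rw [h]
    simp [TF])
  have hφc : ∀ n, HasCompactSupport (φ n) := fun n =>
    (hχc n).of_isClosed_subset (isClosed_tsupport _) (hφs n)
  have key : ∀ n, ENNReal.ofReal (∫ x in A, inner ℝ (φ n x) (V x)) ≤ relaxedArea u A := fun n =>
    lower_test hA hAΩ hu (hφd n) (hφc n) ((hφs n).trans (hχs n)) fun x => TF_norm _
  have lim : Tendsto (fun n => ∫ x in A, inner ℝ (φ n x) (V x)) atTop (𝓝 (∫ x in A, ‖V x‖)) := by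
    refine tendsto_integral_of_dominated_convergence (fun x => ‖V x‖) ?_ hVi.norm ?_ ?_
    · exact fun n => (hφd n).continuous.aestronglyMeasurable.inner hVm
    · intro n
      refine Eventually.of_forall fun x => (norm_inner_le_norm _ _).trans ?_
      exact mul_le_of_le_one_left (norm_nonneg _) (TF_norm _)
    · filter_upwards [hae, ae_restrict_mem hA.measurableSet] with x hx hxA
      have h1 : Tendsto (fun n => χ n x • g (ns n) x) atTop (𝓝 (f x)) := by
        simpa using (hχ1 x hxA).smul hx
      have h2 := (TF_contDiff.continuous.tendsto (f x)).comp h1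
      have h3 : TF (f x) = f x := by
        unfold TF
        rw [hf1]
        norm_num
      rw [h3] at h2
      have h4 : inner ℝ (f x) (V x) = ‖V x‖ := by
        simp only [f]
        rw [real_inner_smul_left, real_inner_self_eq_norm_sq]
        have := hV1 x
        field_simp
      rw [← h4]
      exact h2.inner tendsto_const_nhds
  have := le_of_tendsto (ENNReal.tendsto_ofReal lim) (Eventually.of_forall key)
  rw [ofReal_integral_eq_lintegral_ofReal hVi.norm (Eventually.of_forall fun x => norm_nonneg _)] at this
  simpa only [har] using this


/-! ### Upper bound -/

lemma unit_orth (j : Fin 2) {v : R2 → ℂ} {S : Set R2} (hS : IsOpen S) {x : R2} (hx : x ∈ S)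
    (hv : ContDiffAt ℝ 1 v x) (h1 : ∀ y ∈ S, ‖v y‖ = 1) :
    pd j v x * cj (v x) + v x * cj (pd j v x) = 0 := by
  have h2 : (fun y => v y * cj (v y)) =ᶠ[𝓝 x] fun _ => 1 := by
    filter_upwards [hS.mem_nhds hx] with y hy
    rw [Complex.mul_conj, Complex.normSq_eq_norm_sq, h1 y hy]
    simp
  have h3 : pd j (fun y => v y * cj (v y)) x = 0 := by
    unfold pd
    rw [h2.fderiv_eq]
    simp
  rwa [pd_mulC j hv (cda_conj hv), pd_conj j hv] at h3

lemma det_zero {v p q : ℂ} (hv : ‖v‖ = 1) (hp : p * cj v + v * cj p = 0)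
    (hq : q * cj v + v * cj q = 0) : (cj p * q).im = 0 := by
  have h1 : v.re ^ 2 + v.im ^ 2 = 1 := by
    have := Complex.sq_norm v
    rw [hv, Complex.normSq_apply] at this
    linarith
  have hp' := congrArg Complex.re hp
  have hq' := congrArg Complex.re hq
  simp only [Complex.add_re, Complex.mul_re, Complex.conj_re, Complex.conj_im, Complex.zero_re] at hp' hq'
  simp only [Complex.mul_im, Complex.conj_re, Complex.conj_im]
  have e1 : v.re * p.re + v.im * p.im = 0 := by linarith
  have e2 : v.re * q.re + v.im * q.im = 0 := by linarith
  have : (p.re * q.im + -p.im * q.re) * (v.re ^ 2 + v.im ^ 2) = 0 := by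
    linear_combination (v.re * q.im - v.im * q.re) * e1 + (v.im * p.re - v.re * p.im) * e2
  rwa [h1, mul_one] at this

lemma area_unit {S : Set R2} (hS : IsOpen S) {v : R2 → ℂ} (hv : ContDiffOn ℝ 1 v S)
    (h1 : ∀ y ∈ S, ‖v y‖ = 1) :
    classicalArea S (fun x => toC.symm (v x)) =
      ∫⁻ x in S, ENNReal.ofReal (ar (pd 0 v x) (pd 1 v x)) := by
  unfold classicalArea
  refine setLIntegral_congr_fun hS.measurableSet fun x hx => ?_
  have hvx := hv.contDiffAt (hS.mem_nhds hx)
  have h2 : ContDiffAt ℝ 1 (fun x => toC.symm (v x)) x :=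
    toC.symm.toContinuousLinearEquiv.contDiff.contDiffAt.comp x hvx
  rw [frob_eq h2, det_eq h2]
  simp only [LinearIsometryEquiv.apply_symm_apply]
  change _ = ENNReal.ofReal (ar (pd 0 v x) (pd 1 v x))
  rw [det_zero (h1 x hx) (unit_orth 0 hS hx hvx h1) (unit_orth 1 hS hx hvx h1)]
  unfold ar
  congr 2
  ring

lemma relaxed_le {S : Set R2} {u : R2 → R2} (hum : AEStronglyMeasurable u (volume.restrict S))
    (hS : MeasurableSet S) {L : ℝ≥0∞}
    (h : ∀ ε : ℝ≥0∞, ε ≠ 0 → ε ≠ ⊤ → ∃ v : R2 → R2, ContDiffOn ℝ 1 v S ∧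
      ∫⁻ x in S, ‖v x - u x‖ₑ ≤ ε ∧ classicalArea S v ≤ L + ε) : relaxedArea u S ≤ L := by
  have key : ∀ n : ℕ, ∃ v : R2 → R2, ContDiffOn ℝ 1 v S ∧
      ∫⁻ x in S, ‖v x - u x‖ₑ ≤ (n + 1 : ℝ≥0∞)⁻¹ ∧ classicalArea S v ≤ L + (n + 1 : ℝ≥0∞)⁻¹ :=
    fun n => h _ (ENNReal.inv_ne_zero.2 (by finiteness)) (ENNReal.inv_ne_top.2 (by simp))
  choose v h1 h2 h3 using key
  have hlim : Tendsto (fun n : ℕ => (n + 1 : ℝ≥0∞)⁻¹) atTop (𝓝 0) := by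
    have := (tendsto_add_atTop_iff_nat 1).2 ENNReal.tendsto_inv_nat_nhds_zero
    simpa using this
  have hi : ∀ k, IntegrableOn (fun x => v k x - u x) S := fun k =>
    ⟨((h1 k).continuousOn.aestronglyMeasurable hS).sub hum,
      (h2 k).trans_lt (lt_top_iff_ne_top.2 (ENNReal.inv_ne_top.2 (by simp)))⟩
  have hle : liminf (fun k => classicalArea S (v k)) atTop ≤ L := by
    have hl : Tendsto (fun n : ℕ => L + (n + 1 : ℝ≥0∞)⁻¹) atTop (𝓝 L) := by
      simpa using tendsto_const_nhds.add hlim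
    rw [← hl.liminf_eq]
    exact liminf_le_liminf (Eventually.of_forall h3)
  refine le_trans (sInf_le ?_) hle
  refine ⟨v, h1, hi, ?_, rfl⟩
  have h4 : Tendsto (fun k => ∫⁻ x in S, ‖v k x - u x‖ₑ) atTop (𝓝 0) :=
    tendsto_of_tendsto_of_tendsto_of_le_of_le tendsto_const_nhds hlim (fun _ => bot_le) h2
  have h5 := (ENNReal.tendsto_toReal ENNReal.zero_ne_top).comp h4
  refine h5.congr fun k => ?_
  rw [integral_norm_eq_lintegral_enorm (hi k).aestronglyMeasurable]
  rfl

/-- Poisson kernel. -/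
def PP (ζ : ℂ) : ℝ := (1 - ‖ζ‖ ^ 2) / ‖1 + ζ‖ ^ 2

lemma PP_eq {ζ : ℂ} (h : 1 + ζ ≠ 0) : ((1 - ζ) / (1 + ζ)).re = PP ζ := by
  unfold PP
  rw [Complex.div_re, Complex.sq_norm, Complex.sq_norm]
  have : Complex.normSq (1 + ζ) ≠ 0 := by simpa using h
  field_simp
  rw [Complex.normSq_apply]
  simp
  ring

lemma one_add_ne {ζ : ℂ} (h : ‖ζ‖ < 1) : 1 + ζ ≠ 0 := by
  intro h0
  have : ζ = -1 := by linear_combination h0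
  rw [this] at h
  simp at h

lemma PP_nonneg {ζ : ℂ} (h : ‖ζ‖ < 1) : 0 ≤ PP ζ := by
  unfold PP
  have := norm_nonneg ζ
  exact div_nonneg (by nlinarith) (by positivity)

lemma PP_avg {ρ : ℝ} (h0 : 0 < ρ) (h1 : ρ < 1) {g : ℂ} (hg : ‖g‖ = 1) :
    ∫⁻ θ in Ioc 0 (2 * Real.pi), ENNReal.ofReal (PP (g * circleMap 0 ρ θ)) =
      ENNReal.ofReal (2 * Real.pi) := by
  have hn : ∀ θ, ‖g * circleMap 0 ρ θ‖ < 1 := fun θ => by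
    rw [norm_mul, hg, norm_circleMap_zero, abs_of_pos h0, one_mul]
    exact h1
  have hd : DiffContOnCl ℂ (fun z => (1 - g * z) / (1 + g * z)) (ball 0 |ρ|) := by
    apply DifferentiableOn.diffContOnCl
    rw [abs_of_pos h0]
    intro z hz
    have hz' : ‖z‖ ≤ ρ := by
      have := Metric.closure_ball_subset_closedBall hz
      simpa using this
    refine DifferentiableAt.differentiableWithinAt ?_
    refine DifferentiableAt.div (by fun_prop) (by fun_prop) (one_add_ne ?_)
    rw [norm_mul, hg, one_mul]
    linarith
  have h2 := hd.circleAverage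
  simp only [mul_zero, sub_zero, add_zero, div_one] at h2
  rw [Real.circleAverage_def] at h2
  have hc : Continuous fun θ => (1 - g * circleMap 0 ρ θ) / (1 + g * circleMap 0 ρ θ) := by
    refine Continuous.div ?_ ?_ fun θ => one_add_ne (hn θ)
    · exact continuous_const.sub (continuous_const.mul (continuous_circleMap _ _))
    · exact continuous_const.add (continuous_const.mul (continuous_circleMap _ _))
  have hpi : 0 < 2 * Real.pi := by positivity
  have h3 : ∫ θ in (0 : ℝ)..2 * Real.pi, (1 - g * circleMap 0 ρ θ) / (1 + g * circleMap 0 ρ θ) =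
      (2 * Real.pi : ℝ) := by
    have h4 := congrArg (fun z : ℂ => (2 * Real.pi) • z) h2
    simp only [smul_smul] at h4
    rw [mul_inv_cancel₀ hpi.ne', one_smul] at h4
    rw [h4]
    simp
  rw [intervalIntegral.integral_of_le hpi.le] at h3
  have hci : IntegrableOn (fun θ => (1 - g * circleMap 0 ρ θ) / (1 + g * circleMap 0 ρ θ))
      (Ioc 0 (2 * Real.pi)) := hc.integrableOn_Ioc
  have h5 := Complex.reCLM.integral_comp_comm hci
  rw [h3] at h5
  simp only [Complex.reCLM_apply, PP_eq (one_add_ne (hn _)), Complex.ofReal_re] at h5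
  have hPi : IntegrableOn (fun θ => PP (g * circleMap 0 ρ θ)) (Ioc 0 (2 * Real.pi)) := by
    refine (Complex.reCLM.integrable_comp hci).congr (Eventually.of_forall fun θ => ?_)
    simp only [Complex.reCLM_apply, PP_eq (one_add_ne (hn _))]
  have h6 := ofReal_integral_eq_lintegral_ofReal hPi
    (Eventually.of_forall fun θ => PP_nonneg (hn θ))
  rw [h5] at h6
  exact h6.symm

lemma PP_meas : Measurable PP := by
  unfold PP
  fun_prop

lemma choose_z {μ : Measure R2} [IsFiniteMeasure μ] {g : R2 → ℂ} (hg : AEMeasurable g μ)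
    (hg1 : ∀ᵐ x ∂μ, ‖g x‖ = 1) {q : R2 → ℝ≥0∞} (hq : AEMeasurable q μ) {ρ : ℝ} (h0 : 0 < ρ)
    (h1 : ρ < 1) :
    ∃ z : ℂ, ‖z‖ = ρ ∧ ∫⁻ x, ENNReal.ofReal (PP (g x * z)) * q x ∂μ ≤ ∫⁻ x, q x ∂μ := by
  set ν : Measure ℝ := volume.restrict (Ioc 0 (2 * Real.pi)) with hν
  have hpi : 0 < 2 * Real.pi := by positivity
  have hνu : ν univ = ENNReal.ofReal (2 * Real.pi) := by simp [hν]
  have hν0 : ν ≠ 0 := by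
    intro h
    rw [h] at hνu
    simp at hνu
    linarith [Real.pi_pos]
  have hm : AEMeasurable (Function.uncurry fun (θ : ℝ) (x : R2) =>
      ENNReal.ofReal (PP (g x * circleMap 0 ρ θ)) * q x) (ν.prod μ) := by
    have a1 : AEMeasurable (fun p : ℝ × R2 => g p.2) (ν.prod μ) := hg.comp_snd
    have a2 : AEMeasurable (fun p : ℝ × R2 => q p.2) (ν.prod μ) := hq.comp_snd
    have a3 : AEMeasurable (fun p : ℝ × R2 => circleMap 0 ρ p.1) (ν.prod μ) :=
      ((continuous_circleMap 0 ρ).measurable.comp measurable_fst).aemeasurable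
    exact ((PP_meas.comp_aemeasurable (a1.mul a3)).ennreal_ofReal).mul a2
  have hsw := lintegral_lintegral_swap hm
  have hin : ∫⁻ x, ∫⁻ θ, ENNReal.ofReal (PP (g x * circleMap 0 ρ θ)) * q x ∂ν ∂μ =
      ENNReal.ofReal (2 * Real.pi) * ∫⁻ x, q x ∂μ := by
    rw [← lintegral_const_mul' _ _ ENNReal.ofReal_ne_top]
    refine lintegral_congr_ae ?_
    filter_upwards [hg1] with x hx
    rw [lintegral_mul_const, PP_avg h0 h1 hx]
    exact (PP_meas.comp (measurable_const.mul (continuous_circleMap 0 ρ).measurable)).ennreal_ofReal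
  obtain ⟨θ, hθ⟩ := exists_le_laverage hν0
    (f := fun θ => ∫⁻ x, ENNReal.ofReal (PP (g x * circleMap 0 ρ θ)) * q x ∂μ)
    hm.lintegral_prod_right'
  refine ⟨circleMap 0 ρ θ, by rw [norm_circleMap_zero, abs_of_pos h0], hθ.trans ?_⟩
  rw [laverage_eq, hsw, hin, hνu]
  rw [mul_comm, ENNReal.mul_div_cancel_right]
  · simpa using hpi
  · exact ENNReal.ofReal_ne_top


/-- The corrected competitor. -/
def vv (z w U : ℂ) : ℂ := w * cj (z / ‖z‖) * (1 + U * cj w * z) * (cj (1 + U * cj w * z))⁻¹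

/-- Its logarithmic derivative. -/
def DD (z w U w' U' : ℂ) : ℂ := z * (1 + U * cj w * z)⁻¹ * (U' * cj w + U * cj w')

lemma cj_unit {w : ℂ} (hw : ‖w‖ = 1) : w * cj w = 1 := by
  rw [Complex.mul_conj, Complex.normSq_eq_norm_sq, hw]
  simp

lemma cj_ne {z : ℂ} (h : z ≠ 0) : cj z ≠ 0 := (map_ne_zero _).2 h

lemma norm_Uwz {z w U : ℂ} (hw : ‖w‖ = 1) (hU : ‖U‖ ≤ 1) : ‖U * cj w * z‖ ≤ ‖z‖ := by
  rw [norm_mul, norm_mul, Complex.norm_conj, hw, mul_one]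
  exact mul_le_of_le_one_left (norm_nonneg _) hU

lemma norm_den {z w U : ℂ} (hw : ‖w‖ = 1) (hU : ‖U‖ ≤ 1) :
    1 - ‖z‖ ≤ ‖1 + U * cj w * z‖ := by
  have h := norm_Uwz (z := z) hw hU
  have h2 := norm_sub_le (1 + U * cj w * z) (U * cj w * z)
  rw [add_sub_cancel_right, norm_one] at h2
  linarith

lemma vv_norm {z w U : ℂ} (hz0 : z ≠ 0) (hz : ‖z‖ < 1) (hw : ‖w‖ = 1) (hU : ‖U‖ ≤ 1) :
    ‖vv z w U‖ = 1 := by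
  have h := norm_den (z := z) hw hU
  have h3 : ‖1 + U * cj w * z‖ ≠ 0 := by
    intro h0; linarith
  unfold vv
  rw [norm_mul, norm_mul, norm_mul, norm_inv, Complex.norm_conj, Complex.norm_conj, hw, norm_div]
  simp only [Complex.norm_real, norm_norm]
  rw [div_self (norm_ne_zero_iff.2 hz0)]
  field_simp

lemma vv_cda {z : ℂ} (hz : ‖z‖ < 1) {w U : R2 → ℂ} {x : R2} (hw : ContDiffAt ℝ 1 w x)
    (hU : ContDiffAt ℝ 1 U x) (hw1 : ‖w x‖ = 1) (hU1 : ‖U x‖ ≤ 1) :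
    ContDiffAt ℝ 1 (fun y => vv z (w y) (U y)) x := by
  have h := norm_den (z := z) hw1 hU1
  have h3 : 1 + U x * cj (w x) * z ≠ 0 := by
    intro h0; rw [h0, norm_zero] at h; linarith
  have hP : ContDiffAt ℝ 1 (fun y => 1 + U y * cj (w y) * z) x :=
    contDiffAt_const.add ((hU.mul (cda_conj hw)).mul contDiffAt_const)
  unfold vv
  exact ((hw.mul contDiffAt_const).mul hP).mul ((cda_conj hP).inv (cj_ne h3))

lemma pd_vv (j : Fin 2) {z : ℂ} (hz : ‖z‖ < 1) {w U : R2 → ℂ} {x : R2}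
    (hw : ContDiffAt ℝ 1 w x)
    (hU : ContDiffAt ℝ 1 U x) (hw1 : ‖w x‖ = 1) (hU1 : ‖U x‖ ≤ 1) :
    pd j (fun y => vv z (w y) (U y)) x = vv z (w x) (U x) * (pd j w x * cj (w x) +
      (DD z (w x) (U x) (pd j w x) (pd j U x) - cj (DD z (w x) (U x) (pd j w x) (pd j U x)))) := by
  have h := norm_den (z := z) hw1 hU1
  have h3 : 1 + U x * cj (w x) * z ≠ 0 := by
    intro h0; rw [h0, norm_zero] at h; linarith
  have h3' : cj (1 + U x * cj (w x) * z) ≠ 0 := cj_ne h3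
  have hUw : ContDiffAt ℝ 1 (fun y => U y * cj (w y)) x := hU.mul (cda_conj hw)
  have hP0 : ContDiffAt ℝ 1 (fun y => U y * cj (w y) * z) x := hUw.mul contDiffAt_const
  have hP : ContDiffAt ℝ 1 (fun y => 1 + U y * cj (w y) * z) x := contDiffAt_const.add hP0
  have e1 : pd j (fun y => 1 + U y * cj (w y) * z) x =
      (pd j U x * cj (w x) + U x * cj (pd j w x)) * z := by
    rw [pd_addC j contDiffAt_const hP0, pd_constC, pd_mulC j hUw contDiffAt_const, pd_constC,
      pd_mulC j hU (cda_conj hw), pd_conj j hw]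
    ring
  have hI : ContDiffAt ℝ 1 (fun y => (cj (1 + U y * cj (w y) * z))⁻¹) x := (cda_conj hP).inv h3'
  unfold vv
  rw [pd_mulC j ((hw.mul contDiffAt_const).mul hP) hI,
    pd_mulC j (hw.mul contDiffAt_const) hP, pd_mulC j hw contDiffAt_const, pd_constC,
    pd_invC j (cda_conj hP) h3', pd_conj j hP, e1]
  unfold DD
  generalize pd j w x = w'
  generalize pd j U x = U'
  have hww := cj_unit hw1
  generalize w x = w at *
  generalize U x = U at *
  rw [map_mul, map_mul, map_mul cj z, map_inv₀]
  set P := 1 + U * cj w * z with hPd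
  set R := U' * cj w + U * cj w' with hR
  generalize hP' : cj P = P' at *
  generalize cj R = R' at *
  field_simp
  linear_combination (-w' * P * P' * cj (z / ‖z‖)) * hww

lemma ar_le {p q p' q' : ℂ} {s t : ℝ} (hs : 0 ≤ s) (ht : 0 ≤ t) (h1 : ‖p‖ ≤ ‖p'‖ + s)
    (h2 : ‖q‖ ≤ ‖q'‖ + t) : ar p q ≤ ar p' q' + (s + t) := by
  unfold ar
  have hp := norm_nonneg p
  have hq := norm_nonneg q
  have hp' := norm_nonneg p'
  have hq' := norm_nonneg q'
  set A := Real.sqrt (1 + ‖p'‖ ^ 2 + ‖q'‖ ^ 2) with hA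
  have hA2 : A ^ 2 = 1 + ‖p'‖ ^ 2 + ‖q'‖ ^ 2 := Real.sq_sqrt (by positivity)
  have hA0 : 0 ≤ A := Real.sqrt_nonneg _
  have hAp : ‖p'‖ ≤ A := Real.le_sqrt_of_sq_le (by nlinarith)
  have hAq : ‖q'‖ ≤ A := Real.le_sqrt_of_sq_le (by nlinarith)
  rw [Real.sqrt_le_left (by positivity)]
  have a1 : ‖p‖ ^ 2 ≤ (‖p'‖ + s) ^ 2 := by gcongr
  have a2 : ‖q‖ ^ 2 ≤ (‖q'‖ + t) ^ 2 := by gcongr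
  have a3 : ‖p'‖ * s ≤ A * s := by gcongr
  have a4 : ‖q'‖ * t ≤ A * t := by gcongr
  have a5 := mul_nonneg hs ht
  nlinarith

lemma DD_bound {z w U w' U' : ℂ} (hz : ‖z‖ < 1) (hw : ‖w‖ = 1) (hU : ‖U‖ = 1)
    (hw' : w' * cj w + w * cj w' = 0) (hU' : U' * cj U + U * cj U' = 0) :
    ‖DD z w U w' U' - cj (DD z w U w' U')‖ ≤
      ‖U' * cj w + U * cj w'‖ * (1 + PP (U * cj w * z)) := by
  have hζ : ‖U * cj w * z‖ < 1 := (norm_Uwz hw hU.le).trans_lt hz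
  have hP := PP_nonneg hζ
  have hne := one_add_ne hζ
  have hww := cj_unit hw
  have hUU := cj_unit hU
  set τ := (U' * cj w + U * cj w') * (cj U * w) with hτ
  have hτn : ‖τ‖ = ‖U' * cj w + U * cj w'‖ := by
    rw [hτ, norm_mul, norm_mul (cj U), Complex.norm_conj, hU, hw]
    ring
  have hτc : cj τ = - τ := by
    rw [hτ]
    simp only [map_mul, map_add, Complex.conj_conj]
    linear_combination (U * cj U) * hw' + (w * cj w) * hU'
  have hD : DD z w U w' U' = τ * ((U * cj w * z) / (1 + U * cj w * z)) := by
    unfold DD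
    rw [hτ]
    rw [div_eq_mul_inv]
    generalize (1 + U * cj w * z)⁻¹ = I
    linear_combination (-z * I * (U' * cj w + U * cj w') * (U * cj U)) * hww +
      (-z * I * (U' * cj w + U * cj w')) * hUU
  set ζ := U * cj w * z with hζd
  have h2 : ζ / (1 + ζ) + cj (ζ / (1 + ζ)) = ((1 - PP ζ : ℝ) : ℂ) := by
    rw [Complex.add_conj, ← PP_eq hne]
    norm_cast
    have : (1 - ζ) / (1 + ζ) = 1 - 2 * (ζ / (1 + ζ)) := by
      field_simp; ring
    rw [this]
    simp
  have h3 : DD z w U w' U' - cj (DD z w U w' U') = τ * ((1 - PP ζ : ℝ) : ℂ) := by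
    rw [hD, map_mul, hτc, ← h2]
    ring
  rw [h3, norm_mul, hτn, Complex.norm_real, Real.norm_eq_abs]
  gcongr
  rw [abs_le]
  constructor <;> linarith

lemma vv_close {z w U : ℂ} {s : ℝ} (hs : 0 < s) (hs1 : s < 1) (hz : ‖z‖ = 1 - s ^ 2)
    (hw : ‖w‖ = 1) (hU : ‖U‖ = 1) : ‖vv z w U - U‖ ≤ s * (1 + PP (U * cj w * z)) := by
  have hz1 : ‖z‖ < 1 := by rw [hz]; nlinarith
  have hz0 : 0 < ‖z‖ := by rw [hz]; nlinarith
  have hζ : ‖U * cj w * z‖ < 1 := (norm_Uwz hw hU.le).trans_lt hz1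
  have hne := one_add_ne hζ
  have hww := cj_unit hw
  have hUU := cj_unit hU
  have hzz : z * cj z = (‖z‖ : ℂ) ^ 2 := by
    rw [Complex.mul_conj, Complex.normSq_eq_norm_sq]; push_cast; rfl
  have hn : (‖z‖ : ℂ) ≠ 0 := by exact_mod_cast hz0.ne'
  have hne' : cj (1 + U * cj w * z) ≠ 0 := cj_ne hne
  have h1 : vv z w U - U = (1 - ‖z‖) * (w * cj (z / ‖z‖) * (1 - U * cj w * (z / ‖z‖))) *
      (cj (1 + U * cj w * z))⁻¹ := by
    have hc : cj (1 + U * cj w * z) = 1 + cj U * w * cj z := by simp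
    unfold vv
    have he : z / (‖z‖ : ℂ) * cj (z / (‖z‖ : ℂ)) = 1 := by
      rw [map_div₀, Complex.conj_ofReal]
      field_simp
      exact hzz
    have hze : z = ‖z‖ * (z / (‖z‖ : ℂ)) := by field_simp
    have hze' : cj z = ‖z‖ * cj (z / (‖z‖ : ℂ)) := by
      rw [map_div₀, Complex.conj_ofReal]; field_simp
    rw [eq_mul_inv_iff_mul_eq₀ hne', sub_mul, mul_assoc _ _ (cj (1 + U * cj w * z)),
      inv_mul_cancel₀ hne', mul_one, hc, hze']
    generalize hE : z / (‖z‖ : ℂ) = e at *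
    generalize cj e = e' at *
    generalize cj w = w' at *
    generalize cj U = U' at *
    generalize (‖z‖ : ℂ) = r at *
    rw [hze]
    linear_combination (U * r) * he * (w * w') - (-(U * r)) * hww - w * r * e' * hUU +
      (1 - r) * U * (e * e') * hww + (1 - r) * U * he
  have h2 : ‖vv z w U - U‖ ≤ s ^ 2 * 2 / ‖1 + U * cj w * z‖ := by
    rw [h1, norm_mul, norm_inv, Complex.norm_conj, ← div_eq_mul_inv]
    gcongr
    rw [norm_mul]
    have : ‖(1 - ‖z‖ : ℂ)‖ = s ^ 2 := by
      rw [hz]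
      push_cast
      rw [sub_sub_cancel]
      norm_cast
      rw [Real.norm_of_nonneg (by positivity)]
    rw [this]
    gcongr
    have he : ‖z / ‖z‖‖ = 1 := by
      rw [norm_div, Complex.norm_real, norm_norm, div_self hz0.ne']
    rw [norm_mul, norm_mul, Complex.norm_conj, he, hw, mul_one, one_mul]
    refine (norm_sub_le _ _).trans ?_
    rw [norm_mul, norm_mul, Complex.norm_conj, he, hw, hU, norm_one]
    norm_num
  refine h2.trans ?_
  unfold PP
  have ht : 0 < ‖1 + U * cj w * z‖ := norm_pos_iff.2 hne
  have hζn : ‖U * cj w * z‖ = 1 - s ^ 2 := by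
    rw [norm_mul, norm_mul, Complex.norm_conj, hw, hU, hz]; ring
  rw [hζn]
  set t := ‖1 + U * cj w * z‖
  have : s * (1 + (1 - (1 - s ^ 2) ^ 2) / t ^ 2) - s ^ 2 * 2 / t =
      s * ((t - s) ^ 2 + s ^ 2 * (1 - s ^ 2)) / t ^ 2 := by
    field_simp; ring
  have h5 : 0 ≤ s * ((t - s) ^ 2 + s ^ 2 * (1 - s ^ 2)) / t ^ 2 := by
    have : 0 ≤ 1 - s ^ 2 := by nlinarith
    positivity
  linarith


lemma orth_of {U g : ℂ} (hU : ‖U‖ = 1) (h : g = - U ^ 2 * cj g) : g * cj U + U * cj g = 0 := by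
  have := cj_unit hU
  linear_combination (cj U) * h - U * cj g * this

lemma vv_cont {z : ℂ} (hz : ‖z‖ < 1) {w U : ℂ} (hw : ‖w‖ = 1) (hU : ‖U‖ ≤ 1) {V : ℕ → ℂ}
    (hV : Tendsto V atTop (𝓝 U)) : Tendsto (fun n => vv z w (V n)) atTop (𝓝 (vv z w U)) ∧
    Tendsto (fun n => z * (1 + V n * cj w * z)⁻¹) atTop (𝓝 (z * (1 + U * cj w * z)⁻¹)) := by
  have h := norm_den (z := z) hw hU
  have h3 : 1 + U * cj w * z ≠ 0 := by
    intro h0; rw [h0, norm_zero] at h; linarith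
  have e1 : Tendsto (fun n => 1 + V n * cj w * z) atTop (𝓝 (1 + U * cj w * z)) :=
    tendsto_const_nhds.add ((hV.mul_const _).mul_const _)
  refine ⟨?_, (e1.inv₀ h3).const_mul _⟩
  unfold vv
  have e2 := ((Complex.continuous_conj.tendsto _).comp e1).inv₀ (cj_ne h3)
  exact (e1.const_mul _).mul e2

theorem upper_C {Ω S : Set R2} (hΩo : IsOpen Ω) (hΩb : Bornology.IsBounded Ω)
    (hΩl : HasLipschitzBoundary Ω) {u : R2 → R2} {G : R2 → Matrix (Fin 2) (Fin 2) ℝ}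
    (hu : MemW11 Ω u G) (hS : SphereValued Ω u) (hSo : IsOpen S) (hSΩ : S ⊆ Ω)
    {w : R2 → ℂ} (hw : ContDiffOn ℝ 1 w S) (hw1 : ∀ x ∈ S, ‖w x‖ = 1)
    (hwi : ∀ j, IntegrableOn (pd j w) S) :
    relaxedArea u S ≤ (∫⁻ x in S, ENNReal.ofReal (ar (pd 0 w x) (pd 1 w x))) +
      2 * ∫⁻ x in S, (‖Gc G 0 x * cj (w x) + toC (u x) * cj (pd 0 w x)‖ₑ +
        ‖Gc G 1 x * cj (w x) + toC (u x) * cj (pd 1 w x)‖ₑ) := by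
  obtain ⟨U, hU, hU1, hUl, hUd, hG⟩ := approx1 hΩo hΩb hΩl hu hS
  have hμ : volume.restrict S ≤ volume.restrict Ω := Measure.restrict_mono hSΩ le_rfl
  have hSb : Bornology.IsBounded S := hΩb.subset hSΩ
  have hUl' : ∀ᵐ x ∂(volume.restrict S), Tendsto (fun n => U n x) atTop (𝓝 (toC (u x))) :=
    ae_mono hμ hUl
  have hG' : ∀ j, ∀ᵐ x ∂(volume.restrict S), Gc G j x = - (toC (u x)) ^ 2 * cj (Gc G j x) :=
    fun j => ae_mono hμ (hG j)
  have hu1 : ∀ᵐ x ∂(volume.restrict S), ‖toC (u x)‖ = 1 := by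
    filter_upwards [ae_mono hμ hS] with x hx
    rw [LinearIsometryEquiv.norm_map, hx]
  have hUd' : ∀ j, Tendsto (fun n => ∫⁻ x in S, ‖pd j (U n) x - Gc G j x‖ₑ) atTop (𝓝 0) :=
    fun j => tendsto_of_tendsto_of_tendsto_of_le_of_le tendsto_const_nhds (hUd j)
      (fun _ => bot_le) (fun n => lintegral_mono' hμ le_rfl)
  have hxS : ∀ᵐ x ∂(volume.restrict S), x ∈ S := ae_restrict_mem hSo.measurableSet
  have hGi : ∀ j, IntegrableOn (Gc G j) S := fun j => (Gc_integrable hu j).mono_set hSΩ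
  have hui : IntegrableOn (fun x => toC (u x)) S := (uc_integrable hu).mono_set hSΩ
  have hwm : AEStronglyMeasurable w (volume.restrict S) :=
    hw.continuousOn.aestronglyMeasurable hSo.measurableSet
  have hcm : ∀ {f : R2 → ℂ}, AEStronglyMeasurable f (volume.restrict S) →
      AEStronglyMeasurable (fun x => cj (f x)) (volume.restrict S) := fun hf =>
    Complex.continuous_conj.comp_aestronglyMeasurable hf
  have hUm : ∀ n, AEStronglyMeasurable (U n) (volume.restrict S) := fun n =>
    (hU n).continuous.aestronglyMeasurable
  have hUdm : ∀ n j, AEStronglyMeasurable (pd j (U n)) (volume.restrict S) := fun n j =>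
    (pd_continuous (hU n) j).aestronglyMeasurable
  have hw1' : ∀ᵐ x ∂(volume.restrict S), ‖cj (w x)‖ ≤ 1 := by
    filter_upwards [hxS] with x hx
    rw [Complex.norm_conj, hw1 x hx]
  have hfin : volume S < ⊤ := hSb.measure_lt_top
  have hfinM : IsFiniteMeasure (volume.restrict S) := ⟨by simpa using hfin⟩
  set g : Fin 2 → R2 → ℂ := fun j x => Gc G j x * cj (w x) + toC (u x) * cj (pd j w x) with hg
  have hcwi : ∀ j, IntegrableOn (fun x => cj (pd j w x)) S := fun j =>
    Complex.conjCLE.toContinuousLinearMap.integrable_comp (hwi j)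
  have hgi : ∀ j, IntegrableOn (g j) S := fun j => by
    refine Integrable.add ?_ ?_
    · exact Integrable.mul_bdd (c := 1) (hGi j) (hcm hwm) hw1'
    · exact Integrable.bdd_mul (c := 1) (hcwi j) hui.aestronglyMeasurable
        (hu1.mono fun x hx => hx.le)
  -- convergence of the second term
  have hQ : ∀ j, Tendsto (fun n => ∫⁻ x in S, ‖(pd j (U n) x * cj (w x) + U n x * cj (pd j w x)) -
      g j x‖ₑ) atTop (𝓝 0) := fun j => by
    have a1 := tool_mul (M := fun _ x => cj (w x)) (N := fun x => cj (w x)) (K := 1) (hUd' j)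
      (hGi j) (fun n => hUdm n j) (fun _ => hw1') (fun _ => hcm hwm)
      (Eventually.of_forall fun x _ => tendsto_const_nhds)
    have a2 := tool_mul (f := fun _ x => cj (pd j w x)) (g := fun x => cj (pd j w x))
      (M := U) (N := fun x => toC (u x)) (K := 1) (μ := volume.restrict S)
      (by simp) (hcwi j) (fun _ => (hcwi j).aestronglyMeasurable)
      (fun n => Eventually.of_forall (hU1 n)) hUm (hUl'.mono fun x hx _ => hx)
    have a3 := tool_add a1 a2 (fun n => ((hcm hwm).mul (hUdm n j)).sub
      ((hcm hwm).mul (hGi j).aestronglyMeasurable))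
    refine a3.congr fun n => lintegral_congr fun x => ?_
    simp only [hg]
    congr 1
    ring
  have hQm : ∀ n j, AEStronglyMeasurable
      (fun x => pd j (U n) x * cj (w x) + U n x * cj (pd j w x)) (volume.restrict S) := fun n j =>
    ((hUdm n j).mul (hcm hwm)).add ((hUm n).mul (hcwi j).aestronglyMeasurable)
  refine relaxed_le (hu.1.mono_set hSΩ).aestronglyMeasurable hSo.measurableSet fun ε hε0 hεt => ?_
  have hε2 : ε / 2 ≠ 0 := (ENNReal.half_pos hε0).ne'
  have hε2t : ε / 2 ≠ ⊤ := ENNReal.div_ne_top hεt two_ne_zero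
  set M := volume S with hM
  -- choice of c
  set c : ℝ≥0∞ := ε / 2 / (M + 1) with hc
  have hM1 : M + 1 ≠ ⊤ := by finiteness
  have hc0 : c ≠ 0 := ENNReal.div_ne_zero.2 ⟨hε2, hM1⟩
  have hct : c ≠ ⊤ := ENNReal.div_ne_top hε2t (by simp)
  have hcM : c * M ≤ ε / 2 := by
    calc c * M ≤ c * (M + 1) := by gcongr; exact le_self_add
      _ = ε / 2 := ENNReal.div_mul_cancel (by simp) hM1
  set q : R2 → ℝ≥0∞ := fun x => ‖g 0 x‖ₑ + ‖g 1 x‖ₑ + c with hq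
  have hgem : ∀ j, AEMeasurable (fun x => ‖g j x‖ₑ) (volume.restrict S) := fun j =>
    (hgi j).aestronglyMeasurable.enorm
  have hgs : AEMeasurable (fun x => ‖g 0 x‖ₑ + ‖g 1 x‖ₑ) (volume.restrict S) :=
    (hgem 0).add (hgem 1)
  have hqm : AEMeasurable q (volume.restrict S) := ((hgem 0).add (hgem 1)).add aemeasurable_const
  set J := ∫⁻ x in S, (‖g 0 x‖ₑ + ‖g 1 x‖ₑ) with hJ
  have hJt : J ≠ ⊤ := by
    rw [hJ, lintegral_add_left' (hgem 0)]
    exact ENNReal.add_ne_top.2 ⟨(hgi 0).2.ne, (hgi 1).2.ne⟩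
  have hI : ∫⁻ x in S, q x = J + c * M := by
    rw [hq, lintegral_add_left' hgs]
    simp [hM, hJ]
  set I := ∫⁻ x in S, q x with hId
  have hIt : I ≠ ⊤ := by rw [hI]; finiteness
  set K := M + c⁻¹ * I with hK
  have hKt : K ≠ ⊤ := by
    have : c⁻¹ ≠ ⊤ := ENNReal.inv_ne_top.2 hc0
    finiteness
  -- choice of s
  obtain ⟨s, hs0, hs1, hsK⟩ : ∃ s : ℝ, 0 < s ∧ s < 1 ∧ ENNReal.ofReal s * K ≤ ε / 2 := by
    set d := ε / 2 / (K + 1) with hd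
    have hK1 : K + 1 ≠ ⊤ := by finiteness
    have hd0 : d ≠ 0 := ENNReal.div_ne_zero.2 ⟨hε2, hK1⟩
    have hdt : d ≠ ⊤ := ENNReal.div_ne_top hε2t (by simp)
    refine ⟨min (1 / 2) d.toReal, lt_min (by norm_num) (ENNReal.toReal_pos hd0 hdt),
      (min_le_left _ _).trans_lt (by norm_num), ?_⟩
    calc ENNReal.ofReal (min (1 / 2) d.toReal) * K ≤ d * (K + 1) := by
          gcongr
          · exact (ENNReal.ofReal_le_ofReal (min_le_right _ _)).trans ENNReal.ofReal_toReal_le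
          · exact le_self_add
      _ = ε / 2 := ENNReal.div_mul_cancel (by simp) hK1
  obtain ⟨z, hz, hzq⟩ := choose_z (μ := volume.restrict S)
    (g := fun x => toC (u x) * cj (w x)) (q := q) (ρ := 1 - s ^ 2)
    (hui.aestronglyMeasurable.mul (hcm hwm)).aemeasurable
    (by
      filter_upwards [hxS, hu1] with x hx hx1
      rw [norm_mul, Complex.norm_conj, hx1, hw1 x hx, one_mul]) hqm (by nlinarith) (by nlinarith)
  have hz1 : ‖z‖ < 1 := by rw [hz]; nlinarith
  have hz0 : z ≠ 0 := by
    rw [← norm_pos_iff, hz]; nlinarith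
  set Pe : R2 → ℝ≥0∞ := fun x => ENNReal.ofReal (PP (toC (u x) * cj (w x) * z)) with hPe
  have hPem : AEMeasurable Pe (volume.restrict S) :=
    (PP_meas.comp_aemeasurable ((hui.aestronglyMeasurable.mul
      (hcm hwm)).aemeasurable.mul_const z)).ennreal_ofReal
  have hPc : ∫⁻ x in S, Pe x ≤ c⁻¹ * I := by
    have : c * ∫⁻ x in S, Pe x ≤ I := by
      rw [← lintegral_const_mul' _ _ hct]
      refine le_trans (lintegral_mono fun x => ?_) hzq
      simp only [hq]
      rw [mul_comm]
      gcongr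
      exact le_add_self
    calc _ = c⁻¹ * (c * ∫⁻ x in S, Pe x) := by
          rw [← mul_assoc, ENNReal.inv_mul_cancel hc0 hct, one_mul]
      _ ≤ _ := by gcongr
  set vl : R2 → ℂ := fun x => vv z (w x) (toC (u x)) with hvl
  have hvlu : ∫⁻ x in S, ‖vl x - toC (u x)‖ₑ ≤ ε / 2 := by
    calc ∫⁻ x in S, ‖vl x - toC (u x)‖ₑ ≤ ∫⁻ x in S, ENNReal.ofReal s * (1 + Pe x) := by
          refine lintegral_mono_ae ?_
          filter_upwards [hxS, hu1] with x hx hx1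
          have h := vv_close hs0 hs1 hz (hw1 x hx) hx1
          have hP := PP_nonneg ((norm_Uwz (z := z) (hw1 x hx) hx1.le).trans_lt hz1)
          rw [← ofReal_norm]
          refine (ENNReal.ofReal_le_ofReal h).trans ?_
          rw [ENNReal.ofReal_mul hs0.le, ENNReal.ofReal_add zero_le_one hP, ENNReal.ofReal_one]
      _ = ENNReal.ofReal s * (M + ∫⁻ x in S, Pe x) := by
          rw [lintegral_const_mul' _ _ ENNReal.ofReal_ne_top, lintegral_add_left measurable_const]
          simp [hM]
      _ ≤ ENNReal.ofReal s * K := mul_le_mul' le_rfl (add_le_add le_rfl hPc)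
      _ ≤ _ := hsK
  set D : Fin 2 → R2 → ℂ := fun j x => z * (1 + toC (u x) * cj (w x) * z)⁻¹ * g j x with hD
  set Dn : ℕ → Fin 2 → R2 → ℂ := fun n j x => DD z (w x) (U n x) (pd j w x) (pd j (U n) x) with hDn
  have hDb : ∀ j, ∀ᵐ x ∂(volume.restrict S), ‖D j x - cj (D j x)‖ₑ ≤ ‖g j x‖ₑ * (1 + Pe x) := by
    intro j
    filter_upwards [hxS, hu1, hG' j] with x hx hx1 hxG
    have h := DD_bound (U' := Gc G j x) (w' := pd j w x) hz1 (hw1 x hx) hx1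
      (unit_orth j hSo hx (hw.contDiffAt (hSo.mem_nhds hx)) hw1) (orth_of hx1 hxG)
    have hP := PP_nonneg ((norm_Uwz (z := z) (hw1 x hx) hx1.le).trans_lt hz1)
    rw [← ofReal_norm]
    refine (ENNReal.ofReal_le_ofReal h).trans ?_
    rw [ENNReal.ofReal_mul (norm_nonneg _), ENNReal.ofReal_add zero_le_one hP, ENNReal.ofReal_one,
      ofReal_norm]
  have hMm : ∀ n, AEStronglyMeasurable (fun x => z * (1 + U n x * cj (w x) * z)⁻¹)
      (volume.restrict S) := fun n =>
    ((((hUm n).mul (hcm hwm)).mul_const z).const_add 1).aemeasurable.inv.aestronglyMeasurable.const_mul z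
  have hDlim : ∀ j, Tendsto (fun n => ∫⁻ x in S, ‖Dn n j x - D j x‖ₑ) atTop (𝓝 0) := fun j => by
    refine tool_mul (K := (1 - ‖z‖)⁻¹) (hQ j) (hgi j) (fun n => hQm n j) (fun n => ?_) hMm ?_
    · filter_upwards [hxS] with x hx
      have h := norm_den (z := z) (hw1 x hx) (hU1 n x)
      rw [norm_mul, norm_inv]
      have h2 : 0 < 1 - ‖z‖ := by linarith
      calc ‖z‖ * ‖1 + U n x * cj (w x) * z‖⁻¹ ≤ 1 * (1 - ‖z‖)⁻¹ := by gcongr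
        _ = _ := one_mul _
    · filter_upwards [hxS, hu1, hUl'] with x hx hx1 hxl _
      exact (vv_cont hz1 (hw1 x hx) hx1.le hxl).2
  set vn : ℕ → R2 → ℂ := fun n x => vv z (w x) (U n x) with hvn
  have hvC : ∀ n, ContDiffOn ℝ 1 (vn n) S := fun n x hx =>
    (vv_cda hz1 (hw.contDiffAt (hSo.mem_nhds hx)) (hU n).contDiffAt (hw1 x hx)
      (hU1 n x)).contDiffWithinAt
  have hvn1 : ∀ n, ∀ x ∈ S, ‖vn n x‖ = 1 := fun n x hx => vv_norm hz0 hz1 (hw1 x hx) (hU1 n x)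
  have hvm : ∀ n, AEStronglyMeasurable (vn n) (volume.restrict S) := fun n =>
    (hvC n).continuousOn.aestronglyMeasurable hSo.measurableSet
  have hvlim : Tendsto (fun n => ∫⁻ x in S, ‖vn n x - vl x‖ₑ) atTop (𝓝 0) := by
    have := tool_mul (f := fun _ _ => (1 : ℂ)) (g := fun _ => (1 : ℂ)) (M := vn) (N := vl)
      (K := 1) (μ := volume.restrict S) (by simp) (integrable_const _)
      (fun _ => aestronglyMeasurable_const) (fun n => hxS.mono fun x hx => (hvn1 n x hx).le) hvm
      (by
        filter_upwards [hxS, hu1, hUl'] with x hx hx1 hxl _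
        exact (vv_cont hz1 (hw1 x hx) hx1.le hxl).1)
    simpa using this
  have hsum : Tendsto (fun n => 2 * ((∫⁻ x in S, ‖Dn n 0 x - D 0 x‖ₑ) + ∫⁻ x in S, ‖Dn n 1 x - D 1 x‖ₑ))
      atTop (𝓝 0) := by
    have := ENNReal.Tendsto.const_mul (a := 2) ((hDlim 0).add (hDlim 1)) (Or.inr (by simp))
    simpa using this
  obtain ⟨n, hn1, hn2⟩ := ((hvlim.eventually_le_const (pos_iff_ne_zero.2 hε2)).and
    (hsum.eventually_le_const (pos_iff_ne_zero.2 hε2))).exists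
  refine ⟨fun x => toC.symm (vn n x), ?_, ?_, ?_⟩
  · exact toC.symm.toContinuousLinearEquiv.contDiff.comp_contDiffOn (hvC n)
  · calc ∫⁻ x in S, ‖toC.symm (vn n x) - u x‖ₑ
        ≤ ∫⁻ x in S, (‖vn n x - vl x‖ₑ + ‖vl x - toC (u x)‖ₑ) := by
          refine lintegral_mono fun x => ?_
          have : ‖toC.symm (vn n x) - u x‖ₑ = ‖vn n x - toC (u x)‖ₑ := by
            rw [← ofReal_norm, ← ofReal_norm, ← LinearIsometryEquiv.norm_map toC, map_sub,
              LinearIsometryEquiv.apply_symm_apply]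
          rw [this, ← sub_add_sub_cancel (vn n x) (vl x) (toC (u x))]
          exact enorm_add_le _ _
      _ = _ := lintegral_add_left' ((hvm n).sub ?_).enorm _
      _ ≤ ε / 2 + ε / 2 := add_le_add hn1 hvlu
      _ = ε := ENNReal.add_halves ε
    exact aestronglyMeasurable_of_tendsto_ae atTop hvm (by
        filter_upwards [hxS, hu1, hUl'] with x hx hx1 hxl
        exact (vv_cont hz1 (hw1 x hx) hx1.le hxl).1)
  · rw [area_unit hSo (hvC n) (hvn1 n)]
    have hDm : ∀ j, AEStronglyMeasurable (D j) (volume.restrict S) := fun j =>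
      ((((hui.aestronglyMeasurable.mul (hcm hwm)).mul_const z).const_add
        1).aemeasurable.inv.aestronglyMeasurable.const_mul z).mul (hgi j).aestronglyMeasurable
    have hDnm : ∀ j, AEStronglyMeasurable (Dn n j) (volume.restrict S) := fun j =>
      (hMm n).mul (hQm n j)
    set e : Fin 2 → R2 → ℝ≥0∞ := fun j x => ‖g j x‖ₑ * (1 + Pe x) + 2 * ‖Dn n j x - D j x‖ₑ with he
    have hem : ∀ j, AEMeasurable (e j) (volume.restrict S) := fun j =>
      ((hgem j).mul (hPem.const_add 1)).add (((hDnm j).sub (hDm j)).enorm.const_mul 2)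
    have hDe : ∀ j, ∀ᵐ x ∂(volume.restrict S), ‖Dn n j x - cj (Dn n j x)‖ₑ ≤ e j x := by
      intro j
      filter_upwards [hDb j] with x hx
      have : Dn n j x - cj (Dn n j x) = (D j x - cj (D j x)) +
          ((Dn n j x - D j x) - cj (Dn n j x - D j x)) := by
        rw [map_sub]; ring
      rw [this]
      refine (enorm_add_le _ _).trans (add_le_add hx ?_)
      refine (enorm_sub_le).trans ?_
      rw [two_mul]
      gcongr
      rw [← ofReal_norm, ← ofReal_norm, Complex.norm_conj]
    calc ∫⁻ x in S, ENNReal.ofReal (ar (pd 0 (vn n) x) (pd 1 (vn n) x))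
        ≤ ∫⁻ x in S, (ENNReal.ofReal (ar (pd 0 w x) (pd 1 w x)) + (e 0 x + e 1 x)) := by
          refine lintegral_mono_ae ?_
          filter_upwards [hxS, hDe 0, hDe 1] with x hx h0 h1
          have hb : ∀ j, ‖pd j (vn n) x‖ ≤ ‖pd j w x‖ + ‖Dn n j x - cj (Dn n j x)‖ := by
            intro j
            rw [hvn, pd_vv j hz1 (hw.contDiffAt (hSo.mem_nhds hx)) (hU n).contDiffAt (hw1 x hx)
              (hU1 n x), norm_mul, vv_norm hz0 hz1 (hw1 x hx) (hU1 n x), one_mul]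
            refine (norm_add_le _ _).trans ?_
            rw [norm_mul, Complex.norm_conj, hw1 x hx, mul_one]
          refine (ENNReal.ofReal_le_ofReal (ar_le (norm_nonneg _) (norm_nonneg _) (hb 0)
            (hb 1))).trans ?_
          rw [ENNReal.ofReal_add (p := ar _ _) (Real.sqrt_nonneg _) (by positivity),
            ENNReal.ofReal_add (norm_nonneg _) (norm_nonneg _), ofReal_norm, ofReal_norm]
          gcongr
      _ = (∫⁻ x in S, ENNReal.ofReal (ar (pd 0 w x) (pd 1 w x))) +
            ∫⁻ x in S, (e 0 x + e 1 x) := lintegral_add_right' _ ((hem 0).add (hem 1))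
      _ ≤ (∫⁻ x in S, ENNReal.ofReal (ar (pd 0 w x) (pd 1 w x))) + (2 * J + ε) := by
          gcongr
          have e2 : ∫⁻ x in S, (e 0 x + e 1 x) = ∫⁻ x in S, ((‖g 0 x‖ₑ + ‖g 1 x‖ₑ) +
              Pe x * (‖g 0 x‖ₑ + ‖g 1 x‖ₑ) +
              2 * (‖Dn n 0 x - D 0 x‖ₑ + ‖Dn n 1 x - D 1 x‖ₑ)) := by
            refine lintegral_congr fun x => ?_
            simp only [he]
            ring
          have e4 : AEMeasurable (fun x => (‖g 0 x‖ₑ + ‖g 1 x‖ₑ) +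
              Pe x * (‖g 0 x‖ₑ + ‖g 1 x‖ₑ)) (volume.restrict S) := hgs.add (hPem.mul hgs)
          rw [e2, lintegral_add_left' e4, lintegral_add_left' hgs,
            lintegral_const_mul' _ _ (by simp), lintegral_add_left' (show AEMeasurable (fun x => ‖Dn n 0 x - D 0 x‖ₑ) _ from
              ((hDnm 0).sub (hDm 0)).enorm)]
          have e3 : ∫⁻ x in S, Pe x * (‖g 0 x‖ₑ + ‖g 1 x‖ₑ) ≤ J + ε / 2 := by
            refine le_trans (le_trans (lintegral_mono fun x => ?_) hzq) ?_
            · exact mul_le_mul' le_rfl le_self_add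
            · exact hI.le.trans (add_le_add le_rfl hcM)
          calc _ ≤ J + (J + ε / 2) + ε / 2 := by gcongr
            _ = 2 * J + (ε / 2 + ε / 2) := by ring
            _ = _ := by rw [ENNReal.add_halves]
      _ = _ := by rw [add_assoc]


/-! ### Approximation by maps smooth away from finitely many points -/

def ff (a U : ℂ) : ℂ := (U - a) * (1 - cj a * U)

def ww (a U : ℂ) : ℂ := ((‖ff a U‖⁻¹ : ℝ) : ℂ) * ff a U

def kk (a U : ℂ) : ℂ := (U - a)⁻¹ - cj a * (1 - cj a * U)⁻¹

lemma one_sub_norm {a U : ℂ} (ha : ‖a‖ < 1 / 2) (hU : ‖U‖ ≤ 1) : 1 / 2 ≤ ‖1 - cj a * U‖ := by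
  have h1 : ‖cj a * U‖ ≤ 1 / 2 := by
    rw [norm_mul, Complex.norm_conj]
    nlinarith [norm_nonneg a, norm_nonneg U]
  have := norm_sub_norm_le (1 : ℂ) (cj a * U)
  rw [norm_one] at this
  linarith

lemma one_sub_ne {a U : ℂ} (ha : ‖a‖ < 1 / 2) (hU : ‖U‖ ≤ 1) : 1 - cj a * U ≠ 0 := by
  intro h
  have := one_sub_norm ha hU
  rw [h, norm_zero] at this
  norm_num at this

lemma ff_ne {a U : ℂ} (ha : ‖a‖ < 1 / 2) (hU : ‖U‖ ≤ 1) (h : U ≠ a) : ff a U ≠ 0 :=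
  mul_ne_zero (sub_ne_zero.2 h) (one_sub_ne ha hU)

lemma ww_norm {a U : ℂ} (h : ff a U ≠ 0) : ‖ww a U‖ = 1 := by
  unfold ww
  rw [norm_mul, Complex.norm_real, norm_inv, norm_norm, inv_mul_cancel₀ (norm_ne_zero_iff.2 h)]

lemma ww_norm_le (a U : ℂ) : ‖ww a U‖ ≤ 1 := by
  by_cases h : ff a U = 0
  · unfold ww; simp [h]
  · exact (ww_norm h).le

lemma ff_cda {a : ℂ} {U : R2 → ℂ} {x : R2} (hU : ContDiffAt ℝ 1 U x) :
    ContDiffAt ℝ 1 (fun y => ff a (U y)) x :=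
  (hU.sub contDiffAt_const).mul (contDiffAt_const.sub (contDiffAt_const.mul hU))

lemma ww_cda {a : ℂ} {U : R2 → ℂ} {x : R2} (hU : ContDiffAt ℝ 1 U x) (h : ff a (U x) ≠ 0) :
    ContDiffAt ℝ 1 (fun y => ww a (U y)) x := by
  have h1 : ContDiffAt ℝ 1 (fun y => ‖ff a (U y)‖⁻¹) x :=
    ((ff_cda hU).norm ℝ h).inv (norm_ne_zero_iff.2 h)
  exact (Complex.ofRealCLM.contDiff.contDiffAt.comp x h1).mul (ff_cda hU)

lemma ww_sq {a U : ℂ} (h : ff a U ≠ 0) : ww a U * ww a U = ff a U * (cj (ff a U))⁻¹ := by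
  unfold ww
  have h2 := cj_ne h
  have h3 : (‖ff a U‖ : ℂ) ≠ 0 := by exact_mod_cast norm_ne_zero_iff.2 h
  have h4 : ff a U * cj (ff a U) = (‖ff a U‖ : ℂ) ^ 2 := by
    rw [Complex.mul_conj, Complex.normSq_eq_norm_sq]; push_cast; rfl
  push_cast
  field_simp
  linear_combination h4

lemma pd_ff (j : Fin 2) {a : ℂ} {U : R2 → ℂ} {x : R2} (hU : ContDiffAt ℝ 1 U x) :
    pd j (fun y => ff a (U y)) x =
      pd j U x * (1 - cj a * U x) - (U x - a) * (cj a * pd j U x) := by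
  unfold ff
  have e1 : ∀ y, U y - a = U y + (-a) := fun y => sub_eq_add_neg _ _
  have e2 : ∀ y, 1 - cj a * U y = 1 + (-cj a) * U y := fun y => by ring
  simp only [e1, e2]
  rw [pd_mulC j (hU.add contDiffAt_const) (contDiffAt_const.add (contDiffAt_const.mul hU)),
    pd_addC j hU contDiffAt_const, pd_addC j contDiffAt_const (contDiffAt_const.mul hU),
    pd_mulC j contDiffAt_const hU]
  simp only [pd_constC]
  ring

lemma pd_ww (j : Fin 2) {a : ℂ} {U : R2 → ℂ} {x : R2} (hU : ContDiff ℝ 1 U)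
    (h : ff a (U x) ≠ 0) :
    pd j (fun y => ww a (U y)) x = ww a (U x) *
      (pd j U x * kk a (U x) - cj (pd j U x * kk a (U x))) / 2 := by
  have hw := ww_cda hU.contDiffAt h
  have hf := ff_cda (a := a) (hU.contDiffAt (x := x))
  have hev : (fun y => ww a (U y) * ww a (U y)) =ᶠ[𝓝 x]
      fun y => ff a (U y) * (cj (ff a (U y)))⁻¹ := by
    filter_upwards [hf.continuousAt.eventually_ne h] with y hy
    exact ww_sq hy
  have h1 : pd j (fun y => ww a (U y) * ww a (U y)) x =
      pd j (fun y => ff a (U y) * (cj (ff a (U y)))⁻¹) x := by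
    unfold pd
    rw [hev.fderiv_eq]
  have hI : ContDiffAt ℝ 1 (fun y => (cj (ff a (U y)))⁻¹) x := (cda_conj hf).inv (cj_ne h)
  rw [pd_mulC j hw hw, pd_mulC j hf hI, pd_invC j (cda_conj hf) (cj_ne h), pd_conj j hf] at h1
  have h2 : pd j (fun y => ff a (U y)) x = ff a (U x) * (pd j U x * kk a (U x)) := by
    rw [pd_ff j hU.contDiffAt]
    unfold ff kk
    have a1 := left_ne_zero_of_mul h
    have a2 := right_ne_zero_of_mul h
    field_simp
  have hne : ww a (U x) ≠ 0 := by
    rw [← norm_pos_iff, ww_norm h]; exact one_pos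
  have hs := ww_sq h
  rw [h2, map_mul] at h1
  have h3 := cj_ne h
  have h4 : ww a (U x) * (2 * pd j (fun y => ww a (U y)) x) =
      ww a (U x) * (ww a (U x) * (pd j U x * kk a (U x) - cj (pd j U x * kk a (U x)))) := by
    rw [← mul_assoc (ww a (U x)) (ww a (U x)), hs]
    have : ww a (U x) * (2 * pd j (fun y => ww a (U y)) x) =
      pd j (fun y => ww a (U y)) x * ww a (U x) + ww a (U x) * pd j (fun y => ww a (U y)) x := by
        ring
    rw [this, h1]
    field_simp
    ring
  have h5 := mul_left_cancel₀ hne h4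
  rw [← h5]
  ring

lemma ww_unit {a z : ℂ} (ha : ‖a‖ < 1 / 2) (hz : ‖z‖ = 1) : ww a z = z := by
  have hzz := cj_unit hz
  have hne : z ≠ a := by rintro rfl; rw [hz] at ha; norm_num at ha
  have h1 : ff a z = ((‖1 - cj a * z‖ ^ 2 : ℝ) : ℂ) * z := by
    have : ((‖1 - cj a * z‖ ^ 2 : ℝ) : ℂ) = (1 - cj a * z) * cj (1 - cj a * z) := by
      rw [Complex.mul_conj, Complex.normSq_eq_norm_sq]
    rw [this]
    unfold ff
    simp only [map_sub, map_one, map_mul, Complex.conj_conj]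
    linear_combination a * (1 - cj a * z) * hzz
  have hp : (‖1 - cj a * z‖ ^ 2 : ℝ) ≠ 0 := by
    have := one_sub_norm ha hz.le
    positivity
  unfold ww
  rw [h1, norm_mul, hz, Complex.norm_real, Real.norm_of_nonneg (by positivity), mul_one,
    ← mul_assoc, ← Complex.ofReal_mul, inv_mul_cancel₀ hp]
  simp

lemma kk_unit {a z g : ℂ} (ha : ‖a‖ < 1 / 2) (hz : ‖z‖ = 1) (hg : g * cj z + z * cj g = 0) :
    z * (g * kk a z - cj (g * kk a z)) / 2 = g := by
  have hzz := cj_unit hz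
  have hne : z - a ≠ 0 := by
    rw [sub_ne_zero]; rintro rfl; rw [hz] at ha; norm_num at ha
  have h1 := one_sub_ne ha hz.le
  have hg' : cj g = - g * (cj z) ^ 2 := by
    linear_combination (cj z) * hg - cj g * hzz
  have h2 : cj (1 - cj a * z) = cj z * (z - a) := by
    simp only [map_sub, map_one, map_mul, Complex.conj_conj]
    linear_combination -hzz
  have h3 : cj (z - a) = cj z * (1 - cj a * z) := by
    simp only [map_sub]
    linear_combination cj a * hzz
  have hz0 : cj z ≠ 0 := by
    intro h; rw [h] at hzz; simp at hzz
  have hk : cj (kk a z) = z * (1 - cj a * z)⁻¹ - a * z * (z - a)⁻¹ := by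
    unfold kk
    rw [map_sub, map_mul, map_inv₀, map_inv₀, h2, h3, Complex.conj_conj, mul_inv, mul_inv]
    have : (cj z)⁻¹ = z := inv_eq_of_mul_eq_one_left hzz
    rw [this]
    ring
  rw [map_mul, hg', hk]
  unfold kk
  have h5 := mul_inv_cancel₀ hne
  have h6 := mul_inv_cancel₀ h1
  have hz2 : z ^ 2 * (cj z) ^ 2 = 1 := by linear_combination (z * cj z + 1) * hzz
  linear_combination (g / 2) * h5 + (g / 2) * h6 +
    (g / 2) * ((1 - cj a * z)⁻¹ - a * (z - a)⁻¹) * hz2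

lemma kk_bound {a U : ℂ} (ha : ‖a‖ < 1 / 2) (hU : ‖U‖ ≤ 1) : ‖kk a U‖ ≤ ‖U - a‖⁻¹ + 1 := by
  have h := one_sub_norm ha hU
  unfold kk
  refine (norm_sub_le _ _).trans ?_
  rw [norm_inv, norm_mul, norm_inv, Complex.norm_conj]
  gcongr
  rw [← div_eq_mul_inv, div_le_one (by linarith)]
  linarith

lemma kk_good {a U : ℂ} (ha : ‖a‖ < 1 / 2) (hU : ‖U‖ ≤ 1) (hg : 3 / 4 ≤ ‖U‖) : ‖kk a U‖ ≤ 5 := by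
  refine (kk_bound ha hU).trans ?_
  have h1 := norm_sub_norm_le U a
  have h2 : ‖U - a‖⁻¹ ≤ (1 / 4 : ℝ)⁻¹ := inv_anti₀ (by norm_num) (by linarith)
  norm_num at h2 ⊢
  linarith

lemma ww_kk_lim {a z : ℂ} (ha : ‖a‖ < 1 / 2) (hz : ‖z‖ = 1) {V : ℕ → ℂ}
    (hV : Tendsto V atTop (𝓝 z)) :
    Tendsto (fun n => ww a (V n)) atTop (𝓝 (ww a z)) ∧
    Tendsto (fun n => kk a (V n)) atTop (𝓝 (kk a z)) := by
  have hne : z - a ≠ 0 := by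
    rw [sub_ne_zero]; rintro rfl; rw [hz] at ha; norm_num at ha
  have h1 := one_sub_ne ha hz.le
  have e1 : Tendsto (fun n => V n - a) atTop (𝓝 (z - a)) := hV.sub_const a
  have e2 : Tendsto (fun n => 1 - cj a * V n) atTop (𝓝 (1 - cj a * z)) :=
    tendsto_const_nhds.sub (hV.const_mul _)
  have e3 : Tendsto (fun n => ff a (V n)) atTop (𝓝 (ff a z)) := e1.mul e2
  refine ⟨?_, (e1.inv₀ hne).sub ((e2.inv₀ h1).const_mul _)⟩
  have e4 := e3.norm.inv₀ (norm_ne_zero_iff.2 (mul_ne_zero hne h1))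
  exact ((Complex.continuous_ofReal.tendsto _).comp e4).mul e3

lemma finite_pre {f : R2 → R2} (hf : ContDiff ℝ 1 f) {Ω : Set R2} (hΩb : Bornology.IsBounded Ω)
    {a : R2} (ha : ∀ x, f x = a → (fderiv ℝ f x).det ≠ 0) : {x ∈ Ω | f x = a}.Finite := by
  by_contra hinf
  have hc : IsCompact (closure Ω ∩ f ⁻¹' {a}) :=
    (hΩb.isCompact_closure).inter_right (isClosed_singleton.preimage hf.continuous)
  obtain ⟨x, hx, hacc⟩ := Set.Infinite.exists_accPt_of_subset_isCompact hinf hc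
    (fun x hx => ⟨subset_closure hx.1, hx.2⟩)
  have hd := ha x hx.2
  have hder := (hf.differentiable (by simp) x).hasFDerivAt
  have hev := hder.eventually_ne (c := a) (by
    obtain ⟨K, hK, hK'⟩ := (fderiv ℝ f x).toLinearMap.exists_antilipschitzWith (by
      rw [LinearMap.ker_eq_bot']
      intro v hv
      by_contra hv0
      apply hd
      have := LinearMap.det_eq_zero_iff_ker_ne_bot (f := (fderiv ℝ f x).toLinearMap)
      refine this.2 fun hb => hv0 ?_
      exact LinearMap.ker_eq_bot'.1 hb v hv)
    exact ⟨K, hK'⟩)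
  have hfr := accPt_iff_frequently_nhdsNE.1 hacc
  exact (hfr.and_eventually hev).exists.elim fun y hy => hy.2 hy.1.2

lemma sard {f : R2 → R2} (hf : ContDiff ℝ 1 f) :
    ∀ᵐ a : R2, ∀ x, f x = a → (fderiv ℝ f x).det ≠ 0 := by
  have h := addHaar_image_eq_zero_of_det_fderivWithin_eq_zero (volume : Measure R2)
    (s := {x | (fderiv ℝ f x).det = 0}) (f := f) (f' := fderiv ℝ f)
    (fun x _ => (hf.differentiable (by simp) x).hasFDerivAt.hasFDerivWithinAt) (fun x hx => hx)
  rw [ae_iff]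
  refine measure_mono_null ?_ h
  intro a ha
  simp only [mem_ofPred_eq, not_forall, not_not] at ha
  obtain ⟨x, hx, hd⟩ := ha
  exact ⟨x, hd, hx⟩


/-! ## Averaging over the projection centre -/

lemma potential : ∃ K : ℝ≥0∞, K ≠ ⊤ ∧ ∀ y : R2, ‖y‖ ≤ 1 →
    ∫⁻ a in ball (0 : R2) (1 / 2), (ENNReal.ofReal (‖y - a‖⁻¹) + 1) ≤ K := by
  set h : R2 → ℝ≥0∞ := (ball (0 : R2) 2).indicator fun x => ENNReal.ofReal (‖x‖⁻¹) + 1 with hh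
  refine ⟨∫⁻ x, h x, ?_, ?_⟩
  · rw [hh, lintegral_indicator measurableSet_ball, lintegral_add_right _ measurable_const]
    have hinteg : IntegrableOn (fun x : R2 => ‖x‖⁻¹) (ball 0 2) volume := by
      refine integrableOn_ball_of_norm_le_rpow (C := 1) (α := 1) ?_ ?_ ?_ ?_
      · simp
      · simp
      · refine Eventually.of_forall fun x => ?_
        rw [Real.rpow_neg_one]
        simp
      · exact (measurable_norm.inv).aestronglyMeasurable
    refine ENNReal.add_ne_top.2 ⟨?_, ?_⟩
    · exact hinteg.lintegral_lt_top.ne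
    · rw [setLIntegral_one]
      exact measure_ball_lt_top.ne
  · intro y hy
    rw [← lintegral_sub_left_eq_self (μ := volume) h y, ← lintegral_indicator measurableSet_ball]
    refine lintegral_mono fun a => ?_
    by_cases ha : a ∈ ball (0 : R2) (1 / 2)
    · rw [indicator_of_mem ha]
      have : y - a ∈ ball (0 : R2) 2 := by
        rw [mem_ball_zero_iff] at *
        have := norm_sub_le y a
        linarith
      rw [hh, indicator_of_mem this]
    · rw [indicator_of_notMem ha]
      exact bot_le

lemma select {μ : Measure R2} [SFinite μ] {U : ℕ → R2 → R2} (hU : ∀ n, Continuous (U n))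
    (hU1 : ∀ n x, ‖U n x‖ ≤ 1) {d : ℕ → R2 → ℝ≥0∞} (hd : ∀ n, Measurable (d n))
    (hd0 : Tendsto (fun n => ∫⁻ x, d n x ∂μ) atTop (𝓝 0)) :
    ∀ᵐ a ∂(volume.restrict (ball (0 : R2) (1 / 2))),
      liminf (fun n => ∫⁻ x, d n x * (ENNReal.ofReal (‖U n x - a‖⁻¹) + 1) ∂μ) atTop = 0 := by
  obtain ⟨K, hK, hpot⟩ := potential
  have hm : ∀ n, Measurable fun p : R2 × R2 =>
      d n p.2 * (ENNReal.ofReal (‖U n p.2 - p.1‖⁻¹) + 1) := by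
    intro n
    refine ((hd n).comp measurable_snd).mul ?_
    refine Measurable.add_const ?_ _
    refine ENNReal.measurable_ofReal.comp ?_
    exact ((((hU n).measurable.comp measurable_snd).sub measurable_fst).norm).inv
  have hm2 : ∀ n, Measurable fun a : R2 =>
      ∫⁻ x, d n x * (ENNReal.ofReal (‖U n x - a‖⁻¹) + 1) ∂μ := fun n => (hm n).lintegral_prod_right'
  have hle : ∀ n, ∫⁻ a in ball (0 : R2) (1 / 2),
      (∫⁻ x, d n x * (ENNReal.ofReal (‖U n x - a‖⁻¹) + 1) ∂μ) ≤ (∫⁻ x, d n x ∂μ) * K := by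
    intro n
    rw [lintegral_lintegral_swap (hm n).aemeasurable, ← lintegral_mul_const _ (hd n)]
    refine lintegral_mono fun x => ?_
    dsimp only
    rw [lintegral_const_mul]
    · gcongr
      exact hpot _ (hU1 n x)
    · refine Measurable.add_const ?_ _
      refine ENNReal.measurable_ofReal.comp ?_
      exact ((measurable_const.sub measurable_id).norm).inv
  have h0 : ∫⁻ a in ball (0 : R2) (1 / 2),
      liminf (fun n => ∫⁻ x, d n x * (ENNReal.ofReal (‖U n x - a‖⁻¹) + 1) ∂μ) atTop = 0 := by
    refine le_antisymm ((lintegral_liminf_le hm2).trans ?_) bot_le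
    have ht : Tendsto (fun n => (∫⁻ x, d n x ∂μ) * K) atTop (𝓝 0) := by
      have := ENNReal.Tendsto.mul_const hd0 (Or.inr hK)
      simpa using this
    rw [← ht.liminf_eq]
    exact liminf_le_liminf (Eventually.of_forall hle)
  rw [lintegral_eq_zero_iff (Measurable.liminf hm2)] at h0
  exact h0


/-! ## Smooth circle-valued maps with finitely many singularities -/

lemma ff_meas (a : ℂ) : Measurable (ff a) := by
  unfold ff; fun_prop

lemma ww_meas (a : ℂ) : Measurable (ww a) := by
  unfold ww
  exact (Complex.measurable_ofReal.comp (ff_meas a).norm.inv).mul (ff_meas a)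

lemma kk_meas (a : ℂ) : Measurable (kk a) := by
  unfold kk; fun_prop

/-- Indicator of the good set. -/
def chi (U : ℂ) : ℂ := if 3 / 4 ≤ ‖U‖ then 1 else 0

lemma chi_meas : Measurable chi :=
  Measurable.ite (measurableSet_le measurable_const measurable_norm) measurable_const measurable_const

lemma chi_lim {z : ℂ} (hz : ‖z‖ = 1) {V : ℕ → ℂ} (hV : Tendsto V atTop (𝓝 z)) :
    ∀ᶠ n in atTop, chi (V n) = 1 := by
  have := hV.norm.eventually (lt_mem_nhds (a := 3 / 4) (by rw [hz]; norm_num))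
  filter_upwards [this] with n hn
  simp [chi, hn.le]

lemma M_bound {a U : ℂ} (ha : ‖a‖ < 1 / 2) (hU : ‖U‖ ≤ 1) (k : ℂ) (hk : ‖k‖ = ‖kk a U‖) :
    ‖chi U * (ww a U * k / 2)‖ ≤ 5 := by
  unfold chi
  split_ifs with h
  · have h1 := kk_good ha hU h
    have h2 := ww_norm_le a U
    rw [one_mul, norm_div, norm_mul, hk]
    have : ‖(2 : ℂ)‖ = 2 := by simp
    rw [this]
    have := mul_le_mul h2 h1 (norm_nonneg _) zero_le_one
    linarith
  · simp

lemma good_part {X : Type*} [MeasurableSpace X] {μ : Measure X} {U f : ℕ → X → ℂ} {z g : X → ℂ}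
    {a : ℂ} (ha : ‖a‖ < 1 / 2) (hU : ∀ n, Measurable (U n)) (hU1 : ∀ n x, ‖U n x‖ ≤ 1)
    (hz : ∀ᵐ x ∂μ, ‖z x‖ = 1) (hlim : ∀ᵐ x ∂μ, Tendsto (fun n => U n x) atTop (𝓝 (z x)))
    (hf : Tendsto (fun n => ∫⁻ x, ‖f n x - g x‖ₑ ∂μ) atTop (𝓝 0)) (hg : Integrable g μ)
    (hfm : ∀ n, Measurable (f n)) (hzm : AEStronglyMeasurable z μ)
    (ho : ∀ᵐ x ∂μ, g x = - (z x) ^ 2 * cj (g x)) :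
    Tendsto (fun n => ∫⁻ x, ‖chi (U n x) * (ww a (U n x) *
      (f n x * kk a (U n x) - cj (f n x * kk a (U n x))) / 2) - g x‖ₑ ∂μ) atTop (𝓝 0) := by
  have cjm : Measurable (cj : ℂ → ℂ) := Complex.continuous_conj.measurable
  have hzm' := hzm.aemeasurable
  have m1 : ∀ n, Measurable fun x => chi (U n x) * (ww a (U n x) * kk a (U n x) / 2) := fun n =>
    (chi_meas.comp (hU n)).mul ((((ww_meas a).comp (hU n)).mul ((kk_meas a).comp (hU n))).div_const _)
  have m2 : ∀ n, Measurable fun x => chi (U n x) * (ww a (U n x) * (-cj (kk a (U n x))) / 2) := fun n =>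
    (chi_meas.comp (hU n)).mul ((((ww_meas a).comp (hU n)).mul
      ((cjm.comp ((kk_meas a).comp (hU n))).neg)).div_const _)
  have t1 := tool_mul (M := fun n x => chi (U n x) * (ww a (U n x) * kk a (U n x) / 2))
    (N := fun x => ww a (z x) * kk a (z x) / 2) (K := 5) hf hg
    (fun n => (hfm n).aestronglyMeasurable)
    (fun n => Eventually.of_forall fun x => M_bound ha (hU1 n x) _ rfl)
    (fun n => (m1 n).aestronglyMeasurable) (by
      filter_upwards [hz, hlim] with x hx hx2 _
      obtain ⟨l1, l2⟩ := ww_kk_lim ha hx hx2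
      refine Tendsto.congr' ?_ ((l1.mul l2).div_const 2)
      filter_upwards [chi_lim hx hx2] with n hn
      rw [hn, one_mul])
  have t2 := tool_mul (M := fun n x => chi (U n x) * (ww a (U n x) * (-cj (kk a (U n x))) / 2))
    (N := fun x => ww a (z x) * (-cj (kk a (z x))) / 2) (K := 5) (tool_conj hf)
    (Complex.conjLIE.toContinuousLinearEquiv.toContinuousLinearMap.integrable_comp hg)
    (fun n => (cjm.comp (hfm n)).aestronglyMeasurable)
    (fun n => Eventually.of_forall fun x => M_bound ha (hU1 n x) _ (by rw [norm_neg, RCLike.norm_conj]))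
    (fun n => (m2 n).aestronglyMeasurable) (by
      filter_upwards [hz, hlim] with x hx hx2 _
      obtain ⟨l1, l2⟩ := ww_kk_lim ha hx hx2
      refine Tendsto.congr' ?_
        ((l1.mul ((Complex.continuous_conj.tendsto _).comp l2).neg).div_const 2)
      filter_upwards [chi_lim hx hx2] with n hn
      rw [hn, one_mul]; rfl)
  have t3 := tool_add t1 t2 (by
    intro n
    refine AEMeasurable.aestronglyMeasurable ?_
    refine ((m1 n).mul (hfm n)).aemeasurable.sub (AEMeasurable.mul ?_ hg.aemeasurable)
    exact ((((ww_meas a).comp_aemeasurable hzm').mul ((kk_meas a).comp_aemeasurable hzm')).div_const _))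
  refine t3.congr fun n => lintegral_congr_ae ?_
  filter_upwards [hz, ho] with x hx hox
  have e := kk_unit ha hx (orth_of hx hox)
  congr 1
  rw [map_mul] at e ⊢
  rw [ww_unit ha hx]
  linear_combination (-1 : ℂ) * e


lemma approx_w {Ω : Set R2} (hΩo : IsOpen Ω) (hΩb : Bornology.IsBounded Ω)
    (hΩl : HasLipschitzBoundary Ω) {u : R2 → R2} {G : R2 → Matrix (Fin 2) (Fin 2) ℝ}
    (hu : MemW11 Ω u G) (hS : SphereValued Ω u) {η : ℝ≥0∞} (hη : η ≠ 0) :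
    ∃ C : Set R2, ∃ w : R2 → ℂ, C ⊆ Ω ∧ C.Finite ∧ ContDiffOn ℝ 1 w (Ω \ C) ∧
      (∀ x ∈ Ω \ C, ‖w x‖ = 1) ∧
      (∀ j, ∫⁻ x in Ω \ C, ‖pd j w x - Gc G j x‖ₑ ≤ η) ∧
      ∀ j, ∫⁻ x in Ω \ C, ‖toC (u x) - w x‖ₑ * ‖Gc G j x‖ₑ ≤ η := by
  obtain ⟨U, hU, hU1, hae, hL, ho⟩ := approx1 hΩo hΩb hΩl hu hS
  have hS' : ∀ᵐ x ∂(volume.restrict Ω), ‖toC (u x)‖ = 1 := by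
    filter_upwards [hS] with x hx
    rw [LinearIsometryEquiv.norm_map, hx]
  have hUm : ∀ n, Measurable (U n) := fun n => (hU n).continuous.measurable
  have hpm : ∀ n j, Measurable (pd j (U n)) := fun n j => (pd_continuous (hU n) j).measurable
  have hum : AEStronglyMeasurable (fun x => toC (u x)) (volume.restrict Ω) :=
    (uc_integrable hu).aestronglyMeasurable
  -- bad part
  set d : ℕ → R2 → ℝ≥0∞ := fun n x => ‖(1 - chi (U n x)) * pd 0 (U n) x‖ₑ
    + ‖(1 - chi (U n x)) * pd 1 (U n) x‖ₑ with hd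
  have hdm1 : ∀ n j, Measurable fun x => ‖(1 - chi (U n x)) * pd j (U n) x‖ₑ := fun n j =>
    ((measurable_const.sub (chi_meas.comp (hUm n))).mul (hpm n j)).enorm
  have hdj : ∀ j, Tendsto (fun n => ∫⁻ x in Ω, ‖(1 - chi (U n x)) * pd j (U n) x‖ₑ) atTop (𝓝 0) := by
    intro j
    have := tool_mul (M := fun n x => 1 - chi (U n x)) (N := fun _ => 0) (K := 1) (hL j)
      (Gc_integrable hu j) (fun n => (hpm n j).aestronglyMeasurable)
      (fun n => Eventually.of_forall fun x => by unfold chi; split_ifs <;> simp)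
      (fun n => (measurable_const.sub (chi_meas.comp (hUm n))).aestronglyMeasurable) (by
        filter_upwards [hS', hae] with x hx hx2 _
        refine Tendsto.congr' ?_ tendsto_const_nhds
        filter_upwards [chi_lim hx hx2] with n hn
        rw [hn, sub_self])
    simpa using this
  have hd0 : Tendsto (fun n => ∫⁻ x in Ω, d n x) atTop (𝓝 0) := by
    have := (hdj 0).add (hdj 1)
    rw [add_zero] at this
    refine this.congr fun n => ?_
    rw [← lintegral_add_left (hdm1 n 0)]
  have hsel := select (μ := volume.restrict Ω) (U := fun n x => toC.symm (U n x))
    (fun n => toC.symm.continuous.comp (hU n).continuous)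
    (fun n x => by rw [LinearIsometryEquiv.norm_map]; exact hU1 n x)
    (fun n => (hdm1 n 0).add (hdm1 n 1)) hd0
  have hsard : ∀ᵐ a ∂(volume.restrict (ball (0 : R2) (1 / 2))), ∀ n x, toC.symm (U n x) = a →
      (fderiv ℝ (fun x => toC.symm (U n x)) x).det ≠ 0 := by
    refine ae_restrict_of_ae (ae_all_iff.2 fun n => sard ?_)
    exact toC.symm.contDiff.comp (hU n)
  have hne : (ae (volume.restrict (ball (0 : R2) (1 / 2)))).NeBot := by
    rw [ae_neBot, Ne, Measure.restrict_eq_zero]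
    exact (measure_ball_pos volume _ (by norm_num)).ne'
  obtain ⟨a, ⟨ha1, ha2⟩, ha3⟩ :=
    ((hsel.and hsard).and (ae_restrict_mem measurableSet_ball)).exists
  rw [mem_ball_zero_iff] at ha3
  have ha : ‖toC a‖ < 1 / 2 := by rwa [LinearIsometryEquiv.norm_map]
  -- good part
  have hgood := fun j => good_part (μ := volume.restrict Ω) ha hUm hU1 hS' hae (hL j)
    (Gc_integrable hu j) (fun n => hpm n j) hum (ho j)
  have hwl : ∀ j, Tendsto (fun n => ∫⁻ x in Ω, ‖toC (u x) - ww (toC a) (U n x)‖ₑ * ‖Gc G j x‖ₑ)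
      atTop (𝓝 0) := by
    intro j
    have := tool_mul (μ := volume.restrict Ω) (f := fun _ => Gc G j) (g := Gc G j)
      (M := fun n x => toC (u x) - ww (toC a) (U n x)) (N := fun _ => 0) (K := 2) (by simp)
      (Gc_integrable hu j) (fun n => (Gc_integrable hu j).aestronglyMeasurable)
      (fun n => by
        filter_upwards [hS'] with x hx
        refine (norm_sub_le _ _).trans ?_
        have := ww_norm_le (toC a) (U n x)
        linarith)
      (fun n => hum.sub ((ww_meas _).comp (hUm n)).aestronglyMeasurable) (by
        filter_upwards [hS', hae] with x hx hx2 _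
        have l1 := (ww_kk_lim ha hx hx2).1
        rw [ww_unit ha hx] at l1
        simpa using (tendsto_const_nhds (x := toC (u x))).sub l1)
    simpa [enorm_mul] using this
  have hη2 : η / 2 ≠ 0 := by simp [hη]
  have hfreq : ∃ᶠ n in atTop, ∫⁻ x in Ω, d n x *
      (ENNReal.ofReal (‖toC.symm (U n x) - a‖⁻¹) + 1) < η / 2 := by
    refine frequently_lt_of_liminf_lt ?_ ?_
    · isBoundedDefault
    · refine lt_of_eq_of_lt ha1 ?_
      exact pos_iff_ne_zero.2 hη2
  have hev : ∀ᶠ n in atTop, (∀ j, ∫⁻ x in Ω, ‖chi (U n x) * (ww (toC a) (U n x) *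
      (pd j (U n) x * kk (toC a) (U n x) - cj (pd j (U n) x * kk (toC a) (U n x))) / 2)
        - Gc G j x‖ₑ < η / 2) ∧
      ∀ j, ∫⁻ x in Ω, ‖toC (u x) - ww (toC a) (U n x)‖ₑ * ‖Gc G j x‖ₑ < η := by
    refine (eventually_all.2 fun j => ?_).and (eventually_all.2 fun j => ?_)
    · exact (hgood j).eventually (gt_mem_nhds (pos_iff_ne_zero.2 hη2))
    · exact (hwl j).eventually (gt_mem_nhds (pos_iff_ne_zero.2 hη))
  obtain ⟨n, hn1, hn2, hn3⟩ := (hfreq.and_eventually hev).exists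
  set C : Set R2 := {x ∈ Ω | toC.symm (U n x) = a} with hC
  have hCf : C.Finite := finite_pre (toC.symm.contDiff.comp (hU n)) hΩb (ha2 n)
  have hff : ∀ x ∈ Ω \ C, ff (toC a) (U n x) ≠ 0 := by
    intro x hx
    refine ff_ne ha (hU1 n x) fun h => hx.2 ⟨hx.1, ?_⟩
    rw [h, LinearIsometryEquiv.symm_apply_apply]
  have hSm : MeasurableSet (Ω \ C) := hΩo.measurableSet.diff hCf.measurableSet
  refine ⟨C, fun x => ww (toC a) (U n x), fun x hx => hx.1, hCf, ?_, ?_, ?_, ?_⟩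
  · exact fun x hx => (ww_cda (hU n).contDiffAt (hff x hx)).contDiffWithinAt
  · exact fun x hx => ww_norm (hff x hx)
  · intro j
    have hdle : ∀ x, ‖(1 - chi (U n x)) * pd j (U n) x‖ₑ ≤ d n x := by
      intro x
      fin_cases j
      · exact le_self_add
      · exact le_add_self
    calc ∫⁻ x in Ω \ C, ‖pd j (fun x => ww (toC a) (U n x)) x - Gc G j x‖ₑ
        ≤ ∫⁻ x in Ω \ C, (‖chi (U n x) * (ww (toC a) (U n x) *
      (pd j (U n) x * kk (toC a) (U n x) - cj (pd j (U n) x * kk (toC a) (U n x))) / 2)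
        - Gc G j x‖ₑ + d n x * (ENNReal.ofReal (‖toC.symm (U n x) - a‖⁻¹) + 1)) := by
          refine setLIntegral_mono' hSm fun x hx => ?_
          rw [pd_ww j (hU n) (hff x hx)]
          set X := ww (toC a) (U n x) *
      (pd j (U n) x * kk (toC a) (U n x) - cj (pd j (U n) x * kk (toC a) (U n x))) / 2 with hX
          have e : X - Gc G j x = (chi (U n x) * X - Gc G j x) + (1 - chi (U n x)) * X := by ring
          rw [e]
          refine (enorm_add_le _ _).trans (add_le_add le_rfl ?_)
          refine le_trans ?_ (mul_le_mul_left (hdle x) _)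
          have hXn : ‖X‖ ≤ ‖pd j (U n) x‖ * (‖toC.symm (U n x) - a‖⁻¹ + 1) := by
            have hk := kk_bound ha (hU1 n x)
            have hnn : ‖U n x - toC a‖ = ‖toC.symm (U n x) - a‖ := by
              rw [← LinearIsometryEquiv.norm_map toC (toC.symm (U n x) - a), map_sub,
                LinearIsometryEquiv.apply_symm_apply]
            rw [hnn] at hk
            have h1 : ‖pd j (U n) x * kk (toC a) (U n x) - cj (pd j (U n) x * kk (toC a) (U n x))‖
                ≤ 2 * (‖pd j (U n) x‖ * ‖kk (toC a) (U n x)‖) := by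
              refine (norm_sub_le _ _).trans ?_
              rw [RCLike.norm_conj, norm_mul]
              linarith
            have h2 := mul_le_mul (ww_norm_le (toC a) (U n x)) h1 (norm_nonneg _) zero_le_one
            have h3 := mul_le_mul_of_nonneg_left hk (norm_nonneg (pd j (U n) x))
            rw [hX, norm_div, norm_mul]
            have : ‖(2 : ℂ)‖ = 2 := by simp
            rw [this]
            linarith
          rw [enorm_mul, enorm_mul, mul_assoc]
          refine mul_le_mul_right ?_ _
          rw [← ofReal_norm, ← ofReal_norm, ← ENNReal.ofReal_one,
            ← ENNReal.ofReal_add (by positivity) zero_le_one,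
            ← ENNReal.ofReal_mul (norm_nonneg _)]
          exact ENNReal.ofReal_le_ofReal hXn
      _ ≤ ∫⁻ x in Ω, (‖chi (U n x) * (ww (toC a) (U n x) *
      (pd j (U n) x * kk (toC a) (U n x) - cj (pd j (U n) x * kk (toC a) (U n x))) / 2)
        - Gc G j x‖ₑ + d n x * (ENNReal.ofReal (‖toC.symm (U n x) - a‖⁻¹) + 1)) :=
          lintegral_mono_set sdiff_subset
      _ ≤ η / 2 + η / 2 := by
          rw [lintegral_add_right]
          · exact add_le_add (hn2 j).le hn1.le
          · refine ((hdm1 n 0).add (hdm1 n 1)).mul (Measurable.add_const ?_ _)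
            refine ENNReal.measurable_ofReal.comp ?_
            exact (((toC.symm.continuous.measurable.comp (hUm n)).sub measurable_const).norm).inv
      _ = η := ENNReal.add_halves η
  · intro j
    exact (lintegral_mono_set sdiff_subset).trans (hn3 j).le


/-! ## Conclusion -/

lemma relaxed_small {Ω S : Set R2} (hΩo : IsOpen Ω) (hΩb : Bornology.IsBounded Ω)
    (hΩl : HasLipschitzBoundary Ω) {u : R2 → R2} {G : R2 → Matrix (Fin 2) (Fin 2) ℝ}
    (hu : MemW11 Ω u G) (hS : SphereValued Ω u) (hSo : IsOpen S) (hSΩ : S ⊆ Ω) :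
    relaxedArea u S ≤ ∫⁻ x in S, (1 + 2 * (‖Gc G 0 x‖ₑ + ‖Gc G 1 x‖ₑ)) := by
  have h := upper_C hΩo hΩb hΩl hu hS hSo hSΩ (w := fun _ => 1) contDiffOn_const (by simp)
    (by
      intro j
      have : pd j (fun _ : R2 => (1 : ℂ)) = fun _ => 0 := funext fun x => pd_constC j 1 x
      rw [this]
      exact integrableOn_zero)
  simp only [pd_constC] at h
  have e : ar 0 0 = 1 := by simp [ar]
  rw [lintegral_add_left measurable_const, lintegral_const_mul' _ _ (by simp)]
  simpa [e] using h

lemma env_le {Ω : Set R2} (hΩo : IsOpen Ω) (hΩb : Bornology.IsBounded Ω)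
    (hΩl : HasLipschitzBoundary Ω) {u : R2 → R2} {G : R2 → Matrix (Fin 2) (Fin 2) ℝ}
    (hu : MemW11 Ω u G) (hS : SphereValued Ω u) {C : Set R2} (hCΩ : C ⊆ Ω) (hC : C.Finite) :
    envA u Ω Ω ≤ relaxedArea u (Ω \ C) := by
  refine le_of_forall_pos_le_add fun ε hε => ?_
  set ν : Measure R2 := (volume.restrict Ω).withDensity
    fun x => 1 + 2 * (‖Gc G 0 x‖ₑ + ‖Gc G 1 x‖ₑ) with hν
  have hfin : IsFiniteMeasure ν := by
    refine isFiniteMeasure_withDensity ?_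
    rw [lintegral_add_left measurable_const, lintegral_const_mul' _ _ (by simp),
      lintegral_add_left' (Gc_integrable hu 0).aestronglyMeasurable.enorm]
    refine ENNReal.add_ne_top.2 ⟨?_, ENNReal.mul_ne_top (by simp) (ENNReal.add_ne_top.2 ⟨?_, ?_⟩)⟩
    · simpa using hΩb.measure_lt_top.ne
    · exact (Gc_integrable hu 0).2.ne
    · exact (Gc_integrable hu 1).2.ne
  have hν0 : ν C = 0 := by
    refine withDensity_absolutelyContinuous _ _ ?_
    exact Measure.absolutelyContinuous_of_le Measure.restrict_le_self (hC.measure_zero volume)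
  obtain ⟨A, hCA, hAo, hA⟩ := C.exists_isOpen_lt_of_lt (μ := ν) ε (by rwa [hν0])
  have hA2 : relaxedArea u (A ∩ Ω) ≤ ε := by
    refine (relaxed_small hΩo hΩb hΩl hu hS (hAo.inter hΩo) inter_subset_right).trans ?_
    rw [hν, withDensity_apply _ hAo.measurableSet, Measure.restrict_restrict hAo.measurableSet] at hA
    exact hA.le
  have hemp : relaxedArea u ∅ = 0 := by
    refine le_antisymm ?_ bot_le
    have := relaxed_small hΩo hΩb hΩl hu hS isOpen_empty (empty_subset Ω)
    simpa using this
  have ho : IsOpen (Ω \ C) := hΩo.sdiff hC.isClosed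
  refine le_trans (b := ∑' k : ℕ, relaxedArea u
    (if k = 0 then Ω \ C else if k = 1 then A ∩ Ω else ∅)) (sInf_le
      ⟨fun k => if k = 0 then Ω \ C else if k = 1 then A ∩ Ω else ∅, ?_, ?_, rfl⟩) ?_
  · intro k
    dsimp only
    split_ifs
    · exact ⟨ho, sdiff_subset⟩
    · exact ⟨hAo.inter hΩo, inter_subset_right⟩
    · exact ⟨isOpen_empty, empty_subset _⟩
  · intro x hx
    rw [mem_iUnion]
    by_cases hxC : x ∈ C
    · exact ⟨1, by simpa using ⟨hCA hxC, hx⟩⟩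
    · exact ⟨0, by simpa using ⟨hx, hxC⟩⟩
  · rw [tsum_eq_sum (s := Finset.range 2)]
    · simp only [Finset.sum_range_succ, Finset.sum_range_zero]
      simpa using hA2.trans (le_refl _) |> fun h => add_le_add (le_refl (relaxedArea u (Ω \ C))) h
    · intro k hk
      have : k ≠ 0 ∧ k ≠ 1 := by
        simp at hk; omega
      simp [this.1, this.2, hemp]

lemma g_bound {p g w z : ℂ} (hw : ‖w‖ = 1) (hz : ‖z‖ = 1) (ho : p * cj w + w * cj p = 0) :
    ‖g * cj w + z * cj p‖ₑ ≤ 3 * ‖p - g‖ₑ + ‖z - w‖ₑ * ‖g‖ₑ := by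
  have e : g * cj w + z * cj p = (g - p) * cj w + (z - w) * cj (p - g) + (z - w) * cj g := by
    rw [map_sub]; linear_combination ho
  have hr : ‖g * cj w + z * cj p‖ ≤ 3 * ‖p - g‖ + ‖z - w‖ * ‖g‖ := by
    rw [e]
    refine (norm_add₃_le).trans ?_
    simp only [norm_mul, RCLike.norm_conj, hw, mul_one]
    have h1 : ‖z - w‖ ≤ 2 := (norm_sub_le _ _).trans (by rw [hw, hz]; norm_num)
    have h2 := mul_le_mul_of_nonneg_right h1 (norm_nonneg (p - g))
    rw [norm_sub_rev g p]
    linarith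
  have := ENNReal.ofReal_le_ofReal hr
  rw [ENNReal.ofReal_add (by positivity) (by positivity), ENNReal.ofReal_mul (by norm_num),
    ENNReal.ofReal_mul (norm_nonneg _)] at this
  simpa [ofReal_norm] using this

lemma ar_bound (p q p' q' : ℂ) : ENNReal.ofReal (ar p q) ≤
    ENNReal.ofReal (ar p' q') + (‖p - p'‖ₑ + ‖q - q'‖ₑ) := by
  have h : ar p q ≤ ar p' q' + (‖p - p'‖ + ‖q - q'‖) := by
    refine ar_le (norm_nonneg _) (norm_nonneg _) ?_ ?_
    · have := norm_add_le p' (p - p'); rwa [add_sub_cancel] at this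
    · have := norm_add_le q' (q - q'); rwa [add_sub_cancel] at this
  have h2 := ENNReal.ofReal_le_ofReal h
  rw [ENNReal.ofReal_add (show 0 ≤ ar p' q' from Real.sqrt_nonneg _) (by positivity),
    ENNReal.ofReal_add (norm_nonneg _) (norm_nonneg _)] at h2
  simpa [ofReal_norm] using h2

lemma removal_le {Ω : Set R2} (hΩo : IsOpen Ω) (hΩb : Bornology.IsBounded Ω)
    (hΩl : HasLipschitzBoundary Ω) {u : R2 → R2} {G : R2 → Matrix (Fin 2) (Fin 2) ℝ}
    (hu : MemW11 Ω u G) (hS : SphereValued Ω u) {η : ℝ≥0∞} (hη : η ≠ 0) (hη' : η ≠ ⊤) :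
    ∃ C : Set R2, C ⊆ Ω ∧ C.Finite ∧ relaxedArea u (Ω \ C) ≤
      (∫⁻ x in Ω, ENNReal.ofReal (ar (Gc G 0 x) (Gc G 1 x))) + 18 * η := by
  obtain ⟨C, w, hCΩ, hC, hw, hw1, h1, h2⟩ := approx_w hΩo hΩb hΩl hu hS hη
  refine ⟨C, hCΩ, hC, ?_⟩
  have ho : IsOpen (Ω \ C) := hΩo.sdiff hC.isClosed
  set S := Ω \ C with hSdef
  have hSΩ : S ⊆ Ω := sdiff_subset
  have hSm := ho.measurableSet
  have hGi : ∀ j, IntegrableOn (Gc G j) S := fun j => (Gc_integrable hu j).mono_set hSΩ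
  have hpm : ∀ j, AEStronglyMeasurable (pd j w) (volume.restrict S) := fun j =>
    (pd_contOn ho hw j).aestronglyMeasurable hSm
  have hwm : AEStronglyMeasurable w (volume.restrict S) := hw.continuousOn.aestronglyMeasurable hSm
  have hum : AEStronglyMeasurable (fun x => toC (u x)) (volume.restrict S) :=
    ((uc_integrable hu).mono_set hSΩ).aestronglyMeasurable
  have hwi : ∀ j, IntegrableOn (pd j w) S := by
    intro j
    have : Integrable (fun x => pd j w x - Gc G j x) (volume.restrict S) :=
      ⟨(hpm j).sub (hGi j).aestronglyMeasurable, lt_of_le_of_lt (h1 j) (lt_top_iff_ne_top.2 hη')⟩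
    have := this.add (hGi j)
    refine this.congr (Eventually.of_forall fun x => ?_)
    simp
  have hmd : ∀ j, AEMeasurable (fun x => ‖pd j w x - Gc G j x‖ₑ) (volume.restrict S) := fun j =>
    ((hpm j).sub (hGi j).aestronglyMeasurable).enorm
  have hmu : ∀ j, AEMeasurable (fun x => ‖toC (u x) - w x‖ₑ * ‖Gc G j x‖ₑ) (volume.restrict S) :=
    fun j => (hum.sub hwm).enorm.mul (hGi j).aestronglyMeasurable.enorm
  have hA : ∫⁻ x in S, ENNReal.ofReal (ar (pd 0 w x) (pd 1 w x)) ≤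
      (∫⁻ x in Ω, ENNReal.ofReal (ar (Gc G 0 x) (Gc G 1 x))) + (η + η) := by
    refine (lintegral_mono fun x => ar_bound _ _ (Gc G 0 x) (Gc G 1 x)).trans ?_
    rw [lintegral_add_right' _ (show AEMeasurable (fun x => ‖pd 0 w x - Gc G 0 x‖ₑ +
      ‖pd 1 w x - Gc G 1 x‖ₑ) (volume.restrict S) from (hmd 0).add (hmd 1)),
      lintegral_add_left' (hmd 0)]
    exact add_le_add (lintegral_mono_set hSΩ) (add_le_add (h1 0) (h1 1))
  have hj : ∀ j, ∫⁻ x in S, (3 * ‖pd j w x - Gc G j x‖ₑ + ‖toC (u x) - w x‖ₑ * ‖Gc G j x‖ₑ) ≤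
      3 * η + η := by
    intro j
    rw [lintegral_add_right' _ (hmu j), lintegral_const_mul' _ _ (by simp)]
    gcongr
    · exact h1 j
    · exact h2 j
  have hB : ∫⁻ x in S, (‖Gc G 0 x * cj (w x) + toC (u x) * cj (pd 0 w x)‖ₑ +
        ‖Gc G 1 x * cj (w x) + toC (u x) * cj (pd 1 w x)‖ₑ) ≤ (3 * η + η) + (3 * η + η) := by
    refine le_trans ?_ (add_le_add (hj 0) (hj 1))
    rw [← lintegral_add_left' (show AEMeasurable (fun x => 3 * ‖pd 0 w x - Gc G 0 x‖ₑ +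
      ‖toC (u x) - w x‖ₑ * ‖Gc G 0 x‖ₑ) (volume.restrict S) from
        ((hmd 0).const_mul 3).add (hmu 0))]
    refine lintegral_mono_ae ?_
    have hS' : ∀ᵐ x ∂(volume.restrict S), ‖u x‖ = 1 :=
      ae_mono (Measure.restrict_mono hSΩ le_rfl) hS
    filter_upwards [hS', ae_restrict_mem hSm] with x hx hxS
    have hz : ‖toC (u x)‖ = 1 := by rw [LinearIsometryEquiv.norm_map, hx]
    have hca : ContDiffAt ℝ 1 w x := hw.contDiffAt (ho.mem_nhds hxS)
    exact add_le_add (g_bound (hw1 x hxS) hz (unit_orth 0 ho hxS hca hw1))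
      (g_bound (hw1 x hxS) hz (unit_orth 1 ho hxS hca hw1))
  refine (upper_C hΩo hΩb hΩl hu hS ho hSΩ hw hw1 hwi).trans ?_
  refine (add_le_add hA (mul_le_mul_right hB 2)).trans (le_of_eq ?_)
  ring

lemma le_env {Ω : Set R2} (hΩo : IsOpen Ω) (hΩb : Bornology.IsBounded Ω)
    {u : R2 → R2} {G : R2 → Matrix (Fin 2) (Fin 2) ℝ} (hu : MemW11 Ω u G) :
    ∫⁻ x in Ω, ENNReal.ofReal (ar (Gc G 0 x) (Gc G 1 x)) ≤ envA u Ω Ω := by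
  refine le_sInf ?_
  rintro _ ⟨A, hA, hcov, rfl⟩
  refine (lintegral_mono_set hcov).trans ((lintegral_iUnion_le _ _).trans ?_)
  exact ENNReal.tsum_le_tsum fun k => lower_bound (hA k).1 (hA k).2 hΩb hu

/-- **Theorem 1.2 (De Giorgi conjecture, adapted).** For `u ∈ W^{1,1}(Ω;S¹)`,
`𝒜**(u,Ω) = inf{𝒜(u,Ω∖C) : C ⊂ Ω finite}`. -/
theorem envA_eq_inf_finite_removal (Ω : Set R2) (hΩo : IsOpen Ω)
    (hΩb : Bornology.IsBounded Ω) (hΩc : IsConnected Ω) (hΩl : HasLipschitzBoundary Ω)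
    (u : R2 → R2) (G : R2 → Matrix (Fin 2) (Fin 2) ℝ)
    (hu : MemW11 Ω u G) (hS : SphereValued Ω u) :
    envA u Ω Ω =
      sInf { a : ℝ≥0∞ | ∃ C : Set R2, C ⊆ Ω ∧ C.Finite ∧ a = relaxedArea u (Ω \ C) } := by
  apply le_antisymm
  · refine le_sInf ?_
    rintro _ ⟨C, hCΩ, hC, rfl⟩
    exact env_le hΩo hΩb hΩl hu hS hCΩ hC
  · refine ENNReal.le_of_forall_pos_le_add fun ε hε _ => ?_
    have hε' : (ε : ℝ≥0∞) ≠ 0 := by exact_mod_cast hε.ne'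
    have h18 : (ε : ℝ≥0∞) / 18 ≠ 0 := ENNReal.div_ne_zero.2 ⟨hε', by simp⟩
    have h18' : (ε : ℝ≥0∞) / 18 ≠ ⊤ := ENNReal.div_ne_top (by simp) (by simp)
    obtain ⟨C, hCΩ, hC, h⟩ := removal_le hΩo hΩb hΩl hu hS h18 h18'
    refine le_trans (b := relaxedArea u (Ω \ C)) (sInf_le ⟨C, hCΩ, hC, rfl⟩) (h.trans ?_)
    rw [ENNReal.mul_div_cancel (by simp) (by simp)]
    exact add_le_add (le_env hΩo hΩb hu) le_rfl
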